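/- Let F be an algebraically closed field of characteristic zero and let n and m be odd positive integers. Then the Jordan superalgebra M_{n,m}(F)^{(+)} cannot be written as A + B for two proper nontrivial simple subsuperalgebras A and B. -/

import Mathlib

open Matrix

namespace SJ

section SuperDefs

variable {F : Type*} [Field F] {J : Type*} [AddCommGroup J] [Module F J]

/-- A graded subspace: `A = (A ∩ J₀) ⊕ (A ∩ J₁)`. -/
def IsGradedG (ev od : Submodule F J) (A : Submodule F J) : Prop :=
  A = (A ⊓ ev) ⊔ (A ⊓ od)

/-- A subsuperalgebra: a graded subspace closed under the product. -/
def IsSubalgG (mul : J → J → J) (ev od : Submodule F J) (A : Submodule F J) : Prop :=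
  IsGradedG ev od A ∧ ∀ x ∈ A, ∀ y ∈ A, mul x y ∈ A

/-- Nontrivial: `A ∩ J₁ ≠ {0}`. -/
def NontrivG (od : Submodule F J) (A : Submodule F J) : Prop := A ⊓ od ≠ ⊥

/-- Simple: `A∘A ≠ 0` and the only graded subspaces `I ⊆ A` with `A∘I ⊆ I` are `0` and `A`. -/
def IsSimpleG (mul : J → J → J) (ev od : Submodule F J) (A : Submodule F J) : Prop :=
  (∃ x ∈ A, ∃ y ∈ A, mul x y ≠ 0) ∧
  ∀ I : Submodule F J, I ≤ A → IsGradedG ev od I →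
    (∀ x ∈ A, ∀ y ∈ I, mul x y ∈ I) → I = ⊥ ∨ I = A

/-- An isomorphism of superalgebras: an F-linear bijection mapping even part onto even
part, odd part onto odd part, and preserving the product. -/
def SuperIsoG {J₂ : Type*} [AddCommGroup J₂] [Module F J₂]
    (mul₁ : J → J → J) (ev₁ od₁ : Submodule F J)
    (mul₂ : J₂ → J₂ → J₂) (ev₂ od₂ : Submodule F J₂)
    (A : Submodule F J) (B : Submodule F J₂) : Prop :=
  ∃ e : A ≃ₗ[F] B,
    (∀ x : A, (x : J) ∈ ev₁ ↔ (e x : J₂) ∈ ev₂) ∧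
    (∀ x : A, (x : J) ∈ od₁ ↔ (e x : J₂) ∈ od₂) ∧
    ∀ x y z : A, mul₁ x y = (z : J) → mul₂ (e x) (e y) = (e z : J₂)

end SuperDefs

/-- The space of (n+m)×(n+m) matrices, indices split into even (`inl`) and odd (`inr`) ones. -/
abbrev MJ (F : Type*) [Field F] (n m : ℕ) :=
  Matrix (Fin n ⊕ Fin m) (Fin n ⊕ Fin m) F

/-- Parity of an index. -/
def pty {n m : ℕ} : Fin n ⊕ Fin m → Bool := Sum.elim (fun _ => false) (fun _ => true)

variable (F : Type*) [Field F]

/-- The odd component of a matrix (block-antidiagonal part). -/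
def oddPart {n m : ℕ} (X : MJ F n m) : MJ F n m :=
  Matrix.of fun i j => if pty i = pty j then 0 else X i j

/-- The even component of a matrix (block-diagonal part). -/
def evenPart {n m : ℕ} (X : MJ F n m) : MJ F n m :=
  Matrix.of fun i j => if pty i = pty j then X i j else 0

variable {F}

/-- The super-Jordan product on `M_{n,m}(F)^{(+)}`:  `x∘y = (xy+yx)/2` when `x` or `y` is
even and `x∘y = (xy−yx)/2` when both are odd, extended bilinearly.  (For arbitrary
matrices this bilinear extension equals `(xy+yx)/2 − y₁x₁` where `x₁, y₁` are the odd
components.) -/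
def jmul {n m : ℕ} (X Y : MJ F n m) : MJ F n m :=
  (2 : F)⁻¹ • (X * Y + Y * X) - oddPart F Y * oddPart F X

variable (F)

/-- The even part `J₀` of `M_{n,m}(F)^{(+)}`: block-diagonal matrices. -/
def evenSub (n m : ℕ) : Submodule F (MJ F n m) where
  carrier := {X | ∀ i j, pty i ≠ pty j → X i j = 0}
  zero_mem' := by intro i j _; simp
  add_mem' := by
    intro a b ha hb i j h
    simp only [Matrix.add_apply, ha i j h, hb i j h, add_zero]
  smul_mem' := by
    intro c a ha i j h
    simp only [Matrix.smul_apply, ha i j h, smul_zero]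

/-- The odd part `J₁` of `M_{n,m}(F)^{(+)}`: block-antidiagonal matrices. -/
def oddSub (n m : ℕ) : Submodule F (MJ F n m) where
  carrier := {X | ∀ i j, pty i = pty j → X i j = 0}
  zero_mem' := by intro i j _; simp
  add_mem' := by
    intro a b ha hb i j h
    simp only [Matrix.add_apply, ha i j h, hb i j h, add_zero]
  smul_mem' := by
    intro c a ha i j h
    simp only [Matrix.smul_apply, ha i j h, smul_zero]

/-- Statements about `M_{n,m}(F)^{(+)}` specialized from the generic definitions. -/
abbrev IsGraded {n m : ℕ} (A : Submodule F (MJ F n m)) : Prop :=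
  IsGradedG (evenSub F n m) (oddSub F n m) A

abbrev IsSubalg {n m : ℕ} (A : Submodule F (MJ F n m)) : Prop :=
  IsSubalgG jmul (evenSub F n m) (oddSub F n m) A

abbrev Nontriv {n m : ℕ} (A : Submodule F (MJ F n m)) : Prop :=
  NontrivG (oddSub F n m) A

abbrev IsSimple {n m : ℕ} (A : Submodule F (MJ F n m)) : Prop :=
  IsSimpleG jmul (evenSub F n m) (oddSub F n m) A

abbrev SuperIso {n₁ m₁ n₂ m₂ : ℕ}
    (A : Submodule F (MJ F n₁ m₁)) (B : Submodule F (MJ F n₂ m₂)) : Prop :=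
  SuperIsoG jmul (evenSub F n₁ m₁) (oddSub F n₁ m₁)
    jmul (evenSub F n₂ m₂) (oddSub F n₂ m₂) A B

/-- The standard symplectic matrix `S = [[0, I_q],[−I_q, 0]]` of size `2q`. -/
def SMat (q : ℕ) : Matrix (Fin (2 * q)) (Fin (2 * q)) F :=
  Matrix.of fun i j =>
    if (j : ℕ) = (i : ℕ) + q then (1 : F) else if (i : ℕ) = (j : ℕ) + q then -1 else 0

/-- `osp(p,q)`: block matrices `[[A, C],[S⁻¹Cᵀ, D]]` inside `M_{p,2q}(F)^{(+)}` with
`A` symmetric, `C` arbitrary and `Dᵀ S = S D`.  The condition on the lower-left block is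
recorded in the equivalent form `S · C₂₁ = C₁₂ᵀ`. -/
def ospSub (p q : ℕ) : Submodule F (MJ F p (2 * q)) where
  carrier := {X | (X.toBlocks₁₁)ᵀ = X.toBlocks₁₁ ∧
    SMat F q * X.toBlocks₂₁ = (X.toBlocks₁₂)ᵀ ∧
    (X.toBlocks₂₂)ᵀ * SMat F q = SMat F q * X.toBlocks₂₂}
  zero_mem' := by
    refine ⟨?_, ?_, ?_⟩ <;> ext i j <;>
      simp [Matrix.toBlocks₁₁, Matrix.toBlocks₁₂, Matrix.toBlocks₂₁, Matrix.toBlocks₂₂,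
        Matrix.mul_apply]
  add_mem' := by
    rintro a b ⟨ha1, ha2, ha3⟩ ⟨hb1, hb2, hb3⟩
    have e11 : (a + b).toBlocks₁₁ = a.toBlocks₁₁ + b.toBlocks₁₁ := rfl
    have e12 : (a + b).toBlocks₁₂ = a.toBlocks₁₂ + b.toBlocks₁₂ := rfl
    have e21 : (a + b).toBlocks₂₁ = a.toBlocks₂₁ + b.toBlocks₂₁ := rfl
    have e22 : (a + b).toBlocks₂₂ = a.toBlocks₂₂ + b.toBlocks₂₂ := rfl
    refine ⟨?_, ?_, ?_⟩
    · rw [e11, Matrix.transpose_add, ha1, hb1]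
    · rw [e21, e12, Matrix.mul_add, Matrix.transpose_add, ha2, hb2]
    · rw [e22, Matrix.transpose_add, Matrix.add_mul, Matrix.mul_add, ha3, hb3]
  smul_mem' := by
    rintro c a ⟨ha1, ha2, ha3⟩
    have e11 : (c • a).toBlocks₁₁ = c • a.toBlocks₁₁ := rfl
    have e12 : (c • a).toBlocks₁₂ = c • a.toBlocks₁₂ := rfl
    have e21 : (c • a).toBlocks₂₁ = c • a.toBlocks₂₁ := rfl
    have e22 : (c • a).toBlocks₂₂ = c • a.toBlocks₂₂ := rfl
    refine ⟨?_, ?_, ?_⟩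
    · rw [e11, Matrix.transpose_smul, ha1]
    · rw [e21, e12, Matrix.mul_smul, Matrix.transpose_smul, ha2]
    · rw [e22, Matrix.transpose_smul, Matrix.smul_mul, Matrix.mul_smul, ha3]

/-- `Q(n)`: matrices `[[A, B],[B, A]]` inside `M_{n,n}(F)^{(+)}`. -/
def QSub (n : ℕ) : Submodule F (MJ F n n) where
  carrier := {X | (∀ i j, X (Sum.inr i) (Sum.inr j) = X (Sum.inl i) (Sum.inl j)) ∧
    (∀ i j, X (Sum.inr i) (Sum.inl j) = X (Sum.inl i) (Sum.inr j))}
  zero_mem' := by constructor <;> intro i j <;> simp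
  add_mem' := by
    rintro a b ⟨ha1, ha2⟩ ⟨hb1, hb2⟩
    constructor <;> intro i j <;>
      simp only [Matrix.add_apply, ha1 i j, ha2 i j, hb1 i j, hb2 i j]
  smul_mem' := by
    rintro c a ⟨ha1, ha2⟩
    constructor <;> intro i j <;>
      simp only [Matrix.smul_apply, ha1 i j, ha2 i j]

/-- `P(n)`: matrices `[[A, B],[C, Aᵀ]]` with `B` symmetric and `C` skew-symmetric,
inside `M_{n,n}(F)^{(+)}`. -/
def PSub (n : ℕ) : Submodule F (MJ F n n) where
  carrier := {X | (∀ i j, X (Sum.inr i) (Sum.inr j) = X (Sum.inl j) (Sum.inl i)) ∧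
    (∀ i j, X (Sum.inl i) (Sum.inr j) = X (Sum.inl j) (Sum.inr i)) ∧
    (∀ i j, X (Sum.inr i) (Sum.inl j) = - X (Sum.inr j) (Sum.inl i))}
  zero_mem' := by refine ⟨?_, ?_, ?_⟩ <;> intro i j <;> simp
  add_mem' := by
    rintro a b ⟨ha1, ha2, ha3⟩ ⟨hb1, hb2, hb3⟩
    refine ⟨?_, ?_, ?_⟩ <;> intro i j <;>
      simp only [Matrix.add_apply, ha1 i j, ha2 i j, ha3 i j, hb1 i j, hb2 i j, hb3 i j] <;>
      ring
  smul_mem' := by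
    rintro c a ⟨ha1, ha2, ha3⟩
    refine ⟨?_, ?_, ?_⟩ <;> intro i j <;>
      simp only [Matrix.smul_apply, ha1 i j, ha2 i j, ha3 i j, smul_neg]



end SJ


open Matrix
set_option linter.unusedSectionVars false
namespace SJ
section Pre
variable {F : Type*} [Field F] {ι : Type*} [Fintype ι] [DecidableEq ι]

theorem idem_exists (a : Matrix ι ι F) (ha : ¬ IsNilpotent a) (l : ℕ) :
    ∃ p : Polynomial F, Polynomial.aeval a (p * Polynomial.X ^ l) ≠ 0 ∧
      Polynomial.aeval a (p * Polynomial.X ^ l) * Polynomial.aeval a (p * Polynomial.X ^ l)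
        = Polynomial.aeval a (p * Polynomial.X ^ l) := by
  have hne : a.charpoly ≠ 0 := a.charpoly_monic.ne_zero
  obtain ⟨g, hg, hnd⟩ := a.charpoly.exists_eq_pow_rootMultiplicity_mul_and_not_dvd hne 0
  set k := a.charpoly.rootMultiplicity 0
  simp only [map_zero, sub_zero] at hg hnd
  have hcop : IsCoprime (Polynomial.X ^ (k + l)) g :=
    IsCoprime.pow_left ((Polynomial.irreducible_X.coprime_iff_not_dvd).2 hnd)
  obtain ⟨u, w, huw⟩ := hcop
  have h0 : Polynomial.aeval a (Polynomial.X ^ k * g) = 0 := by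
    rw [← hg]; exact Matrix.aeval_self_charpoly a
  refine ⟨u * Polynomial.X ^ k, ?_, ?_⟩
  · intro h
    apply ha
    refine ⟨k, ?_⟩
    have : Polynomial.aeval a (Polynomial.X ^ k : Polynomial F) = 0 := by
      have e : (Polynomial.X ^ k : Polynomial F) =
          Polynomial.X ^ k * (u * Polynomial.X ^ k * Polynomial.X ^ l) + w * (Polynomial.X ^ k * g) := by
        calc (Polynomial.X ^ k : Polynomial F) = Polynomial.X ^ k * (u * Polynomial.X ^ (k+l) + w * g) := by
              rw [huw, mul_one]
          _ = _ := by ring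
      rw [e, map_add, map_mul, h, map_mul, h0]; simp
    simpa using this
  · rw [← map_mul, ← sub_eq_zero, ← map_sub]
    have e : (u * Polynomial.X ^ k * Polynomial.X ^ l) * (u * Polynomial.X ^ k * Polynomial.X ^ l)
        - (u * Polynomial.X ^ k * Polynomial.X ^ l)
        = - (u * w * Polynomial.X ^ l) * (Polynomial.X ^ k * g) := by
      have : u * Polynomial.X ^ k * Polynomial.X ^ l = 1 - w * g := by
        rw [← huw]; ring
      calc _ = (u * Polynomial.X ^ k * Polynomial.X ^ l) * (u * Polynomial.X ^ k * Polynomial.X ^ l - 1) := by ring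
        _ = (u * Polynomial.X ^ k * Polynomial.X ^ l) * (- (w * g)) := by rw [this]; ring
        _ = _ := by ring
    rw [e, map_mul, h0, mul_zero]

theorem tr_nil (a : Matrix ι ι F) (ha : IsNilpotent a) : a.trace = 0 :=
  (Matrix.isNilpotent_trace_of_isNilpotent ha).eq_zero

theorem tr_idem (e : Matrix ι ι F) (he : e * e = e) : e.trace = (e.rank : F) := by
  have h1 : IsIdempotentElem (Matrix.toLin' e) := by
    unfold IsIdempotentElem
    rw [Module.End.mul_eq_comp, ← Matrix.toLin'_mul, he]
  have h := (LinearMap.IsProj.trace (LinearMap.IsIdempotentElem.isProj_range _ h1))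
  rw [Matrix.trace_toLin'_eq] at h
  rw [h]; rfl

theorem rank_pos_of_ne (e : Matrix ι ι F) (he : e ≠ 0) : 0 < e.rank := by
  rcases Nat.eq_zero_or_pos e.rank with h | h
  · exfalso
    apply he
    have h1 : LinearMap.range e.mulVecLin = ⊥ := Submodule.finrank_eq_zero.1 h
    rw [LinearMap.range_eq_bot] at h1
    ext i j
    have := congrArg (fun f => f (Pi.single j 1) i) h1
    simpa using this
  · exact h

theorem idem_zero [CharZero F] (e : Matrix ι ι F) (he : e * e = e) (h : e.trace = 0) : e = 0 := by
  by_contra hne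
  rw [tr_idem e he] at h
  have := rank_pos_of_ne e hne
  have : e.rank = 0 := by exact_mod_cast h
  omega

/-- representing functionals through the trace form -/
theorem repr_tr (E : Submodule F (Matrix ι ι F)) (s : Matrix ι ι F)
    (hE : ∀ n ∈ E, (∀ b ∈ E, (s * (n * b)).trace = 0) → n = 0) (φ : Matrix ι ι F →ₗ[F] F) :
    ∃ q ∈ E, ∀ b ∈ E, (s * (q * b)).trace = φ b := by
  let T : E →ₗ[F] Module.Dual F E := LinearMap.mk₂ F (fun n b => (s * ((n : Matrix ι ι F) * b)).trace)
    (by intros; simp [mul_add, add_mul]) (by intros; simp)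
    (by intros; simp [mul_add]) (by intros; simp)
  have hT : Function.Injective T := by
    rw [← LinearMap.ker_eq_bot, LinearMap.ker_eq_bot']
    intro n hn
    apply Subtype.ext
    apply hE n n.2
    intro b hb
    exact congrArg (fun f => f ⟨b, hb⟩) hn
  have hs : Function.Surjective T :=
    (LinearMap.injective_iff_surjective_of_finrank_eq_finrank
      (Subspace.dual_finrank_eq (K := F) (V := E)).symm).1 hT
  obtain ⟨q, hq⟩ := hs (φ ∘ₗ E.subtype)
  exact ⟨q, q.2, fun b hb => congrArg (fun f => f ⟨b, hb⟩) hq⟩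

theorem tr_zero (a : Matrix ι ι F) (h : ∀ b, (a * b).trace = 0) : a = 0 := by
  ext i j
  have := h (Matrix.single j i 1)
  rw [Matrix.trace_mul_comm] at this
  simpa [Matrix.trace_single_mul] using this

theorem tr_cyc3 (a b c : Matrix ι ι F) : (a * b * c).trace = (b * c * a).trace := by
  rw [mul_assoc, Matrix.trace_mul_comm]
end Pre

section Def
variable {F : Type*} [Field F] {ι : Type*} [Fintype ι] [DecidableEq ι]
/-- simple Jordan sub-superalgebra data -/
structure Sup (s : Matrix ι ι F) (E O : Submodule F (Matrix ι ι F)) : Prop where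
  s2 : s * s = 1
  ev : ∀ a ∈ E, s * a = a * s
  od : ∀ x ∈ O, s * x = - (x * s)
  c1 : ∀ a ∈ E, ∀ b ∈ E, a * b + b * a ∈ E
  c2 : ∀ a ∈ E, ∀ x ∈ O, a * x + x * a ∈ O
  c3 : ∀ x ∈ O, ∀ y ∈ O, x * y - y * x ∈ E
  nO : O ≠ ⊥
  nz : ¬ ((∀ a ∈ E, ∀ b ∈ E, a * b + b * a = 0) ∧ (∀ a ∈ E, ∀ x ∈ O, a * x + x * a = 0) ∧
    (∀ x ∈ O, ∀ y ∈ O, x * y - y * x = 0))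
  simple : ∀ I J : Submodule F (Matrix ι ι F), I ≤ E → J ≤ O →
    (∀ a ∈ E, ∀ b ∈ I, a * b + b * a ∈ I) → (∀ x ∈ O, ∀ b ∈ I, x * b + b * x ∈ J) →
    (∀ a ∈ E, ∀ x ∈ J, a * x + x * a ∈ J) → (∀ x ∈ O, ∀ y ∈ J, x * y - y * x ∈ I) →
    (I = ⊥ ∧ J = ⊥) ∨ (I = E ∧ J = O)

theorem half_mem [CharZero F] {E : Submodule F (Matrix ι ι F)} {a : Matrix ι ι F} (h : a + a ∈ E) : a ∈ E := by
  have h2 : (2:F)⁻¹ • (a + a) = a := by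
    rw [← two_smul F a, smul_smul, inv_mul_cancel₀ two_ne_zero, one_smul]
  rw [← h2]; exact E.smul_mem _ h

namespace Sup
variable [CharZero F] {s : Matrix ι ι F} {E O : Submodule F (Matrix ι ι F)}

theorem neg (h : Sup s E O) : Sup (-s) E O where
  s2 := by rw [neg_mul_neg]; exact h.s2
  ev a ha := by rw [neg_mul, mul_neg, h.ev a ha]
  od a ha := by rw [neg_mul, mul_neg, h.od a ha]
  c1 := h.c1
  c2 := h.c2
  c3 := h.c3
  nO := h.nO
  nz := h.nz
  simple := h.simple

theorem pow_mem (h : Sup s E O) {a : Matrix ι ι F} (ha : a ∈ E) (k : ℕ) : a ^ (k+1) ∈ E := by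
  induction k with
  | zero => simpa using ha
  | succ k ih =>
    apply half_mem
    have := h.c1 a ha _ ih
    rwa [← pow_succ', ← pow_succ] at this

theorem sq_mem (h : Sup s E O) {a : Matrix ι ι F} (ha : a ∈ E) : a * a ∈ E := by
  rw [← pow_two]; exact h.pow_mem ha 1

theorem aeval_mem (h : Sup s E O) {a : Matrix ι ι F} (ha : a ∈ E) (p : Polynomial F) (l : ℕ) :
    Polynomial.aeval a (p * Polynomial.X ^ (l+1)) ∈ E := by
  induction p using Polynomial.induction_on' with
  | add p q hp hq => rw [add_mul, map_add]; exact E.add_mem hp hq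
  | monomial k c =>
    rw [← Polynomial.C_mul_X_pow_eq_monomial, mul_assoc, ← pow_add, map_mul, Polynomial.aeval_C,
      ← Algebra.smul_def]
    apply E.smul_mem
    rw [map_pow, Polynomial.aeval_X, ← add_assoc]
    exact h.pow_mem ha _

theorem U1 (h : Sup s E O) {e f x : Matrix ι ι F} (he : e ∈ E) (hf : f ∈ E) (hx : x ∈ E) :
    e * x * f + f * x * e ∈ E := by
  apply half_mem
  have := E.sub_mem (E.add_mem (h.c1 f hf _ (h.c1 e he x hx)) (h.c1 e he _ (h.c1 f hf x hx)))
    (h.c1 _ (h.c1 e he f hf) x hx)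
  convert this using 1
  noncomm_ring

theorem U2 (h : Sup s E O) {e f x : Matrix ι ι F} (he : e ∈ E) (hf : f ∈ E) (hx : x ∈ O) :
    e * x * f + f * x * e ∈ O := by
  apply half_mem
  have := O.sub_mem (O.add_mem (h.c2 f hf _ (h.c2 e he x hx)) (h.c2 e he _ (h.c2 f hf x hx)))
    (h.c2 _ (h.c1 e he f hf) x hx)
  convert this using 1
  noncomm_ring

theorem u1 (h : Sup s E O) {e x : Matrix ι ι F} (he : e ∈ E) (hx : x ∈ E) :
    e * x * e ∈ E := half_mem (h.U1 he he hx)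
theorem u2 (h : Sup s E O) {e x : Matrix ι ι F} (he : e ∈ E) (hx : x ∈ O) :
    e * x * e ∈ O := half_mem (h.U2 he he hx)

/-- odd times even has zero trace -/
theorem tr_odd (h : Sup s E O) {x : Matrix ι ι F} (hx : s * x = - (x * s)) : x.trace = 0 := by
  have h1 : (s * x * s).trace = x.trace := by
    rw [Matrix.trace_mul_comm, ← mul_assoc, h.s2, one_mul]
  rw [hx, neg_mul, mul_assoc, h.s2, mul_one, Matrix.trace_neg] at h1
  have : (2:F) * x.trace = 0 := by linear_combination -h1
  simpa using this

/-- A∘A = A -/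
theorem perfect (h : Sup s E O) (E' O' : Submodule F (Matrix ι ι F)) (hE : E' ≤ E) (hO : O' ≤ O)
    (h1 : ∀ a ∈ E, ∀ b ∈ E, a * b + b * a ∈ E') (h2 : ∀ a ∈ E, ∀ x ∈ O, a * x + x * a ∈ O')
    (h3 : ∀ x ∈ O, ∀ y ∈ O, x * y - y * x ∈ E') : E' = E ∧ O' = O := by
  rcases h.simple E' O' hE hO (fun a ha b hb => h1 a ha b (hE hb))
    (fun x hx b hb => by rw [add_comm]; exact h2 b (hE hb) x hx)
    (fun a ha x hx => h2 a ha x (hO hx)) (fun x hx y hy => h3 x hx y (hO hy)) with ⟨e1, e2⟩ | h'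
  · exfalso
    apply h.nz
    subst e1 e2
    simp only [Submodule.mem_bot] at h1 h2 h3
    exact ⟨h1, h2, h3⟩
  · exact h'

end Sup
end Def
end SJ

open Matrix
set_option linter.unusedSectionVars false
namespace SJ
section Jac
variable {F : Type*} [Field F] {R : Type*} [Ring R] [Algebra F R]

theorem ml_L {A B C : Submodule F R} (h : A ≤ B) : A * C ≤ B * C := mul_le_mul' h le_rfl
theorem ml_R {A B C : Submodule F R} (h : A ≤ B) : C * A ≤ C * B := mul_le_mul' le_rfl h
theorem pw_L {A B : Submodule F R} (h : A ≤ B) (k : ℕ) : A ^ k ≤ B ^ k := by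
  induction k with
  | zero => simp
  | succ k ih => rw [pow_succ, pow_succ]; exact mul_le_mul' ih h

theorem adj_comm (P : Submodule F R) (G : Set R)
    (h : ∀ g ∈ G, ∀ p ∈ P, g * p ∈ P * Subalgebra.toSubmodule (Algebra.adjoin F G)) :
    Subalgebra.toSubmodule (Algebra.adjoin F G) * P ≤ P * Subalgebra.toSubmodule (Algebra.adjoin F G) := by
  set S := Subalgebra.toSubmodule (Algebra.adjoin F G) with hS
  have h1 : (1 : R) ∈ S := (Algebra.adjoin F G).one_mem
  have hmul : ∀ {a b}, a ∈ S → b ∈ S → a * b ∈ S := fun {a b} ha hb => (Algebra.adjoin F G).mul_mem ha hb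
  rw [Submodule.mul_le]
  intro d hd
  have hd' : d ∈ Algebra.adjoin F G := hd
  clear hd
  induction hd' using Algebra.adjoin_induction with
  | mem x hx => exact h x hx
  | algebraMap r =>
    intro p hp
    rw [← Algebra.smul_def]
    have := Submodule.mul_mem_mul (P.smul_mem r hp) h1
    rwa [mul_one] at this
  | add x y _ _ hx hy =>
    intro p hp
    rw [add_mul]; exact Submodule.add_mem _ (hx p hp) (hy p hp)
  | mul x y _ _ hx hy =>
    intro p hp
    rw [mul_assoc]
    refine Submodule.mul_induction_on (hy p hp) ?_ ?_
    · intro p' hp' d hd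
      rw [← mul_assoc]
      refine Submodule.mul_induction_on (hx p' hp') ?_ ?_
      · intro p'' hp'' d' hd'
        rw [mul_assoc]
        exact Submodule.mul_mem_mul hp'' (hmul hd' hd)
      · intro u v hu hv
        rw [add_mul]; exact Submodule.add_mem _ hu hv
    · intro u v hu hv
      rw [mul_add]; exact Submodule.add_mem _ hu hv

theorem sub_idem (A : Subalgebra F R) : Subalgebra.toSubmodule A * Subalgebra.toSubmodule A ≤ Subalgebra.toSubmodule A := by
  rw [Submodule.mul_le]; intro a ha b hb; exact A.mul_mem ha hb

theorem adj_pow (P : Submodule F R) (A : Subalgebra F R)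
    (h : Subalgebra.toSubmodule A * P ≤ P * Subalgebra.toSubmodule A) (k : ℕ) :
    (P * Subalgebra.toSubmodule A) ^ k ≤ P ^ k * Subalgebra.toSubmodule A := by
  induction k with
  | zero =>
    rw [pow_zero, pow_zero, one_mul, Submodule.one_le]
    exact A.one_mem
  | succ k ih =>
    calc (P * Subalgebra.toSubmodule A) ^ (k+1) = (P * Subalgebra.toSubmodule A) ^ k * (P * Subalgebra.toSubmodule A) := pow_succ _ _
      _ ≤ (P ^ k * Subalgebra.toSubmodule A) * (P * Subalgebra.toSubmodule A) := ml_L ih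
      _ = P ^ k * (Subalgebra.toSubmodule A * P) * Subalgebra.toSubmodule A := by simp only [mul_assoc]
      _ ≤ P ^ k * (P * Subalgebra.toSubmodule A) * Subalgebra.toSubmodule A :=
          ml_L (ml_R h)
      _ = P ^ (k+1) * (Subalgebra.toSubmodule A * Subalgebra.toSubmodule A) := by simp only [pow_succ, mul_assoc]
      _ ≤ _ := ml_R (sub_idem A)

theorem jac_step (N P : Submodule F R) (hP : P ≤ N) (hne : P ≠ N)
    (hc : ∀ a ∈ N, ∀ b ∈ N, a * b + b * a ∈ N) (k : ℕ) (hk : P ^ k = ⊥) :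
    ∃ n ∈ N, n ∉ P ∧ ∀ p ∈ P, n * p + p * n ∈ P := by
  by_contra hcon
  push Not at hcon
  let W : ℕ → Submodule F R := fun j => ⨆ (a : ℕ) (b : ℕ) (_ : a + b = j), P ^ a * N * P ^ b
  have hW1 : ∀ j, ∀ p ∈ P, ∀ w ∈ W j, p * w ∈ W (j+1) := by
    intro j p hp w hw
    have : P * W j ≤ W (j+1) := by
      simp only [W, Submodule.mul_iSup]
      refine iSup_le fun a => iSup_le fun b => iSup_le fun hab => ?_
      refine le_trans (le_of_eq ?_) (le_iSup_of_le (a+1) (le_iSup_of_le b (le_iSup_of_le (by omega) le_rfl)))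
      rw [pow_succ']; simp only [mul_assoc]
    exact this (Submodule.mul_mem_mul hp hw)
  have hW2 : ∀ j, ∀ p ∈ P, ∀ w ∈ W j, w * p ∈ W (j+1) := by
    intro j p hp w hw
    have : W j * P ≤ W (j+1) := by
      simp only [W, Submodule.iSup_mul]
      refine iSup_le fun a => iSup_le fun b => iSup_le fun hab => ?_
      refine le_trans (le_of_eq ?_) (le_iSup_of_le a (le_iSup_of_le (b+1) (le_iSup_of_le (by omega) le_rfl)))
      rw [pow_succ]; simp only [mul_assoc]
    exact this (Submodule.mul_mem_mul hw hp)
  have key : ∀ j, ∃ n ∈ N, n ∉ P ∧ n ∈ W j := by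
    intro j
    induction j with
    | zero =>
      obtain ⟨n, hn, hnP⟩ := SetLike.exists_of_lt (lt_of_le_of_ne hP hne)
      refine ⟨n, hn, hnP, ?_⟩
      have : N ≤ W 0 := le_iSup_of_le 0 (le_iSup_of_le 0 (le_iSup_of_le (by omega) (by simp)))
      exact this hn
    | succ j ih =>
      obtain ⟨n, hn, hnP, hnW⟩ := ih
      obtain ⟨p, hp, hnp⟩ := hcon n hn hnP
      exact ⟨_, hc n hn p (hP hp), hnp, (W (j+1)).add_mem (hW2 j p hp n hnW) (hW1 j p hp n hnW)⟩
  obtain ⟨n, hn, hnP, hnW⟩ := key (2*k)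
  have hW0 : W (2*k) = ⊥ := by
    rw [eq_bot_iff]
    refine iSup_le fun a => iSup_le fun b => iSup_le fun hab => ?_
    have hz : ∀ t, k ≤ t → P ^ t = ⊥ := by
      intro t ht
      obtain ⟨c, rfl⟩ := Nat.exists_eq_add_of_le ht
      rw [pow_add, hk, Submodule.bot_mul]
    rcases le_total k a with h | h
    · rw [hz a h, Submodule.bot_mul, Submodule.bot_mul]
    · rw [hz b (by omega), Submodule.mul_bot]
  rw [hW0, Submodule.mem_bot] at hnW
  exact hnP (hnW ▸ P.zero_mem)

theorem jac_ext (P : Submodule F R) (n : R) (hn : IsNilpotent n) (h : ∀ p ∈ P, n * p + p * n ∈ P)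
    (k : ℕ) (hk : P ^ k = ⊥) : ∃ k', (P ⊔ Submodule.span F {n}) ^ k' = ⊥ := by
  obtain ⟨t, ht⟩ := hn
  let A := Algebra.adjoin F ((P : Set R) ∪ {n})
  have hA1 : (1 : R) ∈ Subalgebra.toSubmodule A := A.one_mem
  have hPA : P ≤ Subalgebra.toSubmodule A := fun p hp => Algebra.subset_adjoin (Or.inl hp)
  have hnA : n ∈ Subalgebra.toSubmodule A := Algebra.subset_adjoin (Or.inr rfl)
  have hcomm : Subalgebra.toSubmodule A * P ≤ P * Subalgebra.toSubmodule A := by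
    apply adj_comm
    rintro g (hg | hg) p hp
    · exact Submodule.mul_mem_mul hg (hPA hp)
    · rw [Set.mem_singleton_iff] at hg; subst hg
      have e : g * p = (g * p + p * g) * 1 - p * g := by noncomm_ring
      rw [e]
      exact Submodule.sub_mem _ (Submodule.mul_mem_mul (h p hp) hA1) (Submodule.mul_mem_mul hp hnA)
  have hPle : P ≤ P * Subalgebra.toSubmodule A := fun p hp => by
    have := Submodule.mul_mem_mul hp hA1
    rwa [mul_one] at this
  have hj : ∀ j, (P ⊔ Submodule.span F {n}) ^ j ≤ P * Subalgebra.toSubmodule A ⊔ Submodule.span F {n ^ j} := by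
    intro j
    induction j with
    | zero => rw [pow_zero, pow_zero, Submodule.one_eq_span]; exact le_sup_right
    | succ j ih =>
      rw [pow_succ]
      refine (ml_L ih).trans ?_
      rw [Submodule.sup_mul, Submodule.mul_sup, Submodule.mul_sup]
      refine sup_le (sup_le ?_ ?_) (sup_le ?_ ?_)
      · refine le_trans ?_ le_sup_left
        rw [mul_assoc]
        exact ml_R ((ml_R hPA).trans (sub_idem A))
      · refine le_trans ?_ le_sup_left
        rw [mul_assoc]
        refine ml_R ((ml_R ?_).trans (sub_idem A))
        rw [Submodule.span_singleton_le_iff_mem]; exact hnA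
      · refine le_trans ?_ le_sup_left
        refine le_trans (ml_L ?_) hcomm
        rw [Submodule.span_singleton_le_iff_mem]; exact A.pow_mem hnA j
      · refine le_trans ?_ le_sup_right
        rw [Submodule.span_mul_span, pow_succ]
        simp
  refine ⟨t * k, ?_⟩
  rw [eq_bot_iff, pow_mul]
  have h1 : (P ⊔ Submodule.span F {n}) ^ t ≤ P * Subalgebra.toSubmodule A := by
    refine (hj t).trans ?_
    rw [ht]; simp
  calc ((P ⊔ Submodule.span F {n}) ^ t) ^ k ≤ (P * Subalgebra.toSubmodule A) ^ k := pw_L h1 k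
    _ ≤ P ^ k * Subalgebra.toSubmodule A := adj_pow P A hcomm k
    _ = ⊥ := by rw [hk, Submodule.bot_mul]

theorem jacobson [Module.Finite F R] (N : Submodule F R)
    (hc : ∀ a ∈ N, ∀ b ∈ N, a * b + b * a ∈ N) (hn : ∀ a ∈ N, IsNilpotent a) :
    ∃ k, N ^ k = ⊥ := by
  have main : ∀ d : ℕ, ∃ P : Submodule F R, P ≤ N ∧ (∃ k, P ^ k = ⊥) ∧ (P = N ∨ d ≤ Module.finrank F P) := by
    intro d
    induction d with
    | zero => exact ⟨⊥, bot_le, ⟨1, by simp⟩, Or.inr (Nat.zero_le _)⟩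
    | succ d ih =>
      obtain ⟨P, hP, ⟨k, hk⟩, h | h⟩ := ih
      · exact ⟨P, hP, ⟨k, hk⟩, Or.inl h⟩
      · by_cases hne : P = N
        · exact ⟨P, hP, ⟨k, hk⟩, Or.inl hne⟩
        obtain ⟨n, hnN, hnP, hnp⟩ := jac_step N P hP hne hc k hk
        refine ⟨P ⊔ Submodule.span F {n}, sup_le hP ?_, jac_ext P n (hn n hnN) hnp k hk, Or.inr ?_⟩
        · rw [Submodule.span_singleton_le_iff_mem]; exact hnN
        · have : P < P ⊔ Submodule.span F {n} := by
            refine lt_of_le_of_ne le_sup_left fun h' => hnP ?_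
            rw [h']; exact Submodule.mem_sup_right (Submodule.mem_span_singleton_self n)
          have := Submodule.finrank_lt_finrank_of_lt this
          omega
  obtain ⟨P, hP, hk, h | h⟩ := main (Module.finrank F R + 1)
  · rwa [h] at hk
  · have := P.finrank_le
    omega
end Jac
end SJ

open Matrix
set_option linter.unusedSectionVars false
namespace SJ
section Jac2
variable {F : Type*} [Field F] {R : Type*} [Ring R] [Algebra F R]
theorem two_nil (P N : Submodule F R) (k : ℕ) (hk : P ^ k = ⊥) (hN : N ≤ P * N ⊔ N * P) : N = ⊥ := by
  let W : ℕ → Submodule F R := fun j => ⨆ (a : ℕ) (b : ℕ) (_ : a + b = j), P ^ a * N * P ^ b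
  have hW1 : ∀ j, P * W j ≤ W (j+1) := by
    intro j
    simp only [W, Submodule.mul_iSup]
    refine iSup_le fun a => iSup_le fun b => iSup_le fun hab => ?_
    refine le_trans (le_of_eq ?_) (le_iSup_of_le (a+1) (le_iSup_of_le b (le_iSup_of_le (by omega) le_rfl)))
    rw [pow_succ']; simp only [mul_assoc]
  have hW2 : ∀ j, W j * P ≤ W (j+1) := by
    intro j
    simp only [W, Submodule.iSup_mul]
    refine iSup_le fun a => iSup_le fun b => iSup_le fun hab => ?_
    refine le_trans (le_of_eq ?_) (le_iSup_of_le a (le_iSup_of_le (b+1) (le_iSup_of_le (by omega) le_rfl)))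
    rw [pow_succ]; simp only [mul_assoc]
  have key : ∀ j, N ≤ W j := by
    intro j
    induction j with
    | zero => exact le_iSup_of_le 0 (le_iSup_of_le 0 (le_iSup_of_le (by omega) (by simp)))
    | succ j ih =>
      exact hN.trans (sup_le ((ml_R ih).trans (hW1 j)) ((ml_L ih).trans (hW2 j)))
  have hW0 : W (2*k) = ⊥ := by
    rw [eq_bot_iff]
    refine iSup_le fun a => iSup_le fun b => iSup_le fun hab => ?_
    have hz : ∀ t, k ≤ t → P ^ t = ⊥ := by
      intro t ht
      obtain ⟨c, rfl⟩ := Nat.exists_eq_add_of_le ht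
      rw [pow_add, hk, Submodule.bot_mul]
    rcases le_total k a with h | h
    · rw [hz a h, Submodule.bot_mul, Submodule.bot_mul]
    · rw [hz b (by omega), Submodule.mul_bot]
  rw [eq_bot_iff, ← hW0]; exact key _
end Jac2

namespace Sup
variable {F : Type*} [Field F] {ι : Type*} [Fintype ι] [DecidableEq ι]
variable [CharZero F] {s : Matrix ι ι F} {E O : Submodule F (Matrix ι ι F)}

/-- trace radical of `E` against `K` -/
def rad (E K : Submodule F (Matrix ι ι F)) : Submodule F (Matrix ι ι F) where
  carrier := {n | n ∈ E ∧ ∀ b ∈ K, (n * b).trace = 0}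
  zero_mem' := ⟨E.zero_mem, by simp⟩
  add_mem' := by
    rintro a b ⟨ha, ha'⟩ ⟨hb, hb'⟩
    refine ⟨E.add_mem ha hb, fun c hc => ?_⟩
    rw [add_mul, trace_add, ha' c hc, hb' c hc, add_zero]
  smul_mem' := by
    rintro r a ⟨ha, ha'⟩
    refine ⟨E.smul_mem r ha, fun c hc => ?_⟩
    rw [smul_mul_assoc, trace_smul, ha' c hc, smul_zero]

theorem SS (h : Sup s E O) (n : Matrix ι ι F) (hn : n ∈ E) (hz : ∀ b ∈ E, (n * b).trace = 0) :
    n = 0 := by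
  let N := rad E E
  have hNE : N ≤ E := fun x hx => hx.1
  have hi : ∀ a ∈ E, ∀ x ∈ N, a * x + x * a ∈ N := by
    rintro a ha x ⟨hx, hx'⟩
    refine ⟨h.c1 a ha x hx, fun b hb => ?_⟩
    have h1 := hx' _ (h.c1 a ha b hb)
    have h2 := tr_cyc3 a x b
    simp only [mul_add, add_mul, trace_add, ← mul_assoc] at *
    linear_combination h1 + h2
  have hii : ∀ x ∈ O, ∀ y ∈ O, ∀ a ∈ E, (x * y + y * x) * a - a * (x * y + y * x) ∈ E := by
    intro x hx y hy a ha
    have := E.add_mem (h.c3 x hx _ (h.c2 a ha y hy)) (h.c3 y hy _ (h.c2 a ha x hx))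
    convert this using 1
    noncomm_ring
  have hii' : ∀ x ∈ O, ∀ y ∈ O, ∀ a ∈ N, (x * y + y * x) * a - a * (x * y + y * x) ∈ N := by
    intro x hx y hy a ha
    refine ⟨hii x hx y hy a ha.1, fun b hb => ?_⟩
    have h1 := ha.2 _ (hii x hx y hy b hb)
    generalize x * y + y * x = D at *
    have h2 := tr_cyc3 D a b
    simp only [mul_sub, sub_mul, trace_sub, ← mul_assoc] at *
    linear_combination h2 - h1
  have hnil : ∀ a ∈ N, IsNilpotent a := by
    intro a ha
    by_contra hna
    obtain ⟨p, hp0, hpi⟩ := idem_exists a hna 2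
    apply hp0
    apply idem_zero _ hpi
    have e : Polynomial.aeval a (p * Polynomial.X ^ 2) = a * Polynomial.aeval a (p * Polynomial.X ^ 1) := by
      rw [show p * Polynomial.X ^ 2 = Polynomial.X * (p * Polynomial.X ^ 1) by ring, map_mul, Polynomial.aeval_X]
    rw [e]
    exact ha.2 _ (h.aeval_mem ha.1 p 0)
  obtain ⟨k, hk⟩ := jacobson N (fun a ha b hb => hi a (hNE ha) b hb) hnil
  let G : Set (Matrix ι ι F) := (E : Set _) ∪ {g | ∃ x ∈ O, ∃ y ∈ O, g = x * y}
  let A0 := Algebra.adjoin F G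
  let S0 := Subalgebra.toSubmodule A0
  have h1S : (1 : Matrix ι ι F) ∈ S0 := A0.one_mem
  have hES : E ≤ S0 := fun b hb => Algebra.subset_adjoin (Or.inl hb)
  have hOS : ∀ x ∈ O, ∀ y ∈ O, x * y ∈ S0 := fun x hx y hy => Algebra.subset_adjoin (Or.inr ⟨x, hx, y, hy, rfl⟩)
  have hcE : ∀ g ∈ E, ∀ p ∈ N, g * p ∈ N * S0 := by
    intro g hg p hp
    have e : g * p = (g * p + p * g) * 1 - p * g := by noncomm_ring
    rw [e]
    exact Submodule.sub_mem _ (Submodule.mul_mem_mul (hi g hg p hp) h1S) (Submodule.mul_mem_mul hp (hES hg))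
  have hcomm : S0 * N ≤ N * S0 := by
    apply adj_comm
    rintro g (hg | ⟨x, hx, y, hy, rfl⟩) p hp
    · exact hcE g hg p hp
    · apply half_mem
      have e : x * y * p + x * y * p = (x * y - y * x) * p + (((x * y + y * x) * p - p * (x * y + y * x)) * 1
          + p * (x * y + y * x)) := by noncomm_ring
      rw [e]
      refine Submodule.add_mem _ (hcE _ (h.c3 x hx y hy) p hp) (Submodule.add_mem _ ?_ ?_)
      · exact Submodule.mul_mem_mul (hii' x hx y hy p hp) h1S
      · exact Submodule.mul_mem_mul hp (S0.add_mem (hOS x hx y hy) (hOS y hy x hx))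
  have htr0 : ∀ a ∈ N, ∀ c ∈ S0, (a * c).trace = 0 := by
    intro a ha c hc
    apply tr_nil
    refine ⟨k, ?_⟩
    have h1 : (a * c) ^ k ∈ (N * S0) ^ k := Submodule.pow_mem_pow _ (Submodule.mul_mem_mul ha hc) k
    have h2 := adj_pow N A0 hcomm k h1
    rwa [hk, Submodule.bot_mul, Submodule.mem_bot] at h2
  -- the enveloping algebra
  have hSO : S0 * O ≤ O * S0 := by
    apply adj_comm
    rintro g (hg | ⟨x, hx, y, hy, rfl⟩) p hp
    · have e : g * p = (g * p + p * g) * 1 - p * g := by noncomm_ring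
      rw [e]
      exact Submodule.sub_mem _ (Submodule.mul_mem_mul (h.c2 g hg p hp) h1S) (Submodule.mul_mem_mul hp (hES hg))
    · rw [mul_assoc]; exact Submodule.mul_mem_mul hx (hOS y hy p hp)
  have hOO : O * O ≤ S0 := by rw [Submodule.mul_le]; exact hOS
  let A := Algebra.adjoin F ((E : Set (Matrix ι ι F)) ∪ O)
  let S := Subalgebra.toSubmodule A
  let T := S0 ⊔ O * S0
  have hST : ∀ c ∈ A, ∀ t ∈ T, t * c ∈ T := by
    intro c hc
    induction hc using Algebra.adjoin_induction with
    | mem x hx =>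
      intro t ht
      rcases hx with hx | hx
      · have : T * E ≤ T := by
          rw [Submodule.sup_mul, mul_assoc]
          exact sup_le_sup ((ml_R hES).trans (sub_idem A0)) (ml_R ((ml_R hES).trans (sub_idem A0)))
        exact this (Submodule.mul_mem_mul ht hx)
      · have : T * O ≤ T := by
          rw [Submodule.sup_mul, mul_assoc]
          refine sup_le (hSO.trans le_sup_right) (((ml_R hSO).trans ?_).trans le_sup_left)
          rw [← mul_assoc]
          exact (ml_L hOO).trans (sub_idem A0)
        exact this (Submodule.mul_mem_mul ht hx)
    | algebraMap r =>
      intro t ht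
      rw [← Algebra.commutes, ← Algebra.smul_def]; exact T.smul_mem r ht
    | add x y _ _ hx hy => intro t ht; rw [mul_add]; exact T.add_mem (hx t ht) (hy t ht)
    | mul x y _ _ hx hy => intro t ht; rw [← mul_assoc]; exact hy _ (hx t ht)
  have hST' : S ≤ T := by
    intro c hc
    have := hST c hc 1 (Submodule.mem_sup_left h1S)
    rwa [one_mul] at this
  have hS0ev : ∀ c ∈ A0, s * c = c * s := by
    intro c hc
    induction hc using Algebra.adjoin_induction with
    | mem x hx =>
      rcases hx with hx | ⟨x, hx, y, hy, rfl⟩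
      · exact h.ev x hx
      · rw [← mul_assoc, h.od x hx, neg_mul, mul_assoc, h.od y hy, mul_neg, neg_neg, mul_assoc]
    | algebraMap r => exact (Algebra.commutes r s).symm
    | add x y _ _ hx hy => rw [mul_add, hx, hy, add_mul]
    | mul x y _ _ hx hy => rw [← mul_assoc, hx, mul_assoc, hy, mul_assoc]
  have htrS : ∀ a ∈ N, ∀ c ∈ S, (a * c).trace = 0 := by
    intro a ha c hc
    obtain ⟨c0, hc0, c1, hc1, rfl⟩ := Submodule.mem_sup.1 (hST' hc)
    rw [mul_add, trace_add, htr0 a ha c0 hc0, zero_add]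
    refine Submodule.mul_induction_on hc1 ?_ ?_
    · intro x hx d hd
      apply h.tr_odd
      have h1 := h.ev a (hNE ha)
      have h2 := h.od x hx
      have h3 := hS0ev d hd
      rw [← mul_assoc, h1, mul_assoc, ← mul_assoc s, h2, neg_mul, mul_assoc, h3]
      simp only [mul_neg, mul_assoc]
    · intro u v hu hv
      rw [mul_add, trace_add, hu, hv, add_zero]
  have hES' : E ≤ S := fun b hb => Algebra.subset_adjoin (Or.inl hb)
  have hOS' : O ≤ S := fun b hb => Algebra.subset_adjoin (Or.inr hb)
  have hSS : ∀ a ∈ S, ∀ b ∈ S, a * b ∈ S := fun a ha b hb => A.mul_mem ha hb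
  have trl : ∀ K : Submodule F (Matrix ι ι F), ∀ a ∈ S, ∀ x ∈ rad K S, ∀ b ∈ S,
      ((a * x) * b).trace = 0 ∧ ((x * a) * b).trace = 0 := by
    intro K a ha x hx b hb
    constructor
    · rw [tr_cyc3, mul_assoc]; exact hx.2 _ (hSS b hb a ha)
    · rw [mul_assoc]; exact hx.2 _ (hSS a ha b hb)
  have hNJ : N ≤ rad E S := fun a ha => ⟨ha.1, htrS a ha⟩
  have hnN : n ∈ N := ⟨hn, hz⟩
  refine Or.elim (h.simple (rad E S) (rad O S) (fun x hx => hx.1) (fun x hx => hx.1) ?_ ?_ ?_ ?_) ?_ ?_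
  rotate_left 4
  · rintro ⟨h1, h2⟩
    have := hNJ hnN
    rwa [h1, Submodule.mem_bot] at this
  · rintro ⟨h1, h2⟩
    exfalso
    have hEN : E ≤ N := by
      intro a ha
      refine ⟨ha, fun b hb => ?_⟩
      rw [← h1] at ha
      exact ha.2 b (hES' hb)
    have hEk : E ^ k = ⊥ := by rw [eq_bot_iff, ← hk]; exact pw_L hEN k
    apply h.nO
    refine two_nil E O k hEk ?_
    have := (h.perfect E (O ⊓ (E * O ⊔ O * E)) le_rfl inf_le_left h.c1 (fun a ha x hx => ⟨h.c2 a ha x hx,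
      Submodule.add_mem _ (Submodule.mem_sup_left (Submodule.mul_mem_mul ha hx)) (Submodule.mem_sup_right (Submodule.mul_mem_mul hx ha))⟩)
      h.c3).2
    exact inf_eq_left.1 this
  · intro a ha x hx
    refine ⟨h.c1 a ha x hx.1, fun b hb => ?_⟩
    rw [add_mul, trace_add, (trl E a (hES' ha) x hx b hb).1, (trl E a (hES' ha) x hx b hb).2, add_zero]
  · intro a ha x hx
    refine ⟨by rw [add_comm]; exact h.c2 x hx.1 a ha, fun b hb => ?_⟩
    rw [add_mul, trace_add, (trl E a (hOS' ha) x hx b hb).1, (trl E a (hOS' ha) x hx b hb).2, add_zero]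
  · intro a ha x hx
    refine ⟨h.c2 a ha x hx.1, fun b hb => ?_⟩
    rw [add_mul, trace_add, (trl O a (hES' ha) x hx b hb).1, (trl O a (hES' ha) x hx b hb).2, add_zero]
  · intro a ha x hx
    refine ⟨h.c3 a ha x hx.1, fun b hb => ?_⟩
    rw [sub_mul, trace_sub, (trl O a (hOS' ha) x hx b hb).1, (trl O a (hOS' ha) x hx b hb).2, sub_zero]

theorem reprE (h : Sup s E O) (φ : Matrix ι ι F →ₗ[F] F) : ∃ q ∈ E, ∀ b ∈ E, (q * b).trace = φ b := by
  have := repr_tr E 1 (fun n hn hz => h.SS n hn (by simpa using hz)) φ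
  simpa using this

theorem E_ne (h : Sup s E O) : E ≠ ⊥ := by
  intro hE
  have h3 := h.c3
  subst hE
  apply h.nz
  simp only [Submodule.mem_bot] at h3
  refine ⟨?_, ?_, h3⟩ <;> simp

theorem unit (h : Sup s E O) : ∃ u ∈ E, u * u = u ∧ (∀ a ∈ E, u * a = a ∧ a * u = a) ∧
    (∀ a ∈ O, u * a = a ∧ a * u = a) := by
  obtain ⟨u, hu, hub⟩ := h.reprE (Matrix.traceLinearMap ι F F)
  simp only [Matrix.traceLinearMap_apply] at hub
  have h2 : ∀ b ∈ E, u * b + b * u = b + b := by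
    intro b hb
    rw [← sub_eq_zero]
    apply h.SS _ (E.sub_mem (h.c1 u hu b hb) (E.add_mem hb hb))
    intro c hc
    have h1 := hub _ (h.c1 b hb c hc)
    have h2 := tr_cyc3 b u c
    have h3 := Matrix.trace_mul_comm c b
    simp only [mul_add, add_mul, sub_mul, trace_add, trace_sub, ← mul_assoc] at *
    linear_combination h1 + h2 + h3
  have hd : ∀ a : Matrix ι ι F, ∀ b, a + a = b + b → a = b := by
    intro a b hab
    rw [← two_smul F, ← two_smul F] at hab
    exact smul_right_injective _ (two_ne_zero (α := F)) hab
  have huu : u * u = u := hd _ _ (h2 u hu)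
  have hE : ∀ a ∈ E, u * a = a ∧ a * u = a := by
    intro b hb
    have h3 := congrArg (fun z => u * z) (h2 b hb)
    have h4 := congrArg (fun z => z * u) (h2 b hb)
    simp only [mul_add, add_mul, ← mul_assoc, huu] at h3 h4
    rw [mul_assoc (b) u u, huu] at h4
    have e1 : u * b * u = u * b := add_left_cancel h3
    have e2 : u * b * u = b * u := add_right_cancel h4
    have h5 := h2 b hb
    rw [← e1, ← e2] at h5
    have := hd _ _ h5
    exact ⟨by rw [← e1, this], by rw [← e2, this]⟩
  refine ⟨u, hu, huu, hE, ?_⟩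
  let J : Submodule F (Matrix ι ι F) :=
    { carrier := {x | x ∈ O ∧ u * x * u = 0}
      zero_mem' := ⟨O.zero_mem, by simp⟩
      add_mem' := by
        rintro a b ⟨ha, ha'⟩ ⟨hb, hb'⟩
        exact ⟨O.add_mem ha hb, by rw [mul_add, add_mul, ha', hb', add_zero]⟩
      smul_mem' := by
        rintro r a ⟨ha, ha'⟩
        exact ⟨O.smul_mem r ha, by rw [mul_smul_comm, smul_mul_assoc, ha', smul_zero]⟩ }
  have hJ : J = ⊥ := by
    refine Or.elim (h.simple ⊥ J bot_le (fun x hx => hx.1) ?_ ?_ ?_ ?_) ?_ ?_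
    rotate_left 4
    · rintro ⟨_, h2⟩; exact h2
    · rintro ⟨h1, _⟩; exact absurd h1.symm h.E_ne
    · intro a _ b hb; rw [Submodule.mem_bot] at hb ⊢; subst hb; simp
    · intro a _ b hb; rw [Submodule.mem_bot] at hb; subst hb; simp
    · rintro a ha x ⟨hx, hx'⟩
      refine ⟨h.c2 a ha x hx, ?_⟩
      have e : u * (a * x + x * a) * u = a * (u * x * u) + (u * x * u) * a := by
        have := hE a ha
        calc u * (a * x + x * a) * u = (u * a) * x * u + u * x * (a * u) := by noncomm_ring
          _ = (a * u) * x * u + u * x * (u * a) := by rw [this.1, this.2]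
          _ = _ := by noncomm_ring
      rw [e, hx']; simp
    · rintro y hy x ⟨hx, hx'⟩
      rw [Submodule.mem_bot]
      apply h.SS _ (h.c3 y hy x hx)
      intro b hb
      have hbu := hE b hb
      have hz := hE _ (h.c3 x hx _ (h.c2 b hb y hy))
      have hbx : b * x = b * x * (1 - u) := by
        have : b * x * u = b * (u * x * u) := by rw [← mul_assoc, ← mul_assoc, hbu.2]
        rw [hx', mul_zero] at this
        rw [mul_sub, this]; simp
      have hxb : x * b = (1 - u) * x * b := by
        have : u * x * b = (u * x * u) * b := by rw [mul_assoc _ u b, hbu.1]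
        rw [hx', zero_mul] at this
        rw [sub_mul, sub_mul, this]; simp
      have hv : (1 - u) * (x * (b * y + y * b) - (b * y + y * b) * x) * (1 - u) = 0 := by
        rw [sub_mul, hz.1]; simp
      have hbv : b * (1 - u) = 0 := by rw [mul_sub, hbu.2]; simp
      have hvb : (1 - u) * b = 0 := by rw [sub_mul, hbu.1]; simp
      have hvv : (1 - u) * (1 - u) = 1 - u := by
        have : (1 - u) * (1 - u) = 1 - u - u + u * u := by noncomm_ring
        rw [this, huu]; simp
      generalize hV : (1 - u) = v at *
      have e : v * (x * (b * y + y * b) - (b * y + y * b) * x) * v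
          = v * (x * b) * y * v + v * x * y * (b * v) - (v * b) * y * x * v - v * y * (b * x) * v := by noncomm_ring
      rw [e, hbv, hvb] at hv
      simp only [mul_zero, zero_mul, add_zero, sub_zero] at hv
      have ht := congrArg Matrix.trace hv
      rw [trace_sub, Matrix.trace_mul_comm _ v, Matrix.trace_mul_comm _ v] at ht
      simp only [← mul_assoc, hvv] at ht
      have e1 := tr_cyc3 y x b
      have e2 : (x * y * b).trace = (b * x * y).trace := by rw [Matrix.trace_mul_comm, mul_assoc]
      rw [sub_mul, trace_sub, e1, e2, hxb, hbx]
      rw [tr_cyc3 (b * x) v y]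
      simp only [← mul_assoc] at *
      simp only [trace_zero] at ht
      linear_combination ht
  intro x hx
  have : x - u * x * u ∈ J := by
    refine ⟨O.sub_mem hx (h.u2 hu hx), ?_⟩
    have e : u * (x - u * x * u) * u = u * x * u - (u * u) * x * (u * u) := by noncomm_ring
    rw [e, huu, sub_self]
  rw [hJ, Submodule.mem_bot, sub_eq_zero] at this
  constructor
  · rw [this, ← mul_assoc, ← mul_assoc, huu]
  · rw [this, mul_assoc, huu]
end Sup
end SJ

open Matrix
set_option linter.unusedSectionVars false
set_option linter.unusedSimpArgs false
namespace SJ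
section Ty
variable {F : Type*} [Field F] {ι : Type*} [Fintype ι] [DecidableEq ι]

def evs (s : Matrix ι ι F) : Submodule F (Matrix ι ι F) where
  carrier := {x | s * x = x * s}
  zero_mem' := by simp
  add_mem' := by
    intro a b ha hb
    simp only [Set.mem_ofPred_eq] at *
    rw [mul_add, ha, hb, add_mul]
  smul_mem' := by
    intro r a ha
    simp only [Set.mem_ofPred_eq] at *
    rw [mul_smul_comm, ha, smul_mul_assoc]

def ods (s : Matrix ι ι F) : Submodule F (Matrix ι ι F) where
  carrier := {x | s * x = - (x * s)}
  zero_mem' := by simp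
  add_mem' := by
    intro a b ha hb
    simp only [Set.mem_ofPred_eq] at *
    rw [mul_add, ha, hb, add_mul, neg_add]
  smul_mem' := by
    intro r a ha
    simp only [Set.mem_ofPred_eq] at *
    rw [mul_smul_comm, ha, smul_mul_assoc, smul_neg]

def rads (s : Matrix ι ι F) (E : Submodule F (Matrix ι ι F)) : Submodule F (Matrix ι ι F) where
  carrier := {n | n ∈ E ∧ ∀ b ∈ E, (s * (n * b)).trace = 0}
  zero_mem' := ⟨E.zero_mem, by simp⟩
  add_mem' := by
    rintro a b ⟨ha, ha'⟩ ⟨hb, hb'⟩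
    refine ⟨E.add_mem ha hb, fun c hc => ?_⟩
    rw [add_mul, mul_add, trace_add, ha' c hc, hb' c hc, add_zero]
  smul_mem' := by
    rintro r a ⟨ha, ha'⟩
    refine ⟨E.smul_mem r ha, fun c hc => ?_⟩
    rw [smul_mul_assoc, mul_smul_comm, trace_smul, ha' c hc, smul_zero]

theorem cycE {s a : Matrix ι ι F} (h : s * a = a * s) (c : Matrix ι ι F) :
    (s * (a * c)).trace = (s * (c * a)).trace := by
  rw [← mul_assoc, h, tr_cyc3, mul_assoc]
theorem cycO {s a : Matrix ι ι F} (h : s * a = - (a * s)) (c : Matrix ι ι F) :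
    (s * (a * c)).trace = - (s * (c * a)).trace := by
  rw [← mul_assoc, h, neg_mul, trace_neg, tr_cyc3, mul_assoc]

theorem dbl_zero [CharZero F] {a : Matrix ι ι F} (h : a + a = 0) : a = 0 := by
  rw [← two_smul F, smul_eq_zero] at h
  simpa using h

def NT (s : Matrix ι ι F) (E O : Submodule F (Matrix ι ι F)) : Prop :=
  (∀ a ∈ E, (∀ b ∈ E, (s * (a * b)).trace = 0) → a = 0) ∧
  (∀ a ∈ O, (∀ b ∈ O, (s * (a * b)).trace = 0) → a = 0)
def IT (s : Matrix ι ι F) (E O : Submodule F (Matrix ι ι F)) : Prop :=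
  (∀ a ∈ E, ∀ b ∈ E, (s * (a * b)).trace = 0) ∧
  (∀ a ∈ O, ∀ b ∈ O, (s * (a * b)).trace = 0)

variable [CharZero F] {s : Matrix ι ι F} {E O : Submodule F (Matrix ι ι F)}

theorem Sup.type (h : Sup s E O) : NT s E O ∨ IT s E O := by
  refine Or.elim (h.simple (rads s E) (rads s O) (fun x hx => hx.1) (fun x hx => hx.1) ?_ ?_ ?_ ?_) ?_ ?_
  · rintro a ha r ⟨hr, hr'⟩
    refine ⟨h.c1 a ha r hr, fun b hb => ?_⟩
    have h1 := hr' _ (h.c1 a ha b hb)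
    have h2 := cycE (h.ev a ha) (r * b)
    simp only [mul_add, add_mul, trace_add, mul_assoc] at *
    linear_combination h1 + h2
  · rintro x hx r ⟨hr, hr'⟩
    refine ⟨by rw [add_comm]; exact h.c2 r hr x hx, fun y hy => ?_⟩
    have h1 := hr' _ (h.c3 x hx y hy)
    have h2 := cycO (h.od x hx) (r * y)
    simp only [mul_add, add_mul, mul_sub, sub_mul, trace_add, trace_sub, mul_assoc] at *
    linear_combination h1 + h2
  · rintro a ha r ⟨hr, hr'⟩
    refine ⟨h.c2 a ha r hr, fun b hb => ?_⟩
    have h1 := hr' _ (h.c2 a ha b hb)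
    have h2 := cycE (h.ev a ha) (r * b)
    simp only [mul_add, add_mul, trace_add, mul_assoc] at *
    linear_combination h1 + h2
  · rintro x hx r ⟨hr, hr'⟩
    refine ⟨h.c3 x hx r hr, fun y hy => ?_⟩
    have h1 := hr' _ (h.c2 y hy x hx)
    have h2 := cycO (h.od x hx) (r * y)
    simp only [mul_add, add_mul, mul_sub, sub_mul, trace_add, trace_sub, mul_assoc] at *
    linear_combination h2 - h1
  · rintro ⟨h1, h2⟩
    left
    constructor
    · intro a ha hz
      have : a ∈ rads s E := ⟨ha, hz⟩
      rwa [h1, Submodule.mem_bot] at this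
    · intro a ha hz
      have : a ∈ rads s O := ⟨ha, hz⟩
      rwa [h2, Submodule.mem_bot] at this
  · rintro ⟨h1, h2⟩
    right
    constructor
    · intro a ha
      rw [← h1] at ha
      exact ha.2
    · intro a ha
      rw [← h2] at ha
      exact ha.2

theorem IT.str (h : Sup s E O) (hI : IT s E O) {a : Matrix ι ι F} (ha : a ∈ E) : (s * a).trace = 0 := by
  obtain ⟨u, hu, _, hE, _⟩ := h.unit
  have := hI.1 u hu a ha
  rwa [(hE a ha).1] at this

theorem not_both_IT [Nonempty ι] {E' O' : Submodule F (Matrix ι ι F)} (h : Sup s E O) (h' : Sup s E' O')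
    (hs : s ∈ E ⊔ E') (hI : IT s E O) (hI' : IT s E' O') : False := by
  obtain ⟨a, ha, b, hb, hab⟩ := Submodule.mem_sup.1 hs
  have h1 : (s * s).trace = 0 := by
    conv_lhs => rw [← hab, hab, ← hab, mul_add, hab]
    rw [trace_add, hI.str h ha, hI'.str h' hb, add_zero]
  rw [h.s2, trace_one] at h1
  exact Fintype.card_ne_zero (α := ι) (by exact_mod_cast h1)

theorem sandwich {P Q : Matrix ι ι F} (h : ∀ X, P * X * Q = 0) : P = 0 ∨ Q = 0 := by
  by_contra hc
  push Not at hc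
  obtain ⟨hP, hQ⟩ := hc
  obtain ⟨i, k, hik⟩ : ∃ i k, P i k ≠ 0 := by
    by_contra hh; push Not at hh; exact hP (by ext i j; exact hh i j)
  obtain ⟨l, j, hlj⟩ : ∃ i k, Q i k ≠ 0 := by
    by_contra hh; push Not at hh; exact hQ (by ext i j; exact hh i j)
  have := congrFun (congrFun (h (Matrix.single k l 1)) i) j
  rw [mul_assoc, Matrix.mul_apply, Finset.sum_eq_single k] at this
  · rw [Matrix.single_mul_apply_same] at this
    simp [hik, hlj] at this
  · intro b _ hb
    rw [Matrix.single_mul_apply_of_ne _ _ _ _ _ hb, mul_zero]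
  · simp

theorem orth_dim (K L : Submodule F (Matrix ι ι F)) (h : ∀ k ∈ K, ∀ y ∈ L, (k * y).trace = 0) :
    Module.finrank F K + Module.finrank F L ≤ Module.finrank F (Matrix ι ι F) := by
  let g : Matrix ι ι F →ₗ[F] Module.Dual F K := LinearMap.mk₂ F (fun y k => ((k : Matrix ι ι F) * y).trace)
    (by intros; simp [mul_add]) (by intros; simp)
    (by intros; simp [add_mul]) (by intros; simp)
  have hg : Function.Surjective g := by
    intro φ
    obtain ⟨ψ, hψ⟩ := LinearMap.exists_extend φ
    obtain ⟨q, _, hq⟩ := repr_tr (⊤ : Submodule F (Matrix ι ι F)) 1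
      (fun n _ hn => tr_zero n (fun b => by simpa using hn b trivial)) ψ
    refine ⟨q, ?_⟩
    ext k
    have := hq k trivial
    rw [one_mul, Matrix.trace_mul_comm] at this
    rw [← hψ]
    exact this
  have h1 := LinearMap.finrank_range_add_finrank_ker g
  rw [LinearMap.range_eq_top.2 hg, finrank_top, Subspace.dual_finrank_eq] at h1
  have h2 : L ≤ LinearMap.ker g := by
    intro y hy
    rw [LinearMap.mem_ker]
    ext k
    exact h k k.2 y hy
  have := Submodule.finrank_mono h2
  omega

theorem ev_od_compl (h2 : s * s = 1) : IsCompl (evs s) (ods s) := by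
  constructor
  · rw [Submodule.disjoint_def]
    intro x h1 h3
    have h1 : s * x = x * s := h1
    have h3 : s * x = - (x * s) := h3
    have h4 : s * x = 0 := by
      rw [← h1] at h3
      exact dbl_zero (by nth_rewrite 1 [h3]; simp)
    calc x = s * s * x := by rw [h2, one_mul]
      _ = 0 := by rw [mul_assoc, h4, mul_zero]
  · rw [codisjoint_iff, eq_top_iff]
    rintro x -
    have e : x = (2:F)⁻¹ • (x + s * x * s) + (2:F)⁻¹ • (x - s * x * s) := by
      rw [← smul_add, add_add_sub_cancel, ← two_smul F x, smul_smul, inv_mul_cancel₀ two_ne_zero, one_smul]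
    rw [e]
    refine Submodule.add_mem_sup (Submodule.smul_mem _ _ ?_) (Submodule.smul_mem _ _ ?_)
    · change s * (x + s * x * s) = (x + s * x * s) * s
      have e1 : s * (x + s * x * s) = s * x + (s * s) * x * s := by noncomm_ring
      have e2 : (x + s * x * s) * s = x * s + s * x * (s * s) := by noncomm_ring
      rw [e1, e2, h2]; simp [add_comm]
    · change s * (x - s * x * s) = -((x - s * x * s) * s)
      have e1 : s * (x - s * x * s) = s * x - (s * s) * x * s := by noncomm_ring
      have e2 : (x - s * x * s) * s = x * s - s * x * (s * s) := by noncomm_ring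
      rw [e1, e2, h2]; simp

theorem IT.dim (h : Sup s E O) (hI : IT s E O) :
    2 * Module.finrank F O ≤ Module.finrank F (ods s) := by
  have hc := ev_od_compl h.s2
  have h0 := Submodule.finrank_add_eq_of_isCompl hc
  let L := O.map (LinearMap.mulLeft F s)
  have hL : L ≤ ods s := by
    rintro _ ⟨x, hx, rfl⟩
    change s * (s * x) = -(s * x * s)
    rw [h.od x hx]; simp [← mul_assoc, h.od x hx]
  have hLd : Module.finrank F L = Module.finrank F O := by
    refine (LinearEquiv.finrank_eq (Submodule.equivMapOfInjective (LinearMap.mulLeft F s) ?_ O)).symm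
    intro x y hxy
    simp only [LinearMap.mulLeft_apply] at hxy
    calc x = s * s * x := by rw [h.s2, one_mul]
      _ = s * s * y := by rw [mul_assoc, hxy, mul_assoc]
      _ = y := by rw [h.s2, one_mul]
  have hdis : Disjoint (evs s) L := hc.disjoint.mono_right hL
  have h1 := Submodule.finrank_sup_add_finrank_inf_eq (evs s) L
  rw [hdis.eq_bot, finrank_bot] at h1
  have h3 := orth_dim (evs s ⊔ L) O (by
    intro k hk y hy
    obtain ⟨a, ha, b, ⟨x, hx, rfl⟩, rfl⟩ := Submodule.mem_sup.1 hk
    rw [add_mul, trace_add, LinearMap.mulLeft_apply, mul_assoc, hI.2 x hx y hy, add_zero]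
    apply h.tr_odd
    have ha : s * a = a * s := ha
    rw [← mul_assoc, ha, mul_assoc, h.od y hy, mul_neg, mul_assoc])
  omega
end Ty
end SJ

open Matrix
set_option linter.unusedSectionVars false
set_option linter.unusedSimpArgs false
namespace SJ
section Prim
variable {F : Type*} [Field F] {ι : Type*} [Fintype ι] [DecidableEq ι]

theorem corner_eig [IsAlgClosed F] (e a : Matrix ι ι F) (he : e * e = e) (hne : e ≠ 0) (hea : e * a = a)
    (hae : a * e = a) :
    ∃ μ : F, ∃ w : ι → F, w ≠ 0 ∧ e *ᵥ w = w ∧ a *ᵥ w = μ • w := by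
  let V := LinearMap.range e.mulVecLin
  have hinv : ∀ w ∈ V, a.mulVecLin w ∈ V := by
    intro w hw
    refine ⟨a *ᵥ w, ?_⟩
    simp only [Matrix.mulVecLin_apply, Matrix.mulVec_mulVec, hea]
  have hV : Nontrivial V := by
    rw [Submodule.nontrivial_iff_ne_bot]
    intro h
    have := rank_pos_of_ne e hne
    unfold Matrix.rank at this
    change LinearMap.range e.mulVecLin = ⊥ at h
    rw [h, finrank_bot] at this
    exact lt_irrefl _ this
  let g : Module.End F V := a.mulVecLin.restrict hinv
  obtain ⟨μ, hμ⟩ := Module.End.exists_eigenvalue g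
  obtain ⟨w, hw⟩ := hμ.exists_hasEigenvector
  refine ⟨μ, w, ?_, ?_, ?_⟩
  · intro h0; exact hw.2 (Subtype.ext h0)
  · obtain ⟨z, hz⟩ := w.2
    rw [← hz, Matrix.mulVecLin_apply, Matrix.mulVec_mulVec, he]
  · have := congrArg Subtype.val hw.apply_eq_smul
    exact this

variable [CharZero F] {s : Matrix ι ι F} {E O : Submodule F (Matrix ι ι F)}

theorem Sup.split [IsAlgClosed F] (h : Sup s E O) {e : Matrix ι ι F} (heE : e ∈ E) (he : e * e = e) (hne : e ≠ 0)
    (hnp : ¬ ∀ a ∈ E, ∃ c : F, e * a * e = c • e) :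
    ∃ f ∈ E, f * f = f ∧ e * f = f ∧ f * e = f ∧ f ≠ 0 ∧ f ≠ e := by
  by_contra hcon
  have hte : e.trace ≠ 0 := fun h0 => hne (idem_zero e he h0)
  -- every corner element is scalar plus nilpotent
  have key : ∀ a ∈ E, e * a = a → a * e = a → ∃ μ : F, IsNilpotent (a - μ • e) := by
    intro a ha h1 h2
    obtain ⟨μ, w, hw0, hew, haw⟩ := corner_eig e a he hne h1 h2
    refine ⟨μ, ?_⟩
    by_contra hnil
    obtain ⟨p, hp0, hpi⟩ := idem_exists _ hnil 1
    have hc : a - μ • e ∈ E := E.sub_mem ha (E.smul_mem μ heE)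
    have hc1 : e * (a - μ • e) = a - μ • e := by rw [mul_sub, h1, mul_smul_comm, he]
    have hc2 : (a - μ • e) * e = a - μ • e := by rw [sub_mul, h2, smul_mul_assoc, he]
    have hcw : (a - μ • e) *ᵥ w = 0 := by
      rw [Matrix.sub_mulVec, haw, Matrix.smul_mulVec, hew, sub_self]
    apply hcon
    refine ⟨_, h.aeval_mem hc p 0, hpi, ?_, ?_, hp0, ?_⟩
    · rw [mul_comm p, map_mul]; simp only [zero_add, pow_one, Polynomial.aeval_X]; rw [← mul_assoc, hc1]
    · rw [map_mul]; simp only [zero_add, pow_one, Polynomial.aeval_X]; rw [mul_assoc, hc2]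
    · intro hfe
      apply hw0
      rw [← hew, ← hfe, map_mul]; simp only [zero_add, pow_one, Polynomial.aeval_X]
      rw [← Matrix.mulVec_mulVec, hcw, Matrix.mulVec_zero]
  have key0 : ∀ a ∈ E, e * a = a → a * e = a → a.trace = 0 → IsNilpotent a := by
    intro a ha h1 h2 ht
    obtain ⟨μ, hμ⟩ := key a ha h1 h2
    have := tr_nil _ hμ
    rw [trace_sub, trace_smul, ht, zero_sub, neg_eq_zero, smul_eq_mul] at this
    have h0 : μ = 0 := by rcases mul_eq_zero.1 this with h | h; exacts [h, absurd h hte]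
    rwa [h0, zero_smul, sub_zero] at hμ
  have sq0 : ∀ a ∈ E, e * a = a → a * e = a → a.trace = 0 → (a * a).trace = 0 := by
    intro a ha h1 h2 ht
    apply tr_nil
    have := key0 a ha h1 h2 ht
    rw [← pow_two]; exact this.pow_of_pos two_ne_zero
  apply hnp
  intro a ha
  set c := (e * a * e).trace / e.trace with hc
  refine ⟨c, ?_⟩
  set n := e * a * e - c • e with hn
  have hnE : n ∈ E := E.sub_mem (h.u1 heE ha) (E.smul_mem c heE)
  have hn1 : e * n = n := by
    rw [hn, mul_sub, mul_smul_comm, he, ← mul_assoc, ← mul_assoc, he]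
  have hn2 : n * e = n := by
    rw [hn, sub_mul, smul_mul_assoc, he, mul_assoc, he]
  have hnt : n.trace = 0 := by
    rw [hn, trace_sub, trace_smul, hc, smul_eq_mul, div_mul_cancel₀ _ hte, sub_self]
  have : n = 0 := by
    apply h.SS n hnE
    intro b hb
    set d := (e * b * e).trace / e.trace with hd
    set k := e * b * e - d • e with hk
    have hkE : k ∈ E := E.sub_mem (h.u1 heE hb) (E.smul_mem d heE)
    have hk1 : e * k = k := by
      rw [hk, mul_sub, mul_smul_comm, he, ← mul_assoc, ← mul_assoc, he]
    have hk2 : k * e = k := by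
      rw [hk, sub_mul, smul_mul_assoc, he, mul_assoc, he]
    have hkt : k.trace = 0 := by
      rw [hk, trace_sub, trace_smul, hd, smul_eq_mul, div_mul_cancel₀ _ hte, sub_self]
    have e1 : (n * b).trace = (n * (e * b * e)).trace := by
      conv_lhs => rw [← hn1, ← hn2]
      rw [← mul_assoc, mul_assoc, mul_assoc, Matrix.trace_mul_comm]
      simp only [mul_assoc]
    have e2 : e * b * e = k + d • e := by rw [hk]; simp
    rw [e1, e2, mul_add, mul_smul_comm, hn2, trace_add, trace_smul, hnt, smul_zero, add_zero]
    have q := sq0 (n + k) (E.add_mem hnE hkE) (by rw [mul_add, hn1, hk1]) (by rw [add_mul, hn2, hk2])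
      (by rw [trace_add, hnt, hkt, add_zero])
    have q1 := sq0 n hnE hn1 hn2 hnt
    have q2 := sq0 k hkE hk1 hk2 hkt
    have q3 := Matrix.trace_mul_comm k n
    simp only [mul_add, add_mul, trace_add] at q
    have : (2:F) * (n * k).trace = 0 := by linear_combination q - q1 - q2 - q3
    simpa using this
  rw [← sub_eq_zero]; exact this

theorem Sup.prims [IsAlgClosed F] (h : Sup s E O) : ∀ r : ℕ, ∀ e ∈ E, e * e = e → e.rank ≤ r →
    ∃ T : Finset (Matrix ι ι F), (∀ f ∈ T, f ∈ E ∧ f ≠ 0 ∧ f * f = f ∧ ∀ a ∈ E, ∃ c : F, f * a * f = c • f) ∧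
      (∀ f ∈ T, ∀ g ∈ T, f ≠ g → f * g = 0) ∧ ∑ f ∈ T, f = e := by
  classical
  intro r
  induction r with
  | zero =>
    intro e heE he hr
    refine ⟨∅, by simp, by simp, ?_⟩
    by_contra hne
    have := rank_pos_of_ne e (fun h => hne (by simp [h]))
    omega
  | succ r ih =>
    intro e heE he hr
    by_cases hne : e = 0
    · exact ⟨∅, by simp, by simp, by simp [hne]⟩
    by_cases hp : ∀ a ∈ E, ∃ c : F, e * a * e = c • e
    · refine ⟨{e}, ?_, ?_, by simp⟩
      · intro f hf; rw [Finset.mem_singleton] at hf; subst hf; exact ⟨heE, hne, he, hp⟩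
      · intro f hf g hg hfg
        rw [Finset.mem_singleton] at hf hg; exact absurd (hf.trans hg.symm) hfg
    · obtain ⟨f, hfE, hff, hef, hfe, hf0, hfne⟩ := h.split heE he hne hp
      have hg : (e - f) * (e - f) = e - f := by
        rw [sub_mul, mul_sub, mul_sub, he, hef, hfe, hff]; simp
      have hgE : e - f ∈ E := E.sub_mem heE hfE
      have hfg : f * (e - f) = 0 := by rw [mul_sub, hfe, hff, sub_self]
      have hgf : (e - f) * f = 0 := by rw [sub_mul, hef, hff, sub_self]
      have hr1 : (f.rank : F) + ((e - f).rank : F) = e.rank := by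
        rw [← tr_idem f hff, ← tr_idem _ hg, ← tr_idem e he, trace_sub]; ring
      have hr2 : f.rank + (e - f).rank = e.rank := by exact_mod_cast hr1
      have p1 := rank_pos_of_ne f hf0
      have p2 := rank_pos_of_ne (e - f) (sub_ne_zero.2 (Ne.symm hfne))
      obtain ⟨T1, a1, b1, c1⟩ := ih f hfE hff (by omega)
      obtain ⟨T2, a2, b2, c2⟩ := ih (e - f) hgE hg (by omega)
      have abs : ∀ (T : Finset (Matrix ι ι F)) (f : Matrix ι ι F), (∀ f ∈ T, f ∈ E ∧ f ≠ 0 ∧ f * f = f ∧ ∀ a ∈ E, ∃ c : F, f * a * f = c • f) →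
          (∀ f ∈ T, ∀ g ∈ T, f ≠ g → f * g = 0) → ∑ f ∈ T, f = f → ∀ x ∈ T, x * f = x ∧ f * x = x := by
        intro T f ha hb hc x hx
        constructor
        · rw [← hc, Finset.mul_sum, Finset.sum_eq_single x, (ha x hx).2.2.1]
          · intro y hy hyx; exact hb x hx y hy (Ne.symm hyx)
          · intro hn; exact absurd hx hn
        · rw [← hc, Finset.sum_mul, Finset.sum_eq_single x, (ha x hx).2.2.1]
          · intro y hy hyx; exact hb y hy x hx hyx
          · intro hn; exact absurd hx hn
      have o1 : ∀ x ∈ T1, ∀ y ∈ T2, x * y = 0 := by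
        intro x hx y hy
        rw [← (abs T1 f a1 b1 c1 x hx).1, ← (abs T2 _ a2 b2 c2 y hy).2, mul_assoc, ← mul_assoc f, hfg]; simp
      have o2 : ∀ x ∈ T1, ∀ y ∈ T2, y * x = 0 := by
        intro x hx y hy
        rw [← (abs T1 f a1 b1 c1 x hx).2, ← (abs T2 _ a2 b2 c2 y hy).1, mul_assoc, ← mul_assoc (e - f), hgf]; simp
      refine ⟨T1 ∪ T2, ?_, ?_, ?_⟩
      · intro x hx
        rcases Finset.mem_union.1 hx with hx | hx
        exacts [a1 x hx, a2 x hx]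
      · intro x hx y hy hxy
        rcases Finset.mem_union.1 hx with hx | hx <;> rcases Finset.mem_union.1 hy with hy | hy
        · exact b1 x hx y hy hxy
        · exact o1 x hx y hy
        · exact o2 y hy x hx
        · exact b2 x hx y hy hxy
      · rw [Finset.sum_union, c1, c2]; simp
        rw [Finset.disjoint_left]
        intro x hx hx'
        have := o1 x hx x hx'
        rw [(a1 x hx).2.2.1] at this
        exact (a1 x hx).2.1 this

/-- complete system of primitive idempotents -/
structure PI (E : Submodule F (Matrix ι ι F)) {κ : Type*} [Fintype κ] (ε : κ → Matrix ι ι F) : Prop where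
  mem : ∀ i, ε i ∈ E
  ne : ∀ i, ε i ≠ 0
  idem : ∀ i, ε i * ε i = ε i
  orth : ∀ i j, i ≠ j → ε i * ε j = 0
  sum : ∑ i, ε i = 1
  prim : ∀ i, ∀ a ∈ E, ∃ c : F, ε i * a * ε i = c • ε i

theorem Sup.exists_PI [IsAlgClosed F] (h : Sup s E O) (h1 : (1 : Matrix ι ι F) ∈ E) :
    ∃ (k : ℕ) (ε : Fin k → Matrix ι ι F), PI E ε := by
  obtain ⟨T, a, b, c⟩ := h.prims (Matrix.rank (1 : Matrix ι ι F)) 1 h1 (one_mul 1) le_rfl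
  let g := T.equivFin.symm
  refine ⟨T.card, fun i => (g i : Matrix ι ι F), ?_, ?_, ?_, ?_, ?_, ?_⟩
  · exact fun i => (a _ (g i).2).1
  · exact fun i => (a _ (g i).2).2.1
  · exact fun i => (a _ (g i).2).2.2.1
  · intro i j hij
    apply b _ (g i).2 _ (g j).2
    intro h'
    exact hij (g.injective (Subtype.ext h'))
  · rw [← c, ← Finset.sum_coe_sort T]
    exact Equiv.sum_comp g (fun x : T => (x : Matrix ι ι F))
  · exact fun i => (a _ (g i).2).2.2.2
end Prim
end SJ

open Matrix
set_option linter.unusedSectionVars false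
set_option linter.unusedSimpArgs false
set_option linter.unusedVariables false
namespace SJ
section Str
variable {F : Type*} [Field F] {ι : Type*} [Fintype ι] [DecidableEq ι]
variable [CharZero F] {s : Matrix ι ι F} {E O : Submodule F (Matrix ι ι F)}
variable {κ : Type*} [Fintype κ] [DecidableEq κ] {ε : κ → Matrix ι ι F}

def cut (ε : κ → Matrix ι ι F) (i j : κ) (x : Matrix ι ι F) : Matrix ι ι F := ε i * x * ε j + ε j * x * ε i
def Off (ε : κ → Matrix ι ι F) (i j : κ) (x : Matrix ι ι F) : Prop :=
  ε i * x = x * ε j ∧ ε j * x = x * ε i ∧ ε i * x + ε j * x = x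

theorem cut_symm (i j : κ) (x : Matrix ι ι F) : cut ε i j x = cut ε j i x := add_comm _ _
theorem Off.symm {i j : κ} {x : Matrix ι ι F} (h : Off ε i j x) : Off ε j i x :=
  ⟨h.2.1, h.1, by rw [add_comm]; exact h.2.2⟩

theorem off_cut (hP : PI E ε) {i j : κ} (hij : i ≠ j) (x : Matrix ι ι F) : Off ε i j (cut ε i j x) := by
  have h1 := hP.idem i
  have h2 := hP.idem j
  have h3 := hP.orth i j hij
  have h4 := hP.orth j i hij.symm
  unfold Off cut
  simp only [mul_add, add_mul, ← mul_assoc, h1, h2, h3, h4, zero_mul, add_zero, zero_add]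
  simp only [mul_assoc, h1, h2, h3, h4, mul_zero, add_zero, zero_add, and_self]

theorem Off.cut_eq (hP : PI E ε) {i j : κ} (hij : i ≠ j) {x : Matrix ι ι F} (h : Off ε i j x) :
    cut ε i j x = x := by
  unfold cut
  rw [mul_assoc, ← h.1, mul_assoc, ← h.2.1, ← mul_assoc, ← mul_assoc, hP.idem, hP.idem, h.2.2]

theorem Off.r {i j : κ} {x : Matrix ι ι F} (h : Off ε i j x) : x * ε i + x * ε j = x := by
  rw [← h.1, ← h.2.1, add_comm]; exact h.2.2

theorem Off.kill (hP : PI E ε) {i j k : κ} {x : Matrix ι ι F} (h : Off ε i j x) (hki : k ≠ i) (hkj : k ≠ j) :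
    ε k * x = 0 ∧ x * ε k = 0 := by
  constructor
  · rw [← h.2.2, mul_add, ← mul_assoc, ← mul_assoc, hP.orth k i hki, hP.orth k j hkj]; simp
  · rw [← h.r, add_mul, mul_assoc, mul_assoc, hP.orth i k hki.symm, hP.orth j k hkj.symm]; simp

theorem Off.add {i j : κ} {x y : Matrix ι ι F} (h : Off ε i j x) (h' : Off ε i j y) : Off ε i j (x + y) := by
  refine ⟨?_, ?_, ?_⟩
  · rw [mul_add, h.1, h'.1, add_mul]
  · rw [mul_add, h.2.1, h'.2.1, add_mul]
  · conv_rhs => rw [← h.2.2, ← h'.2.2]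
    noncomm_ring

theorem cut_memE (h : Sup s E O) (hP : PI E ε) (i j : κ) {x : Matrix ι ι F} (hx : x ∈ E) : cut ε i j x ∈ E :=
  h.U1 (hP.mem i) (hP.mem j) hx
theorem cut_memO (h : Sup s E O) (hP : PI E ε) (i j : κ) {x : Matrix ι ι F} (hx : x ∈ O) : cut ε i j x ∈ O :=
  h.U2 (hP.mem i) (hP.mem j) hx

theorem PI.tr_ne (hP : PI E ε) (i : κ) : (ε i).trace ≠ 0 := fun h0 => hP.ne i (idem_zero _ (hP.idem i) h0)
theorem PI.tr_add_ne (hP : PI E ε) (i j : κ) : (ε i).trace + (ε j).trace ≠ 0 := by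
  rw [tr_idem _ (hP.idem i), tr_idem _ (hP.idem j)]
  have := rank_pos_of_ne _ (hP.ne i)
  norm_cast
  omega

theorem off_sc (hP : PI E ε) {i j : κ} {z : Matrix ι ι F} (hz : z ∈ E)
    (h1 : ε i * z = z * ε i) (h2 : ε j * z = z * ε j) (h3 : ε i * z + ε j * z = z) :
    ∃ α β : F, z = α • ε i + β • ε j ∧ ε i * z = α • ε i ∧ ε j * z = β • ε j := by
  obtain ⟨α, hα⟩ := hP.prim i z hz
  obtain ⟨β, hβ⟩ := hP.prim j z hz
  rw [mul_assoc, ← h1, ← mul_assoc, hP.idem] at hα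
  rw [mul_assoc, ← h2, ← mul_assoc, hP.idem] at hβ
  exact ⟨α, β, by rw [← hα, ← hβ, h3], hα, hβ⟩

theorem off_br (h : Sup s E O) (hP : PI E ε) {i j : κ} {x y : Matrix ι ι F} (hx : x ∈ O) (hy : y ∈ O)
    (ox : Off ε i j x) (oy : Off ε i j y) : ∃ α β : F, x * y - y * x = α • ε i + β • ε j ∧
      α * (ε i).trace = - (β * (ε j).trace) ∧ α * (s * ε i).trace = β * (s * ε j).trace := by
  have e1 : ∀ x y : Matrix ι ι F, Off ε i j x → Off ε i j y → ε i * (x * y) = x * y * ε i := by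
    intro x y ox oy
    rw [← mul_assoc, ox.1, mul_assoc, oy.2.1, mul_assoc]
  have e2 : ∀ x y : Matrix ι ι F, Off ε i j x → Off ε i j y → ε j * (x * y) = x * y * ε j := by
    intro x y ox oy
    rw [← mul_assoc, ox.2.1, mul_assoc, oy.1, mul_assoc]
  have e3 : ∀ x y : Matrix ι ι F, Off ε i j x → ε i * (x * y) + ε j * (x * y) = x * y := by
    intro x y ox
    rw [← mul_assoc, ← mul_assoc, ← add_mul, ox.2.2]
  obtain ⟨α, β, hz, hα, hβ⟩ := off_sc hP (h.c3 x hx y hy) (i := i) (j := j)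
    (by rw [mul_sub, e1 x y ox oy, e1 y x oy ox, sub_mul])
    (by rw [mul_sub, e2 x y ox oy, e2 y x oy ox, sub_mul])
    (by rw [mul_sub, mul_sub, ← e3 x y ox, ← e3 y x oy]; simp only [e3 x y ox, e3 y x oy]
        rw [sub_add_sub_comm, e3 x y ox, e3 y x oy])
  refine ⟨α, β, hz, ?_, ?_⟩
  · have := congrArg Matrix.trace hz
    rw [trace_sub, Matrix.trace_mul_comm, sub_self, trace_add, trace_smul, trace_smul] at this
    simp only [smul_eq_mul] at this
    linear_combination -this
  · have t1 := congrArg (fun m => (s * m).trace) hα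
    have t2 := congrArg (fun m => (s * m).trace) hβ
    simp only [mul_sub, trace_sub, mul_smul_comm, trace_smul, smul_eq_mul] at t1 t2
    have c1 := cycO (h.od x hx) (ε j * y)
    have c2 := cycO (h.od y hy) (ε j * x)
    rw [← mul_assoc x (ε j) y, ← ox.1] at c1
    rw [← mul_assoc y (ε j) x, ← oy.1] at c2
    simp only [mul_assoc] at *
    linear_combination c1 - c2 - t1 + t2

theorem off_tr (h : Sup s E O) (hP : PI E ε) {i j : κ} {x : Matrix ι ι F}
    (ox : Off ε i j x) (y : Matrix ι ι F) : (s * (x * cut ε i j y)).trace = (s * (x * y)).trace := by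
  have c1 := cycE (h.ev _ (hP.mem j)) (x * ε i * y)
  have c2 := cycE (h.ev _ (hP.mem i)) (x * ε j * y)
  rw [← ox.2.1] at c1
  rw [← ox.1] at c2
  have e : s * (x * y) = s * (ε i * x * y) + s * (ε j * x * y) := by
    rw [← mul_add, ← add_mul, ox.2.2]
  unfold cut
  rw [e, trace_add, mul_add, mul_add, trace_add]
  have i1 := hP.idem i
  have i2 := hP.idem j
  simp only [← mul_assoc] at *
  rw [mul_assoc s (ε j) (ε j), i2, mul_assoc s, ox.2.1] at c1
  rw [mul_assoc s (ε i) (ε i), i1, mul_assoc s, ox.1] at c2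
  rw [mul_assoc s (ε i) x, ox.1, mul_assoc s (ε j) x, ox.2.1]
  simp only [← mul_assoc] at *
  rw [c1, c2, add_comm]

theorem off_nd (h : Sup s E O) (hP : PI E ε) (hN : NT s E O) {i j : κ} (hij : i ≠ j) {x : Matrix ι ι F}
    (hx : x ∈ O) (ox : Off ε i j x) (hx0 : x ≠ 0) :
    ∃ y ∈ O, Off ε i j y ∧ ∃ α β : F, x * y - y * x = α • ε i + β • ε j ∧
      α * (ε i).trace = - (β * (ε j).trace) ∧ α * (s * ε i).trace = β * (s * ε j).trace ∧ α ≠ 0 ∧ β ≠ 0 := by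
  have : ∃ y ∈ O, (s * (x * y)).trace ≠ 0 := by
    by_contra hc
    push Not at hc
    exact hx0 (hN.2 x hx hc)
  obtain ⟨y, hy, hxy⟩ := this
  rw [← off_tr h hP ox] at hxy
  have hy' := cut_memO h hP i j hy
  have oy := off_cut hP hij y
  generalize cut ε i j y = z at *
  obtain ⟨α, β, h1, h2, h3⟩ := off_br h hP hx hy' ox oy
  have hri := hP.tr_ne i
  have hrj := hP.tr_ne j
  have hnb : ¬ (α = 0 ∧ β = 0) := by
    rintro ⟨rfl, rfl⟩
    apply hxy
    have c := cycO (h.od x hx) z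
    simp only [zero_smul, add_zero] at h1
    rw [sub_eq_zero] at h1
    rw [← h1] at c
    have : (2:F) * (s * (x * z)).trace = 0 := by linear_combination c
    simpa using this
  refine ⟨z, hy', oy, α, β, h1, h2, h3, ?_, ?_⟩
  · rintro rfl
    apply hnb
    refine ⟨rfl, ?_⟩
    rw [zero_mul, zero_eq_neg] at h2
    rcases mul_eq_zero.1 h2 with h | h
    exacts [h, absurd h hrj]
  · rintro rfl
    apply hnb
    refine ⟨?_, rfl⟩
    rw [zero_mul, neg_zero] at h2
    rcases mul_eq_zero.1 h2 with h | h
    exacts [h, absurd h hri]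

theorem diag_zero (h : Sup s E O) (hP : PI E ε) (hN : NT s E O) (i : κ) {x : Matrix ι ι F} (hx : x ∈ O) :
    ε i * x * ε i = 0 := by
  have hx' := h.u2 (hP.mem i) hx
  have i1 := hP.idem i
  apply hN.2 _ hx'
  intro y hy
  have hy' := h.u2 (hP.mem i) hy
  obtain ⟨c, hc⟩ := hP.prim i _ (h.c3 _ hx' _ hy')
  have e1 : ε i * (ε i * x * ε i) = ε i * x * ε i := by rw [← mul_assoc, ← mul_assoc, i1]
  have e2 : (ε i * x * ε i) * ε i = ε i * x * ε i := by rw [mul_assoc, i1]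
  have e3 : ε i * (ε i * y * ε i) = ε i * y * ε i := by rw [← mul_assoc, ← mul_assoc, i1]
  have e4 : (ε i * y * ε i) * ε i = ε i * y * ε i := by rw [mul_assoc, i1]
  have cc := cycE (h.ev _ (hP.mem i)) ((ε i * x * ε i) * (ε i * y))
  have e5 : (s * ((ε i * x * ε i) * y)).trace = (s * ((ε i * x * ε i) * (ε i * y * ε i))).trace := by
    rw [← mul_assoc (ε i) (ε i * x * ε i), e1, ← mul_assoc _ (ε i) y, e2] at cc
    rw [cc]
    conv_rhs => rw [← mul_assoc _ (ε i * y) (ε i), ← mul_assoc _ (ε i) y, e2]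
  rw [e5]
  generalize ε i * x * ε i = a at *
  generalize ε i * y * ε i = b at *
  have hc' : a * b - b * a = c • ε i := by
    rw [← hc, mul_sub, sub_mul, ← mul_assoc, e1, mul_assoc, e4, ← mul_assoc, e3, mul_assoc, e2]
  have ht := congrArg Matrix.trace hc'
  rw [trace_sub, Matrix.trace_mul_comm, sub_self, trace_smul, smul_eq_mul] at ht
  have c0 : c = 0 := by
    rcases mul_eq_zero.1 ht.symm with h | h
    exacts [h, absurd h (hP.tr_ne i)]
  rw [c0, zero_smul, sub_eq_zero] at hc'
  have := cycO (h.od a hx') b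
  rw [← hc'] at this
  have : (2:F) * (s * (a * b)).trace = 0 := by linear_combination this
  simpa using this

theorem sum_all (hP : PI E ε) (x : Matrix ι ι F) : x = ∑ i, ∑ j, ε i * x * ε j := by
  simp only [← Finset.mul_sum, hP.sum, mul_one, ← Finset.sum_mul, one_mul]

/-- at most two-dimensional -/
theorem off_span (h : Sup s E O) (hP : PI E ε) (hN : NT s E O) {i j : κ} (hij : i ≠ j) :
    ∃ a b : Matrix ι ι F, ∀ x ∈ O, Off ε i j x → x ∈ Submodule.span F {a, b} := by
  by_cases hz : ∀ x ∈ O, Off ε i j x → x = 0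
  · exact ⟨0, 0, fun x hx ox => by rw [hz x hx ox]; exact Submodule.zero_mem _⟩
  push Not at hz
  obtain ⟨a, ha, oa, ha0⟩ := hz
  obtain ⟨b, hb, ob, α, β, h1, h2, -, h4, -⟩ := off_nd h hP hN hij ha oa ha0
  refine ⟨a, b, fun x hx ox => ?_⟩
  obtain ⟨α', β', h1', h2', -⟩ := off_br h hP hb hx ob ox
  obtain ⟨α'', β'', h1'', h2'', -⟩ := off_br h hP hx ha ox oa
  have hri := hP.tr_ne i
  have hrj := hP.tr_ne j
  have hrr := hP.tr_add_ne i j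
  set ri := (ε i).trace
  set rj := (ε j).trace
  have jac : (a * b - b * a) * x - x * (a * b - b * a) + ((b * x - x * b) * a - a * (b * x - x * b))
      + ((x * a - a * x) * b - b * (x * a - a * x)) = 0 := by noncomm_ring
  have key : ∀ (α β : F) (c : Matrix ι ι F), α * ri = - (β * rj) → Off ε i j c →
      rj • ((α • ε i + β • ε j) * c - c * (α • ε i + β • ε j)) = (α * (ri + rj)) • (ε i * c - c * ε i) := by
    intro α β c hαβ oc
    have e1 : (α • ε i + β • ε j) * c - c * (α • ε i + β • ε j) = (α - β) • (ε i * c - c * ε i) := by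
      simp only [add_mul, mul_add, smul_mul_assoc, mul_smul_comm, ← oc.1, oc.2.1]
      module
    rw [e1, smul_smul]
    congr 1
    linear_combination -hαβ
  have k1 := key α β x h2 ox
  have k2 := key α' β' a h2' oa
  have k3 := key α'' β'' b h2'' ob
  rw [h1, h1', h1''] at jac
  have jac2 := congrArg (fun m => rj • m) jac
  simp only [smul_add, smul_zero, k1, k2, k3] at jac2
  have jac3 : (ri + rj) • (ε i * (α • x + α' • a + α'' • b) - (α • x + α' • a + α'' • b) * ε i) = 0 := by
    rw [← jac2]
    simp only [mul_add, add_mul, mul_smul_comm, smul_mul_assoc]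
    module
  rw [smul_eq_zero] at jac3
  rcases jac3 with h0 | h0
  · exact absurd h0 hrr
  have osc : ∀ (c : F) (z : Matrix ι ι F), Off ε i j z → Off ε i j (c • z) := by
    intro c z hz
    exact ⟨by rw [mul_smul_comm, hz.1, smul_mul_assoc], by rw [mul_smul_comm, hz.2.1, smul_mul_assoc],
      by rw [mul_smul_comm, mul_smul_comm, ← smul_add, hz.2.2]⟩
  have oz := ((osc α x ox).add (osc α' a oa)).add (osc α'' b ob)
  generalize hzz : α • x + α' • a + α'' • b = z at *
  have hz1 : ε i * z = 0 := by
    have := congrArg (fun m => ε i * m) h0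
    simp only [mul_sub, mul_zero] at this
    rw [← mul_assoc, hP.idem, ← oz.2.1, ← mul_assoc, hP.orth i j hij, zero_mul, sub_zero] at this
    exact this
  have hz2 : z = 0 := by
    rw [hz1, zero_sub, neg_eq_zero] at h0
    rw [← oz.2.2, hz1, oz.2.1, h0, add_zero]
  rw [hz2] at hzz
  have hx' : x = α⁻¹ • (-(α' • a) - α'' • b) := by
    have : α • x = -(α' • a) - α'' • b := by
      rw [← sub_eq_zero, ← hzz]; abel
    rw [← this, smul_smul, inv_mul_cancel₀ h4, one_smul]
  rw [hx']
  have m1 : a ∈ Submodule.span F {a, b} := Submodule.subset_span (by simp)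
  have m2 : b ∈ Submodule.span F {a, b} := Submodule.subset_span (by simp)
  exact Submodule.smul_mem _ _ (Submodule.sub_mem _ (Submodule.neg_mem _ (Submodule.smul_mem _ _ m1)) (Submodule.smul_mem _ _ m2))

end Str
end SJ

open Matrix
set_option linter.unusedSectionVars false
set_option linter.unusedSimpArgs false
set_option linter.unusedVariables false
namespace SJ
section Str
variable {F : Type*} [Field F] {ι : Type*} [Fintype ι] [DecidableEq ι]
variable [CharZero F] {s : Matrix ι ι F} {E O : Submodule F (Matrix ι ι F)}
variable {κ : Type*} [Fintype κ] [DecidableEq κ] {ε : κ → Matrix ι ι F}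

def Edge (E : Submodule F (Matrix ι ι F)) (ε : κ → Matrix ι ι F) (i j : κ) : Prop :=
  i ≠ j ∧ ∃ x ∈ E, Off ε i j x ∧ x ≠ 0

theorem Edge.symm {i j : κ} (h : Edge E ε i j) : Edge E ε j i := by
  obtain ⟨h1, x, hx, ox, h0⟩ := h
  exact ⟨h1.symm, x, hx, ox.symm, h0⟩

theorem half_idem (t : F) (ht : t * t = 1) {s e : Matrix ι ι F} (s2 : s * s = 1) (he : e * e = e) (hc : s * e = e * s) :
    ∃ a : ℕ, (2:F)⁻¹ * (e.trace + t * (s * e).trace) = a := by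
  have hp : ((2:F)⁻¹ • (e + t • (s * e))) * ((2:F)⁻¹ • (e + t • (s * e))) = (2:F)⁻¹ • (e + t • (s * e)) := by
    have e1 : (s * e) * (s * e) = e := by
      rw [mul_assoc, ← mul_assoc e s e, ← hc, mul_assoc s e e, he, ← mul_assoc, s2, one_mul]
    have e2 : e * (s * e) = s * e := by rw [← mul_assoc, ← hc, mul_assoc, he]
    have e3 : (s * e) * e = s * e := by rw [mul_assoc, he]
    have h2 : (2:F) ≠ 0 := two_ne_zero
    simp only [smul_mul_assoc, mul_smul_comm, add_mul, mul_add, e1, e2, e3, he, smul_smul, smul_add, ht]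
    rw [show (2:F)⁻¹ * t * (2⁻¹ * t) = 4⁻¹ by rw [mul_mul_mul_comm, ht]; norm_num]
    have h4 : (2:F)⁻¹ = 4⁻¹ + 4⁻¹ := by norm_num
    rw [show (2:F)⁻¹ * 2⁻¹ = 4⁻¹ by norm_num, show (2:F)⁻¹ * (2⁻¹ * t) = 4⁻¹ * t by rw [← mul_assoc]; norm_num,
      show (2:F)⁻¹ * t * 2⁻¹ = 4⁻¹ * t by rw [mul_right_comm]; norm_num]
    rw [h4]
    module
  have := tr_idem _ hp
  rw [trace_smul, trace_add, trace_smul, smul_eq_mul, smul_eq_mul] at this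
  exact ⟨_, this⟩

theorem exists_ab (h : Sup s E O) (hP : PI E ε) : ∃ a b : κ → ℕ,
    (∀ i, (ε i).trace = (a i : F) + b i) ∧ (∀ i, (s * ε i).trace = (a i : F) - b i) ∧ ∀ i, 0 < a i + b i := by
  choose a ha using fun i => half_idem (1:F) (by norm_num) h.s2 (hP.idem i) (h.ev _ (hP.mem i))
  choose b hb using fun i => half_idem (-1:F) (by norm_num) h.s2 (hP.idem i) (h.ev _ (hP.mem i))
  have h2 : (2:F) ≠ 0 := two_ne_zero
  have h1 : ∀ i, (ε i).trace = (a i : F) + b i := by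
    intro i; rw [← ha, ← hb]; field_simp; ring
  refine ⟨a, b, h1, ?_, ?_⟩
  · intro i; rw [← ha, ← hb]; field_simp; ring
  · intro i
    have := hP.tr_ne i
    rw [h1] at this
    by_contra hc
    have : a i = 0 ∧ b i = 0 := by omega
    simp_all

theorem edge_ab (h : Sup s E O) (hP : PI E ε) (hN : NT s E O) {a b : κ → ℕ}
    (h1 : ∀ i, (ε i).trace = (a i : F) + b i) (h2 : ∀ i, (s * ε i).trace = (a i : F) - b i) {i j : κ}
    (e : Edge O ε i j) : (a i = 0 ↔ b j = 0) ∧ (b i = 0 ↔ a j = 0) ∧ a i * a j = b i * b j := by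
  obtain ⟨hij, x, hx, ox, hx0⟩ := e
  obtain ⟨y, hy, oy, α, β, -, t1, t2, hα, hβ⟩ := off_nd h hP hN hij hx ox hx0
  rw [h1, h1] at t1
  rw [h2, h2] at t2
  have c2 : (2:F) ≠ 0 := two_ne_zero
  have e1 : α * a i = - (β * b j) := by
    apply mul_left_cancel₀ c2; linear_combination t1 + t2
  have e2 : α * b i = - (β * a j) := by
    apply mul_left_cancel₀ c2; linear_combination t1 - t2
  refine ⟨?_, ?_, ?_⟩
  · constructor
    · intro hh; rw [hh] at e1; simpa [hβ] using e1
    · intro hh; rw [hh] at e1; simpa [hα] using e1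
  · constructor
    · intro hh; rw [hh] at e2; simpa [hβ] using e2
    · intro hh; rw [hh] at e2; simpa [hα] using e2
  · have : (α * β) * ((a i : F) * a j) = (α * β) * (b i * b j) := by linear_combination (β * a j) * e1 - (β * b j) * e2
    exact_mod_cast mul_left_cancel₀ (mul_ne_zero hα hβ) this

theorem off_mul (hP : PI E ε) {i j k : κ} (hik : i ≠ k) (hij : i ≠ j) (hkj : k ≠ j) {x y : Matrix ι ι F}
    (ox : Off ε i j x) (oy : Off ε j k y) :
    ε i * (x * y) = x * y ∧ x * y * ε k = x * y ∧ ε i * (y * x) = 0 ∧ ε k * (x * y) = 0 ∧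
     y * x * ε i = y * x ∧ ε k * (y * x) = y * x ∧ x * y * ε i = 0 ∧ y * x * ε k = 0 := by
  have a1 := (oy.kill hP hij hik).1
  have a2 := (oy.kill hP hij hik).2
  have a3 := (ox.kill hP hik.symm hkj).1
  have a4 := (ox.kill hP hik.symm hkj).2
  have b1 : ε i * (x * y) = x * y := by
    conv_rhs => rw [← ox.2.2]
    rw [add_mul, ox.2.1, mul_assoc x, a1, mul_zero, add_zero, mul_assoc]
  have b2 : x * y * ε k = x * y := by
    conv_rhs => rw [← oy.r]
    rw [mul_add, ← oy.2.1, ← mul_assoc x (ε k), a4, zero_mul, zero_add, ← mul_assoc]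
  have b3 : ε k * (y * x) = y * x := by
    conv_rhs => rw [← oy.2.2]
    rw [add_mul, oy.1, mul_assoc y (ε k), a3, mul_zero, zero_add, mul_assoc]
  have b4 : y * x * ε i = y * x := by
    conv_rhs => rw [← ox.r]
    rw [mul_add, ← ox.1, ← mul_assoc y (ε i), a2, zero_mul, add_zero, ← mul_assoc]
  refine ⟨b1, b2, ?_, ?_, b4, b3, ?_, ?_⟩
  · rw [← mul_assoc, a1, zero_mul]
  · rw [← mul_assoc, a3, zero_mul]
  · rw [mul_assoc, a2, mul_zero]
  · rw [mul_assoc, a4, mul_zero]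

theorem off_mul2 (hP : PI E ε) {i j k : κ} (hik : i ≠ k) (hij : i ≠ j) (hkj : k ≠ j) {x y : Matrix ι ι F}
    (ox : Off ε i j x) (oy : Off ε j k y) : Off ε i k (x * y + y * x) ∧ Off ε i k (x * y - y * x) := by
  obtain ⟨b1, b2, b3, b4, b5, b6, b7, b8⟩ := off_mul hP hik hij hkj ox oy
  unfold Off
  simp only [mul_add, mul_sub, add_mul, sub_mul, b1, b2, b3, b4, b5, b6, b7, b8]
  simp [sub_eq_add_neg]

theorem edge_path (h : Sup s E O) (hP : PI E ε) (hN : NT s E O) {i j k : κ} (hik : i ≠ k)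
    (e : Edge O ε i j) (e' : Edge O ε j k) : Edge E ε i k := by
  obtain ⟨hij, x, hx, ox, hx0⟩ := e
  obtain ⟨hjk, y, hy, oy, hy0⟩ := e'
  by_contra hc
  have key : ∀ w ∈ O, Off ε j k w → x * w = 0 ∧ w * x = 0 := by
    intro w hw ow
    have hz : x * w - w * x = 0 := by
      by_contra hz
      exact hc ⟨hik, _, h.c3 x hx w hw, (off_mul2 hP hik hij hjk.symm ox ow).2, hz⟩
    obtain ⟨b1, b2, b3, b4, b5, b6, b7, b8⟩ := off_mul hP hik hij hjk.symm ox ow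
    have h1 := congrArg (fun m => ε i * m) hz
    have h2 := congrArg (fun m => ε k * m) hz
    simp only [mul_sub, b1, b3, b4, b6, mul_zero, sub_zero, zero_sub, neg_eq_zero] at h1 h2
    exact ⟨h1, h2⟩
  obtain ⟨y', hy', oy', α, β, e1, -, -, hα, hβ⟩ := off_nd h hP hN hjk hy oy hy0
  have k1 := key y hy oy
  have k2 := key y' hy' oy'
  have a3 := (ox.kill hP hik.symm hjk.symm).1
  have a4 := (ox.kill hP hik.symm hjk.symm).2
  have f1 := congrArg (fun m => x * m) e1
  have f2 := congrArg (fun m => m * x) e1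
  simp only [mul_sub, sub_mul, mul_add, add_mul, mul_smul_comm, smul_mul_assoc, a3, a4, smul_zero, add_zero] at f1 f2
  rw [← mul_assoc, ← mul_assoc, k1.1, k2.1, zero_mul, zero_mul, sub_self, eq_comm, smul_eq_zero] at f1
  rw [mul_assoc, mul_assoc, k1.2, k2.2, mul_zero, mul_zero, sub_self, eq_comm, smul_eq_zero] at f2
  have f1 := f1.resolve_left hα
  have f2 := f2.resolve_left hα
  apply hx0
  rw [← ox.2.2, f2, ox.1, f1, add_zero]

theorem edgeE_sq (h : Sup s E O) (hP : PI E ε) {i k : κ} (e : Edge E ε i k) :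
    ∃ u ∈ E, Off ε i k u ∧ ∃ α : F, α ≠ 0 ∧ u * u = α • (ε i + ε k) := by
  obtain ⟨hik, x, hx, ox, hx0⟩ := e
  have tru : ∀ y : Matrix ι ι F, (x * cut ε i k y).trace = (x * y).trace := by
    intro y
    unfold cut
    have e1 : (x * (ε i * y * ε k)).trace = (ε k * x * ε i * y).trace := by
      rw [← mul_assoc, ← mul_assoc, Matrix.trace_mul_comm]; simp only [mul_assoc]
    have e2 : (x * (ε k * y * ε i)).trace = (ε i * x * ε k * y).trace := by
      rw [← mul_assoc, ← mul_assoc, Matrix.trace_mul_comm]; simp only [mul_assoc]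
    rw [mul_add, trace_add, e1, e2, ← trace_add, ← add_mul]
    have := ox.cut_eq hP hik
    unfold cut at this
    rw [add_comm (ε k * x * ε i), this]
  have hu : ∃ u ∈ E, Off ε i k u ∧ u * u ≠ 0 := by
    by_contra hc
    push Not at hc
    apply hx0
    apply h.SS x hx
    intro b hb
    rw [← tru]
    have m := cut_memE h hP i k hb
    have ob := off_cut hP hik b
    generalize cut ε i k b = y at *
    have q1 := hc _ hx ox
    have q2 := hc _ m ob
    have q3 := hc _ (E.add_mem hx m) (ox.add ob)
    have : x * y + y * x = 0 := by
      have : (x + y) * (x + y) = x * x + y * y + (x * y + y * x) := by noncomm_ring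
      rw [q1, q2, q3] at this; simpa using this.symm
    have := congrArg Matrix.trace this
    rw [trace_add, Matrix.trace_mul_comm y x, trace_zero] at this
    have : (2:F) * (x * y).trace = 0 := by linear_combination this
    simpa using this
  obtain ⟨u, hu, ou, hu0⟩ := hu
  refine ⟨u, hu, ou, ?_⟩
  obtain ⟨α, β, e1, -, -⟩ := off_sc hP (i := i) (j := k) (h.sq_mem hu)
    (by rw [← mul_assoc, ou.1, mul_assoc, ou.2.1, mul_assoc])
    (by rw [← mul_assoc, ou.2.1, mul_assoc, ou.1, mul_assoc])
    (by rw [← mul_assoc, ← mul_assoc, ← add_mul, ou.2.2])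
  have hab : α = β := by
    have c : u * (u * u) = (u * u) * u := (mul_assoc _ _ _).symm
    rw [e1] at c
    simp only [mul_add, add_mul, mul_smul_comm, smul_mul_assoc, ← ou.1, ← ou.2.1] at c
    have c' : (α - β) • (ε k * u - ε i * u) = 0 := by
      rw [smul_sub, sub_smul, sub_smul]
      rw [← sub_eq_zero] at c
      rw [← c]; module
    rcases smul_eq_zero.1 c' with c' | c'
    · exact sub_eq_zero.1 c'
    · exfalso
      have d := congrArg (fun m => ε k * m) c'
      simp only [mul_sub, ← mul_assoc, hP.idem, hP.orth k i hik.symm, zero_mul, sub_zero, mul_zero] at d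
      rw [d, zero_sub, neg_eq_zero] at c'
      apply hu0
      rw [← ou.2.2, d, c']; simp
  subst hab
  rw [← smul_add] at e1
  refine ⟨α, ?_, e1⟩
  rintro rfl
  exact hu0 (by rw [e1, zero_smul])

theorem edgeE_ab (h : Sup s E O) (hP : PI E ε) {a b : κ → ℕ}
    (h1 : ∀ i, (ε i).trace = (a i : F) + b i) (h2 : ∀ i, (s * ε i).trace = (a i : F) - b i) {i k : κ}
    (e : Edge E ε i k) : a i = a k ∧ b i = b k := by
  obtain ⟨u, hu, ou, α, hα, hq⟩ := edgeE_sq h hP e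
  have hik := e.1
  have e1 : ε i * (u * u) = α • ε i := by
    rw [hq, mul_smul_comm, mul_add, hP.idem, hP.orth i k hik, add_zero]
  have e2 : ε k * (u * u) = α • ε k := by
    rw [hq, mul_smul_comm, mul_add, hP.idem, hP.orth k i hik.symm, zero_add]
  have t1 : (ε i * (u * u)).trace = (ε k * (u * u)).trace := by
    rw [← mul_assoc, ou.1, Matrix.trace_mul_comm, ← mul_assoc, Matrix.trace_mul_comm]
  have t2 : (s * (ε i * (u * u))).trace = (s * (ε k * (u * u))).trace := by
    have := cycE (h.ev u hu) (ε k * u)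
    rw [← mul_assoc u, ← ou.1] at this
    simpa only [mul_assoc] using this
  rw [e1, e2] at t1 t2
  simp only [mul_smul_comm, trace_smul, smul_eq_mul] at t1 t2
  have t1 := mul_left_cancel₀ hα t1
  have t2 := mul_left_cancel₀ hα t2
  rw [h1, h1] at t1
  rw [h2, h2] at t2
  have c2 : (2:F) ≠ 0 := two_ne_zero
  have q1 : (a i : F) = a k := by apply mul_left_cancel₀ c2; linear_combination t1 + t2
  have q2 : (b i : F) = b k := by apply mul_left_cancel₀ c2; linear_combination t1 - t2
  exact ⟨by exact_mod_cast q1, by exact_mod_cast q2⟩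

theorem edgeE_move (h : Sup s E O) (hP : PI E ε) {i j k : κ} (hij : i ≠ j)
    (e : Edge E ε i k) (e' : Edge O ε k j) : Edge O ε i j := by
  obtain ⟨u, hu, ou, α, hα, hq⟩ := edgeE_sq h hP e
  have hik := e.1
  obtain ⟨hkj, x, hx, ox, hx0⟩ := e'
  refine ⟨hij, u * x + x * u, h.c2 u hu x hx, (off_mul2 hP hij hik hkj.symm ou ox).1, ?_⟩
  intro hz
  obtain ⟨b1, b2, b3, b4, b5, b6, b7, b8⟩ := off_mul hP hij hik hkj.symm ou ox
  have h1 := congrArg (fun m => ε i * m) hz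
  have h2 := congrArg (fun m => ε j * m) hz
  simp only [mul_add, b1, b3, b4, b6, mul_zero, add_zero, zero_add] at h1 h2
  have a3 := (ox.kill hP hik hij).1
  have a4 := (ox.kill hP hik hij).2
  have f1 : (u * u) * x = 0 := by rw [mul_assoc, h1, mul_zero]
  have f2 : x * (u * u) = 0 := by rw [← mul_assoc, h2, zero_mul]
  rw [hq, smul_mul_assoc, add_mul, a3, zero_add] at f1
  rw [hq, mul_smul_comm, mul_add, a4, zero_add] at f2
  have f1 := (smul_eq_zero.1 f1).resolve_left hα
  have f2 := (smul_eq_zero.1 f2).resolve_left hα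
  apply hx0
  rw [← ox.2.2, f1, ox.2.1, f2, add_zero]

theorem closed_univ (h : Sup s E O) (h1 : (1 : Matrix ι ι F) ∈ E) (hP : PI E ε) (Q : Finset κ) (hQ : Q.Nonempty)
    (hcE : ∀ i ∈ Q, ∀ j, Edge E ε i j → j ∈ Q) (hcO : ∀ i ∈ Q, ∀ j, Edge O ε i j → j ∈ Q) : ∀ i, i ∈ Q := by
  classical
  have mid : ∀ G : Submodule F (Matrix ι ι F), (∀ i j, ∀ x ∈ G, cut ε i j x ∈ G) → (∀ i ∈ Q, ∀ j, Edge G ε i j → j ∈ Q) →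
     ∀ x ∈ G, ∀ i ∈ Q, ∀ j, j ∉ Q → ε i * x * ε j = 0 ∧ ε j * x * ε i = 0 := by
    intro G hG hc x hx i hi j hj
    have hij : i ≠ j := by rintro rfl; exact hj hi
    have h0 : cut ε i j x = 0 := by
      by_contra h0
      exact hj (hc i hi j ⟨hij, _, hG i j x hx, off_cut hP hij x, h0⟩)
    have c1 := congrArg (fun m => ε i * m) h0
    have c2 := congrArg (fun m => ε j * m) h0
    simp only [cut, mul_add, ← mul_assoc, hP.idem, hP.orth i j hij, hP.orth j i hij.symm, zero_mul, add_zero, zero_add, mul_zero] at c1 c2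
    exact ⟨c1, c2⟩
  set e := ∑ i ∈ Q, ε i with he
  have hce : (1 : Matrix ι ι F) = e + ∑ i ∈ Qᶜ, ε i := by
    rw [he, Finset.sum_add_sum_compl, hP.sum]
  have comm : ∀ G : Submodule F (Matrix ι ι F), (∀ i j, ∀ x ∈ G, cut ε i j x ∈ G) → (∀ i ∈ Q, ∀ j, Edge G ε i j → j ∈ Q) →
     ∀ x ∈ G, e * x = x * e := by
    intro G hG hc x hx
    have m := mid G hG hc x hx
    have z1 : e * x * (∑ i ∈ Qᶜ, ε i) = 0 := by
      rw [he, Finset.sum_mul, Finset.sum_mul]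
      apply Finset.sum_eq_zero; intro i hi
      rw [Finset.mul_sum]
      apply Finset.sum_eq_zero; intro j hj
      exact (m i hi j (by simpa using hj)).1
    have z2 : (∑ i ∈ Qᶜ, ε i) * x * e = 0 := by
      rw [he, Finset.sum_mul, Finset.sum_mul]
      apply Finset.sum_eq_zero; intro j hj
      rw [Finset.mul_sum]
      apply Finset.sum_eq_zero; intro i hi
      exact (m i hi j (by simpa using hj)).2
    generalize (∑ i ∈ Qᶜ, ε i) = f at *
    calc e * x = e * x * (e + f) := by rw [← hce, mul_one]
      _ = (e + f) * x * e := by rw [mul_add, z1, add_mul, add_mul, z2]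
      _ = x * e := by rw [← hce, one_mul]
  have cE := comm E (fun i j x hx => cut_memE h hP i j hx) hcE
  have cO := comm O (fun i j x hx => cut_memO h hP i j hx) hcO
  have heE : e ∈ E := E.sum_mem fun i _ => hP.mem i
  have hei : ∀ i, ε i * e = if i ∈ Q then ε i else 0 := by
    intro i
    rw [he, Finset.mul_sum]
    split_ifs with hi
    · rw [Finset.sum_eq_single i, hP.idem]
      · intro j _ hj; exact hP.orth i j hj.symm
      · intro h; exact absurd hi h
    · apply Finset.sum_eq_zero
      intro j hj; exact hP.orth i j (by rintro rfl; exact hi hj)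
  have hee : e * e = e := by
    conv_lhs => rw [he, Finset.sum_mul]
    apply Finset.sum_congr rfl
    intro i hi; rw [hei, if_pos hi]
  let K : Submodule F (Matrix ι ι F) :=
    { carrier := {x | e * x = x}
      zero_mem' := by simp
      add_mem' := by intro a b ha hb; simp only [Set.mem_ofPred_eq] at *; rw [mul_add, ha, hb]
      smul_mem' := by intro c a ha; simp only [Set.mem_ofPred_eq] at *; rw [mul_smul_comm, ha] }
  have memK : ∀ x, x ∈ K ↔ e * x = x := fun x => Iff.rfl
  refine Or.elim (h.simple (E ⊓ K) (O ⊓ K) inf_le_left inf_le_left ?_ ?_ ?_ ?_) ?_ ?_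
  · rintro a ha b ⟨hb, hb'⟩
    refine ⟨h.c1 a ha b hb, ?_⟩
    replace hb' : e * b = b := hb'
    refine (memK _).2 ?_
    rw [mul_add, ← mul_assoc, cE a ha, mul_assoc, hb', ← mul_assoc, hb']
  · rintro a ha b ⟨hb, hb'⟩
    refine ⟨by rw [add_comm]; exact h.c2 b hb a ha, ?_⟩
    replace hb' : e * b = b := hb'
    refine (memK _).2 ?_
    rw [mul_add, ← mul_assoc, cO a ha, mul_assoc, hb', ← mul_assoc, hb']
  · rintro a ha b ⟨hb, hb'⟩
    refine ⟨h.c2 a ha b hb, ?_⟩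
    replace hb' : e * b = b := hb'
    refine (memK _).2 ?_
    rw [mul_add, ← mul_assoc, cE a ha, mul_assoc, hb', ← mul_assoc, hb']
  · rintro a ha b ⟨hb, hb'⟩
    refine ⟨h.c3 a ha b hb, ?_⟩
    replace hb' : e * b = b := hb'
    refine (memK _).2 ?_
    rw [mul_sub, ← mul_assoc, cO a ha, mul_assoc, hb', ← mul_assoc, hb']
  · rintro ⟨hI, -⟩
    exfalso
    have : e ∈ E ⊓ K := ⟨heE, hee⟩
    rw [hI, Submodule.mem_bot] at this
    obtain ⟨i, hi⟩ := hQ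
    have h' := hei i
    rw [this, if_pos hi, mul_zero] at h'
    exact hP.ne i h'.symm
  · rintro ⟨hI, -⟩ i
    have : (1 : Matrix ι ι F) ∈ E ⊓ K := by rw [hI]; exact h1
    have h2 : e * 1 = 1 := this.2
    rw [mul_one] at h2
    by_contra hi
    have h' := hei i
    rw [h2, if_neg hi, mul_one] at h'
    exact hP.ne i h'

theorem sep_dim (h : Sup s E O) (hP : PI E ε) (hN : NT s E O) (S : Finset (κ × κ)) (hS : ∀ p ∈ S, p.1 ≠ p.2)
    (hsep : ∀ x ∈ O, (∀ p ∈ S, cut ε p.1 p.2 x = 0) → x = 0) : Module.finrank F O ≤ 2 * S.card := by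
  classical
  choose a b hab using fun p : S => off_span h hP hN (hS p.1 p.2)
  let cl : κ → κ → Matrix ι ι F →ₗ[F] Matrix ι ι F := fun i j =>
    { toFun := cut ε i j
      map_add' := by intro x y; unfold cut; noncomm_ring
      map_smul' := by intro c x; simp only [cut, mul_smul_comm, smul_mul_assoc, smul_add, RingHom.id_apply] }
  let f : O →ₗ[F] ((p : S) → Submodule.span F (({a p, b p} : Finset (Matrix ι ι F)) : Set (Matrix ι ι F))) :=
    LinearMap.pi fun p => LinearMap.codRestrict _ ((cl p.1.1 p.1.2).comp O.subtype) (by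
      intro x
      have := hab p (cut ε p.1.1 p.1.2 x) (cut_memO h hP _ _ x.2) (off_cut hP (hS p.1 p.2) _)
      rw [Finset.coe_pair]; exact this)
  have hf : Function.Injective f := by
    rw [← LinearMap.ker_eq_bot, LinearMap.ker_eq_bot']
    intro x hx
    apply Subtype.ext
    apply hsep x.1 x.2
    intro p hp
    have := congrFun hx ⟨p, hp⟩
    exact congrArg Subtype.val this
  refine (LinearMap.finrank_le_finrank_of_injective hf).trans ?_
  rw [Module.finrank_pi_fintype]
  calc _ ≤ ∑ p : S, 2 := Finset.sum_le_sum fun p _ => (finrank_span_finset_le_card _).trans Finset.card_le_two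
    _ = 2 * S.card := by simp [mul_comm]

end Str
end SJ

open Matrix
set_option linter.unusedSectionVars false
set_option linter.unusedSimpArgs false
set_option linter.unusedVariables false
namespace SJ
section Str
variable {F : Type*} [Field F] {ι : Type*} [Fintype ι] [DecidableEq ι]
variable [CharZero F] {s : Matrix ι ι F} {E O : Submodule F (Matrix ι ι F)}
variable {κ : Type*} [Fintype κ] [DecidableEq κ] {ε : κ → Matrix ι ι F}

theorem exists_edge (h : Sup s E O) (hP : PI E ε) (hN : NT s E O) {x : Matrix ι ι F} (hx : x ∈ O) (hx0 : x ≠ 0) :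
    ∃ i j, Edge O ε i j ∧ cut ε i j x ≠ 0 := by
  have : ∃ i j, ε i * x * ε j ≠ 0 := by
    by_contra hc
    push Not at hc
    apply hx0
    rw [sum_all hP x]
    simp [hc]
  obtain ⟨i, j, hij0⟩ := this
  have hij : i ≠ j := by
    rintro rfl
    exact hij0 (diag_zero h hP hN i hx)
  have hc : cut ε i j x ≠ 0 := by
    intro h0
    have c1 := congrArg (fun m => ε i * m) h0
    simp only [cut, mul_add, ← mul_assoc, hP.idem, hP.orth i j hij, zero_mul, add_zero, mul_zero] at c1
    exact hij0 c1
  exact ⟨i, j, ⟨hij, _, cut_memO h hP i j hx, off_cut hP hij x, hc⟩, hc⟩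

/-- two-type structure -/
theorem two_types (h : Sup s E O) (h1 : (1 : Matrix ι ι F) ∈ E) (hP : PI E ε) (hN : NT s E O)
    (T T' : κ → Prop) (hT : ∀ i j, Edge E ε i j → T i → T j) (hT' : ∀ i j, Edge E ε i j → T' i → T' j)
    {i0 j0 : κ} (e0 : Edge O ε i0 j0) (t0 : T i0) (t0' : T' j0) :
    ∀ i, (T i ∧ (∃ j, Edge O ε i j) ∧ ∀ j, Edge O ε i j → T' j) ∨ (T' i ∧ (∃ j, Edge O ε i j) ∧ ∀ j, Edge O ε i j → T j) := by
  classical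
  have nb : ∀ (R : κ → Prop), (∀ i j, Edge E ε i j → R i → R j) → ∀ i j k, Edge O ε i j → R j → Edge O ε i k → R k := by
    intro R hR i j k e r e'
    by_cases hjk : j = k
    · exact hjk ▸ r
    · exact hR j k (edge_path h hP hN hjk e.symm e') r
  have key := closed_univ h h1 hP (Finset.univ.filter fun i =>
    (T i ∧ ∃ j, Edge O ε i j ∧ T' j) ∨ (T' i ∧ ∃ j, Edge O ε i j ∧ T j)) ⟨i0, by
      simp only [Finset.mem_filter, Finset.mem_univ, true_and]; exact Or.inl ⟨t0, j0, e0, t0'⟩⟩ ?_ ?_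
  · intro i
    have := key i
    simp only [Finset.mem_filter, Finset.mem_univ, true_and] at this
    rcases this with ⟨t, j, e, t'⟩ | ⟨t, j, e, t'⟩
    · exact Or.inl ⟨t, ⟨j, e⟩, fun k e' => nb T' hT' i j k e t' e'⟩
    · exact Or.inr ⟨t, ⟨j, e⟩, fun k e' => nb T hT i j k e t' e'⟩
  · intro i hi k ek
    simp only [Finset.mem_filter, Finset.mem_univ, true_and] at *
    rcases hi with ⟨t, j, e, t'⟩ | ⟨t, j, e, t'⟩
    · by_cases hkj : k = j
      · subst hkj; exact Or.inr ⟨t', i, e.symm, t⟩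
      · exact Or.inl ⟨hT _ _ ek t, j, edgeE_move h hP hkj ek.symm e, t'⟩
    · by_cases hkj : k = j
      · subst hkj; exact Or.inl ⟨t', i, e.symm, t⟩
      · exact Or.inr ⟨hT' _ _ ek t, j, edgeE_move h hP hkj ek.symm e, t'⟩
  · intro i hi k ek
    simp only [Finset.mem_filter, Finset.mem_univ, true_and] at *
    rcases hi with ⟨t, j, e, t'⟩ | ⟨t, j, e, t'⟩
    · exact Or.inr ⟨nb T' hT' i j k e t' ek, i, ek.symm, t⟩
    · exact Or.inl ⟨nb T hT i j k e t' ek, i, ek.symm, t⟩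

theorem complete_bip (h : Sup s E O) (h1 : (1 : Matrix ι ι F) ∈ E) (hP : PI E ε) (hN : NT s E O)
    (T T' : κ → Prop) (hT : ∀ i j, Edge E ε i j → T i → T j) (hT' : ∀ i j, Edge E ε i j → T' i → T' j)
    (hd : ∀ i, T i → T' i → False)
    (hA : ∀ i, (T i ∧ (∃ j, Edge O ε i j) ∧ ∀ j, Edge O ε i j → T' j) ∨ (T' i ∧ (∃ j, Edge O ε i j) ∧ ∀ j, Edge O ε i j → T j))
    {i j : κ} (ti : T i) (tj : T' j) : Edge O ε i j := by
  classical
  have A1 : ∀ i, T i → ∀ j, Edge O ε i j → T' j := by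
    intro i ti j e
    rcases hA i with h | h
    · exact h.2.2 j e
    · exact (hd i ti h.1).elim
  have A2 : ∀ i, T' i → ∀ j, Edge O ε i j → T j := by
    intro i ti j e
    rcases hA i with h | h
    · exact (hd i h.1 ti).elim
    · exact h.2.2 j e
  have ne : ∀ i j, T i → T' j → i ≠ j := by rintro i j h1 h2 rfl; exact hd i h1 h2
  have key := closed_univ h h1 hP (Finset.univ.filter fun i =>
    (T i ∧ Edge O ε i j) ∨ (T' i ∧ ∃ l, T l ∧ Edge O ε l j ∧ Edge O ε l i)) ?_ ?_ ?_
  · have := key i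
    simp only [Finset.mem_filter, Finset.mem_univ, true_and] at this
    rcases this with h | h
    · exact h.2
    · exact (hd i ti h.1).elim
  · have : ∃ l, Edge O ε j l := by
      rcases hA j with h | h
      exacts [h.2.1, h.2.1]
    obtain ⟨l, hl⟩ := this
    refine ⟨l, ?_⟩
    simp only [Finset.mem_filter, Finset.mem_univ, true_and]
    exact Or.inl ⟨A2 j tj l hl, hl.symm⟩
  · intro i hi k ek
    simp only [Finset.mem_filter, Finset.mem_univ, true_and] at *
    rcases hi with ⟨t, e⟩ | ⟨t, l, tl, e1, e2⟩
    · have tk := hT _ _ ek t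
      exact Or.inl ⟨tk, edgeE_move h hP (ne _ _ tk tj) ek.symm e⟩
    · have tk := hT' _ _ ek t
      exact Or.inr ⟨tk, l, tl, e1, (edgeE_move h hP (ne _ _ tl tk).symm ek.symm e2.symm).symm⟩
  · intro i hi k ek
    simp only [Finset.mem_filter, Finset.mem_univ, true_and] at *
    rcases hi with ⟨t, e⟩ | ⟨t, l, tl, e1, e2⟩
    · exact Or.inr ⟨A1 i t k ek, i, t, e, ek⟩
    · have tk := A2 i t k ek
      refine Or.inl ⟨tk, ?_⟩
      by_cases hkl : k = l
      · rw [hkl]; exact e1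
      · exact edgeE_move h hP (ne _ _ tk tj) (edge_path h hP hN hkl ek.symm e2.symm) e1

theorem dim_lower (h : Sup s E O) (hP : PI E ε) (hN : NT s E O) (S : Finset (κ × κ))
    (hS : ∀ p ∈ S, Edge O ε p.1 p.2) (hd : ∀ p ∈ S, ∀ q ∈ S, p.1 ≠ q.2) : 2 * S.card ≤ Module.finrank F O := by
  classical
  have ex : ∀ p : S, ∃ x ∈ O, ∃ y ∈ O, Off ε p.1.1 p.1.2 x ∧ Off ε p.1.1 p.1.2 y ∧ x * y - y * x ≠ 0 := by
    intro p
    obtain ⟨hij, x, hx, ox, hx0⟩ := hS p.1 p.2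
    obtain ⟨y, hy, oy, α, β, e1, -, -, hα, hβ⟩ := off_nd h hP hN hij hx ox hx0
    refine ⟨x, hx, y, hy, ox, oy, ?_⟩
    intro h0
    rw [h0] at e1
    have := congrArg (fun m => ε p.1.1 * m) e1
    simp only [mul_zero, mul_add, mul_smul_comm, hP.idem, hP.orth _ _ hij, smul_zero, add_zero] at this
    rcases smul_eq_zero.1 this.symm with h | h
    exacts [hα h, hP.ne _ h]
  choose x hx y hy ox oy hxy using ex
  let f : (S → F × F) →ₗ[F] O :=
    { toFun := fun c => ⟨∑ p, ((c p).1 • x p + (c p).2 • y p), O.sum_mem fun p _ => O.add_mem (O.smul_mem _ (hx p)) (O.smul_mem _ (hy p))⟩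
      map_add' := by
        intro c d; apply Subtype.ext
        simp only [Pi.add_apply, Prod.fst_add, Prod.snd_add, add_smul, Submodule.coe_add, ← Finset.sum_add_distrib]
        apply Finset.sum_congr rfl; intros; abel
      map_smul' := by
        intro t c; apply Subtype.ext
        simp only [Pi.smul_apply, Prod.smul_fst, Prod.smul_snd, smul_eq_mul, Submodule.coe_smul, RingHom.id_apply, Finset.smul_sum, smul_add, smul_smul] }
  have hf : Function.Injective f := by
    rw [← LinearMap.ker_eq_bot, LinearMap.ker_eq_bot']
    intro c hc
    have hc : ∑ p, ((c p).1 • x p + (c p).2 • y p) = 0 := congrArg Subtype.val hc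
    funext p
    have cutz : ∀ q : S, q ≠ p → ∀ z, Off ε q.1.1 q.1.2 z → ε p.1.1 * z * ε p.1.2 + ε p.1.2 * z * ε p.1.1 = 0 := by
      intro q hq z oz
      have n1 := hd p.1 p.2 q.1 q.2
      have n2 := (hd q.1 q.2 p.1 p.2).symm
      by_cases h1 : p.1.1 = q.1.1
      · have h2 : p.1.2 ≠ q.1.2 := by
          intro h2; apply hq; apply Subtype.ext; exact Prod.ext h1.symm h2.symm
        have k := oz.kill hP n2 h2
        rw [mul_assoc, k.1, k.2]; simp
      · have k := oz.kill hP h1 n1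
        rw [k.1, zero_mul, mul_assoc, k.2, mul_zero, add_zero]
    have h2 := congrArg (fun m => ε p.1.1 * m * ε p.1.2 + ε p.1.2 * m * ε p.1.1) hc
    simp only [Finset.mul_sum, Finset.sum_mul, mul_zero, zero_mul, add_zero, ← Finset.sum_add_distrib] at h2
    rw [Finset.sum_eq_single p] at h2
    · have hij := (hS p.1 p.2).1
      have k1 := (ox p).cut_eq hP hij
      have k2 := (oy p).cut_eq hP hij
      unfold cut at k1 k2
      have h3 : (c p).1 • x p + (c p).2 • y p = 0 := by
        rw [← h2]; conv_lhs => rw [← k1, ← k2]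
        simp only [mul_add, add_mul, mul_smul_comm, smul_mul_assoc, smul_add]; abel
      have a1 : (c p).1 • (x p * y p - y p * x p) = 0 := by
        have : (c p).1 • (x p * y p - y p * x p) = ((c p).1 • x p + (c p).2 • y p) * y p - y p * ((c p).1 • x p + (c p).2 • y p) := by
          simp only [mul_add, add_mul, mul_smul_comm, smul_mul_assoc, smul_sub]; abel
        rw [this, h3]; simp
      have a2 : (c p).2 • (x p * y p - y p * x p) = 0 := by
        have : (c p).2 • (x p * y p - y p * x p) = x p * ((c p).1 • x p + (c p).2 • y p) - ((c p).1 • x p + (c p).2 • y p) * x p := by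
          simp only [mul_add, add_mul, mul_smul_comm, smul_mul_assoc, smul_sub]; abel
        rw [this, h3]; simp
      exact Prod.ext ((smul_eq_zero.1 a1).resolve_right (hxy p)) ((smul_eq_zero.1 a2).resolve_right (hxy p))
    · intro q _ hq
      have z1 := cutz q hq _ (ox q)
      have z2 := cutz q hq _ (oy q)
      have : ∀ (A B : Matrix ι ι F), ε p.1.1 * ((c q).1 • A + (c q).2 • B) * ε p.1.2 + ε p.1.2 * ((c q).1 • A + (c q).2 • B) * ε p.1.1
        = (c q).1 • (ε p.1.1 * A * ε p.1.2 + ε p.1.2 * A * ε p.1.1) + (c q).2 • (ε p.1.1 * B * ε p.1.2 + ε p.1.2 * B * ε p.1.1) := by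
        intro A B
        simp only [mul_add, add_mul, mul_smul_comm, smul_mul_assoc, smul_add]; abel
      rw [this, z1, z2]; simp
    · intro h; exact absurd (Finset.mem_univ _) h
  have := LinearMap.finrank_le_finrank_of_injective hf
  rw [Module.finrank_pi_fintype] at this
  simpa [mul_comm, Module.finrank_prod] using this

end Str
end SJ

open Matrix
set_option linter.unusedSectionVars false
set_option linter.unusedSimpArgs false
set_option linter.unusedVariables false
namespace SJ
section Str
variable {F : Type*} [Field F] {ι : Type*} [Fintype ι] [DecidableEq ι]
variable [CharZero F] {s : Matrix ι ι F} {E O : Submodule F (Matrix ι ι F)}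

theorem N_small (h : Sup s E O) {k : ℕ} {ε : Fin k → Matrix ι ι F} (hP : PI E ε) (hN : NT s E O) :
    Module.finrank F O + k ≤ k * k := by
  classical
  let S : Finset (Fin k × Fin k) := Finset.univ.filter fun p => p.1 < p.2
  let S' : Finset (Fin k × Fin k) := Finset.univ.filter fun p => p.2 < p.1
  let D : Finset (Fin k × Fin k) := Finset.univ.filter fun p => p.1 = p.2
  have c1 : S.card = S'.card := by
    apply Finset.card_bij (fun p _ => p.swap)
    · intro p hp; simpa [S, S'] using hp
    · intro p _ q _ hpq; exact Prod.swap_injective hpq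
    · intro p hp; exact ⟨p.swap, by simpa [S, S'] using hp, by simp⟩
  have c2 : D.card = k := by
    have : D = Finset.univ.image (fun i : Fin k => (i, i)) := by
      ext p; simp only [D, Finset.mem_filter, Finset.mem_univ, true_and, Finset.mem_image]
      constructor
      · intro h; exact ⟨p.1, Prod.ext rfl h⟩
      · rintro ⟨i, rfl⟩; rfl
    rw [this, Finset.card_image_of_injective _ (fun i j h => (Prod.ext_iff.1 h).1)]; simp
  have c3 : S.card + S'.card + D.card ≤ k * k := by
    have d1 : Disjoint S S' := by
      rw [Finset.disjoint_left]; intro p h1 h2; simp only [S, S', Finset.mem_filter, Finset.mem_univ, true_and] at h1 h2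
      exact absurd h1 (not_lt.2 h2.le)
    have d2 : Disjoint (S ∪ S') D := by
      rw [Finset.disjoint_left]; intro p h1 h2; simp only [S, S', D, Finset.mem_union, Finset.mem_filter, Finset.mem_univ, true_and] at h1 h2
      rw [h2] at h1; simp at h1
    rw [← Finset.card_union_of_disjoint d1, ← Finset.card_union_of_disjoint d2]
    refine (Finset.card_le_univ _).trans ?_
    simp
  have c4 := sep_dim h hP hN S (by intro p hp; simp only [S, Finset.mem_filter, Finset.mem_univ, true_and] at hp; exact hp.ne) (by
    intro x hx hc
    by_contra hx0
    obtain ⟨i, j, e, hh⟩ := exists_edge h hP hN hx hx0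
    rcases lt_or_gt_of_ne e.1 with hl | hl
    · exact hh (hc (i, j) (by simpa [S] using hl))
    · rw [cut_symm] at hh
      exact hh (hc (j, i) (by simpa [S] using hl)))
  omega

theorem sums_ab (h : Sup s E O) {k : ℕ} {ε : Fin k → Matrix ι ι F} (hP : PI E ε) {n m : ℕ}
    (hc : Fintype.card ι = n + m) (hs : s.trace = (n : F) - m) {a b : Fin k → ℕ}
    (h1 : ∀ i, (ε i).trace = (a i : F) + b i) (h2 : ∀ i, (s * ε i).trace = (a i : F) - b i) :
    ∑ i, a i = n ∧ ∑ i, b i = m := by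
  have t1 := congrArg Matrix.trace hP.sum
  have t2 := congrArg (fun m => (s * m).trace) hP.sum
  simp only [Finset.mul_sum, Matrix.trace_sum, h1, h2, trace_one, mul_one, hs, hc] at t1 t2
  rw [Finset.sum_add_distrib] at t1
  rw [Finset.sum_sub_distrib] at t2
  push_cast at t1
  have c2 : (2:F) ≠ 0 := two_ne_zero
  have q1 : ∑ i, (a i : F) = n := by apply mul_left_cancel₀ c2; linear_combination t1 + t2
  have q2 : ∑ i, (b i : F) = m := by apply mul_left_cancel₀ c2; linear_combination t1 - t2
  exact ⟨by exact_mod_cast q1, by exact_mod_cast q2⟩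

theorem N_pure (h : Sup s E O) (hu : (1 : Matrix ι ι F) ∈ E) {k : ℕ} {ε : Fin k → Matrix ι ι F} (hP : PI E ε) (hN : NT s E O)
    {n m : ℕ} (hn : Odd n) (hm : Odd m) {a b : Fin k → ℕ}
    (h1 : ∀ i, (ε i).trace = (a i : F) + b i) (h2 : ∀ i, (s * ε i).trace = (a i : F) - b i)
    (hab : ∀ i, 0 < a i + b i) (sa : ∑ i, a i = n) (sb : ∑ i, b i = m) {i0 j0 : Fin k} (e0 : Edge O ε i0 j0) (hb : b i0 = 0) :
    Module.finrank F O < n * m ∨ 2 * (n * m) ≤ Module.finrank F O := by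
  classical
  have ha' : a j0 = 0 := (edge_ab h hP hN h1 h2 e0).2.1.1 hb
  have p1 := hab i0
  have p2 := hab j0
  set A := a i0 with hA
  set B := b j0 with hB
  let T : Fin k → Prop := fun i => a i = A ∧ b i = 0
  let T' : Fin k → Prop := fun i => a i = 0 ∧ b i = B
  have hT : ∀ i j, Edge E ε i j → T i → T j := by
    intro i j e t; have := edgeE_ab h hP h1 h2 e; simp only [T] at *; omega
  have hT' : ∀ i j, Edge E ε i j → T' i → T' j := by
    intro i j e t; have := edgeE_ab h hP h1 h2 e; simp only [T'] at *; omega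
  have hd : ∀ i, T i → T' i → False := by intro i t t'; simp only [T, T'] at *; omega
  have key := two_types h hu hP hN T T' hT hT' e0 ⟨rfl, hb⟩ ⟨ha', rfl⟩
  let P : Finset (Fin k) := Finset.univ.filter T
  let Q : Finset (Fin k) := Finset.univ.filter T'
  have sa' : P.card * A = n := by
    rw [← sa, ← smul_eq_mul, ← Finset.sum_const, Finset.sum_filter]
    apply Finset.sum_congr rfl
    intro i _
    split_ifs with ht
    · exact ht.1.symm
    · rcases key i with t | t
      exacts [absurd t.1 ht, t.1.1.symm]
  have sb' : Q.card * B = m := by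
    rw [← sb, ← smul_eq_mul, ← Finset.sum_const, Finset.sum_filter]
    apply Finset.sum_congr rfl
    intro i _
    split_ifs with ht
    · exact ht.2.symm
    · rcases key i with t | t
      exacts [t.1.2.symm, absurd t.1 ht]
  have memP : ∀ i, i ∈ P ↔ T i := by intro i; simp [P]
  have memQ : ∀ i, i ∈ Q ↔ T' i := by intro i; simp [Q]
  by_cases hAB : A = 1 ∧ B = 1
  · right
    have := dim_lower h hP hN (P ×ˢ Q) (by
      intro p hp
      rw [Finset.mem_product, memP, memQ] at hp
      exact complete_bip h hu hP hN T T' hT hT' hd key hp.1 hp.2) (by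
      intro p hp q hq hh
      rw [Finset.mem_product, memP, memQ] at hp hq
      exact hd _ hp.1 (hh ▸ hq.2))
    rw [Finset.card_product] at this
    rw [hAB.1, mul_one] at sa'
    rw [hAB.2, mul_one] at sb'
    rwa [sa', sb'] at this
  · left
    have c4 := sep_dim h hP hN (P ×ˢ Q) (by
      intro p hp hh
      rw [Finset.mem_product, memP, memQ] at hp
      exact hd _ hp.1 (hh ▸ hp.2)) (by
      intro x hx hc
      by_contra hx0
      obtain ⟨i, j, e, hh⟩ := exists_edge h hP hN hx hx0
      rcases key i with t | t
      · exact hh (hc (i, j) (by rw [Finset.mem_product, memP, memQ]; exact ⟨t.1, t.2.2 j e⟩))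
      · rw [cut_symm] at hh
        exact hh (hc (j, i) (by rw [Finset.mem_product, memP, memQ]; exact ⟨t.2.2 j e, t.1⟩)))
    rw [Finset.card_product] at c4
    refine lt_of_le_of_lt c4 ?_
    rw [← sa', Nat.odd_mul] at hn
    rw [← sb', Nat.odd_mul] at hm
    have hp : 0 < P.card := hn.1.pos
    have hq : 0 < Q.card := hm.1.pos
    have h3 : 3 ≤ A * B := by
      obtain ⟨u, hu⟩ := hn.2
      obtain ⟨v, hv⟩ := hm.2
      rcases Nat.eq_zero_or_pos u with h0 | h0
      · rcases Nat.eq_zero_or_pos v with h0' | h0'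
        · subst h0 h0'; exact absurd ⟨hu, hv⟩ hAB
        · nlinarith
      · nlinarith
    rw [← sa', ← sb']
    have : 0 < P.card * Q.card := Nat.mul_pos hp hq
    nlinarith

theorem lemma_N [IsAlgClosed F] (h : Sup s E O) (hu : (1 : Matrix ι ι F) ∈ E) (hN : NT s E O)
    {n m : ℕ} (hn : Odd n) (hm : Odd m) (hc : Fintype.card ι = n + m) (hs : s.trace = (n : F) - m) :
    Module.finrank F O < n * m ∨ 2 * (n * m) ≤ Module.finrank F O := by
  obtain ⟨k, ε, hP⟩ := h.exists_PI hu
  obtain ⟨a, b, h1, h2, hab⟩ := exists_ab h hP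
  obtain ⟨sa, sb⟩ := sums_ab h hP hc hs h1 h2
  obtain ⟨x, hx, hx0⟩ := O.ne_bot_iff.1 h.nO
  obtain ⟨i0, j0, e0, -⟩ := exists_edge h hP hN hx hx0
  have eab := edge_ab h hP hN h1 h2 e0
  by_cases hb : b i0 = 0
  · exact N_pure h hu hP hN hn hm h1 h2 hab sa sb e0 hb
  by_cases ha : a i0 = 0
  · exact N_pure h hu hP hN hn hm h1 h2 hab sa sb e0.symm (eab.1.1 ha)
  left
  let T : Fin k → Prop := fun i => a i ≠ 0 ∧ b i ≠ 0
  have hT : ∀ i j, Edge E ε i j → T i → T j := by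
    intro i j e t; have := edgeE_ab h hP h1 h2 e; simp only [T] at *; omega
  have key := two_types h hu hP hN T T hT hT e0 ⟨ha, hb⟩ (by simp only [T]; omega)
  have hall : ∀ i, T i := by intro i; rcases key i with t | t; exacts [t.1, t.1]
  have ka : k ≤ n := by
    rw [← sa]
    calc k = ∑ i : Fin k, 1 := by simp
      _ ≤ _ := Finset.sum_le_sum fun i _ => Nat.one_le_iff_ne_zero.2 (hall i).1
  have kb : k ≤ m := by
    rw [← sb]
    calc k = ∑ i : Fin k, 1 := by simp
      _ ≤ _ := Finset.sum_le_sum fun i _ => Nat.one_le_iff_ne_zero.2 (hall i).2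
  have := N_small h hP hN
  have hk : 0 < k := i0.pos
  have := Nat.mul_le_mul ka kb
  omega

end Str
end SJ

open Matrix
set_option linter.unusedSectionVars false
set_option linter.unusedSimpArgs false
set_option linter.unusedVariables false
namespace SJ
section Str
variable {F : Type*} [Field F] {ι : Type*} [Fintype ι] [DecidableEq ι]
variable [CharZero F] {s : Matrix ι ι F} {E O : Submodule F (Matrix ι ι F)}

structure Good (s : Matrix ι ι F) (E O : Submodule F (Matrix ι ι F)) (v f : ι → F) : Prop where
  v0 : v ≠ 0
  f0 : f ≠ 0
  sv : s *ᵥ v = v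
  fs : f ᵥ* s = f
  ge : ∀ w g : ι → F, s *ᵥ w = w → g ᵥ* s = g → f ⬝ᵥ w = g ⬝ᵥ v → ∃ b ∈ E, b *ᵥ v = w ∧ f ᵥ* b = g
  go : ∀ w g : ι → F, s *ᵥ w = -w → g ᵥ* s = -g → ∃ x ∈ O, x *ᵥ v = w ∧ f ᵥ* x = g

def QQ (s : Matrix ι ι F) (E O : Submodule F (Matrix ι ι F)) (q : Matrix ι ι F) : Prop :=
  ∃ v f, Good s E O v f ∧ q ∈ E ∧ ∀ b ∈ E, (q * b).trace = f ⬝ᵥ (b *ᵥ v)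

/-- surjectivity of `U_k` -/
theorem U_surj (G : Submodule F (Matrix ι ι F)) {k : Matrix ι ι F} (hk : IsUnit k)
    (hG : ∀ x ∈ G, k * x * k ∈ G) : ∀ y ∈ G, ∃ x ∈ G, k * x * k = y := by
  let f : G →ₗ[F] G :=
    { toFun := fun x => ⟨k * x * k, hG x x.2⟩
      map_add' := by intro x y; apply Subtype.ext; simp [mul_add, add_mul]
      map_smul' := by intro c x; apply Subtype.ext; simp }
  have hf : Function.Injective f := by
    rw [← LinearMap.ker_eq_bot, LinearMap.ker_eq_bot']
    intro x hx
    have hx : k * x.1 * k = 0 := congrArg Subtype.val hx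
    apply Subtype.ext
    have := (hk.mul_left_eq_zero).1 hx
    exact (hk.mul_right_eq_zero).1 this
  have hs := LinearMap.surjective_of_injective hf
  intro y hy
  obtain ⟨x, hx⟩ := hs ⟨y, hy⟩
  exact ⟨x.1, x.2, congrArg Subtype.val hx⟩

theorem Good.conj (h : Sup s E O) {v f : ι → F} (hg : Good s E O v f) {k : Matrix ι ι F} (hk : k ∈ E) (hu : IsUnit k) :
    Good s E O (k *ᵥ v) (f ᵥ* k) := by
  obtain ⟨k', hk1, hk2⟩ : ∃ k', k * k' = 1 ∧ k' * k = 1 := by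
    obtain ⟨u, rfl⟩ := hu
    exact ⟨↑u⁻¹, by simp, by simp⟩
  have sk := h.ev k hk
  have canc : ∀ {w w' : ι → F}, k *ᵥ w = k *ᵥ w' → w = w' := by
    intro w w' hw
    have := congrArg (fun z => k' *ᵥ z) hw
    simpa [mulVec_mulVec, hk2] using this
  have canc2 : ∀ {w w' : ι → F}, w ᵥ* k = w' ᵥ* k → w = w' := by
    intro w w' hw
    have := congrArg (fun z => z ᵥ* k') hw
    simpa [vecMul_vecMul, hk1] using this
  refine ⟨?_, ?_, ?_, ?_, ?_, ?_⟩
  · intro h0; exact hg.v0 (canc (by rw [h0, mulVec_zero]))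
  · intro h0; exact hg.f0 (canc2 (by rw [h0, zero_vecMul]))
  · rw [mulVec_mulVec, sk, ← mulVec_mulVec, hg.sv]
  · rw [vecMul_vecMul, ← sk, ← vecMul_vecMul, hg.fs]
  · intro w g hw hgs hfw
    obtain ⟨b, hb, e1, e2⟩ := hg.ge (k *ᵥ w) (g ᵥ* k) (by rw [mulVec_mulVec, sk, ← mulVec_mulVec, hw])
      (by rw [vecMul_vecMul, ← sk, ← vecMul_vecMul, hgs]) (by rw [dotProduct_mulVec, hfw, dotProduct_mulVec])
    obtain ⟨b', hb', rfl⟩ := U_surj E hu (fun x hx => h.u1 hk hx) b hb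
    refine ⟨b', hb', ?_, ?_⟩
    · apply canc; rw [← e1]; simp only [mulVec_mulVec, mul_assoc]
    · apply canc2; rw [← e2]; simp only [vecMul_vecMul, mul_assoc]
  · intro w g hw hgs
    obtain ⟨b, hb, e1, e2⟩ := hg.go (k *ᵥ w) (g ᵥ* k) (by rw [mulVec_mulVec, sk, ← mulVec_mulVec, hw, mulVec_neg])
      (by rw [vecMul_vecMul, ← sk, ← vecMul_vecMul, hgs, neg_vecMul])
    obtain ⟨b', hb', rfl⟩ := U_surj O hu (fun x hx => h.u2 hk hx) b hb
    refine ⟨b', hb', ?_, ?_⟩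
    · apply canc; rw [← e1]; simp only [mulVec_mulVec, mul_assoc]
    · apply canc2; rw [← e2]; simp only [vecMul_vecMul, mul_assoc]

theorem QQ.conj (h : Sup s E O) {q : Matrix ι ι F} (hq : QQ s E O q) {k : Matrix ι ι F} (hk : k ∈ E) (hu : IsUnit k) :
    QQ s E O (k * q * k) := by
  obtain ⟨v, f, hg, hq, hb⟩ := hq
  refine ⟨_, _, hg.conj h hk hu, h.u1 hk hq, ?_⟩
  intro b hbE
  have := hb _ (h.u1 hk hbE)
  rw [show k * q * k * b = k * (q * k * b) by simp only [mul_assoc], Matrix.trace_mul_comm]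
  rw [show q * k * b * k = q * (k * b * k) by simp only [mul_assoc], this]
  simp only [← mulVec_mulVec, dotProduct_mulVec, vecMul_vecMul]

theorem nil_of_spec [IsAlgClosed F] (z : Matrix ι ι F) (hz : ∀ μ ∈ spectrum F z, μ = 0) : z ^ Fintype.card ι = 0 := by
  have hs := IsAlgClosed.splits z.charpoly
  have h1 := hs.eq_prod_roots_of_monic z.charpoly_monic
  have h2 : z.charpoly.roots = Multiset.replicate (Fintype.card ι) 0 := by
    rw [Multiset.eq_replicate]
    constructor
    · rw [← hs.natDegree_eq_card_roots, Matrix.charpoly_natDegree_eq_dim]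
    · intro μ hμ
      apply hz
      rw [Matrix.mem_spectrum_iff_isRoot_charpoly]
      exact (Polynomial.mem_roots'.1 hμ).2
  rw [h2] at h1
  simp only [Multiset.map_replicate, map_zero, sub_zero, Multiset.prod_replicate] at h1
  have := Matrix.aeval_self_charpoly z
  rw [h1] at this
  simpa using this

theorem unit_aeval [IsAlgClosed F] [Nonempty ι] (q : Matrix ι ι F) (p : Polynomial F) (hp : ∀ μ ∈ spectrum F q, p.eval μ ≠ 0) :
    IsUnit (Polynomial.aeval q p) := by
  have hn : (spectrum F q).Nonempty := spectrum.nonempty_of_isAlgClosed_of_finiteDimensional F q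
  by_contra hc
  have : (0:F) ∈ spectrum F (Polynomial.aeval q p) := by
    rw [spectrum.zero_mem_iff]; exact hc
  rw [spectrum.map_polynomial_aeval_of_nonempty q p hn] at this
  obtain ⟨μ, hμ, h0⟩ := this
  exact hp μ hμ h0

theorem spec_ann [IsAlgClosed F] [Nonempty ι] (q : Matrix ι ι F) (p : Polynomial F) (hp : Polynomial.aeval q p = 0) :
    ∀ μ ∈ spectrum F q, p.eval μ = 0 := by
  intro μ hμ
  have hn : (spectrum F q).Nonempty := ⟨μ, hμ⟩
  have := spectrum.map_polynomial_aeval_of_nonempty q p hn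
  rw [hp, spectrum.zero_eq] at this
  have h2 : p.eval μ ∈ (fun k => Polynomial.eval k p) '' spectrum F q := ⟨μ, hμ, rfl⟩
  rw [← this] at h2
  simpa using h2

theorem rank_add_orth {e y : Matrix ι ι F} (he : e * e = e) (h1 : e * y = 0) (h2 : y * e = 0) (hy : y ≠ 0) {α : F} (hα : α ≠ 0) :
    e.rank < (α • e + y).rank := by
  have hle : LinearMap.range e.mulVecLin ≤ LinearMap.range (α • e + y).mulVecLin := by
    rintro _ ⟨x, rfl⟩
    refine ⟨α⁻¹ • (e *ᵥ x), ?_⟩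
    simp only [mulVecLin_apply, mulVec_smul, mulVec_mulVec, add_mul, smul_mul_assoc, he, h2, add_zero, smul_mulVec, smul_smul]
    rw [inv_mul_cancel₀ hα, one_smul]
  by_contra hc
  push Not at hc
  have heq := Submodule.eq_of_le_of_finrank_le hle hc
  apply hy
  have hz : ∀ x, y *ᵥ x = 0 := by
    intro x
    have m : (α • e + y).mulVecLin ((1 - e) *ᵥ x) ∈ LinearMap.range e.mulVecLin := by rw [heq]; exact ⟨_, rfl⟩
    obtain ⟨z, hz⟩ := m
    have e1 : (α • e + y) * (1 - e) = y := by
      simp only [add_mul, mul_sub, mul_one, smul_mul_assoc, he, h2, add_zero]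
      abel
    simp only [mulVecLin_apply, mulVec_mulVec, e1] at hz
    have := congrArg (fun w => e *ᵥ w) hz
    simp only [mulVec_mulVec, he, h1, zero_mulVec] at this
    rw [← hz, this]
  ext i j
  have := congrFun (hz (Pi.single j 1)) i
  simpa using this

def MX (s : Matrix ι ι F) (E O : Submodule F (Matrix ι ι F)) (q : Matrix ι ι F) : Prop :=
  QQ s E O q ∧ ∀ q', QQ s E O q' → (q' ^ Fintype.card ι).rank ≤ (q ^ Fintype.card ι).rank

theorem exists_MX {q : Matrix ι ι F} (hq : QQ s E O q) : ∃ q, MX s E O q := by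
  let S : Set ℕ := {r | ∃ q, QQ s E O q ∧ (q ^ Fintype.card ι).rank = r}
  have hb : BddAbove S := ⟨Fintype.card ι, by rintro r ⟨q, -, rfl⟩; exact Matrix.rank_le_card_width _⟩
  have hm : sSup S ∈ S := Nat.sSup_mem ⟨_, q, hq, rfl⟩ hb
  obtain ⟨q, hq, hr⟩ := hm
  refine ⟨q, hq, ?_⟩
  intro q' hq'
  rw [hr]
  exact le_csSup hb ⟨q', hq', rfl⟩

theorem QQ.mem {q : Matrix ι ι F} (hq : QQ s E O q) : q ∈ E := by
  obtain ⟨v, f, hg, hq, hb⟩ := hq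
  exact hq

theorem aeval_mem' (h : Sup s E O) (h1 : (1 : Matrix ι ι F) ∈ E) {q : Matrix ι ι F} (hq : q ∈ E) (p : Polynomial F) :
    Polynomial.aeval q p ∈ E := by
  have := h.aeval_mem hq p.divX 0
  rw [zero_add, pow_one] at this
  have e := p.divX_mul_X_add
  rw [← e, map_add]
  refine E.add_mem this ?_
  rw [Polynomial.aeval_C, Algebra.algebraMap_eq_smul_one]
  exact E.smul_mem _ h1

theorem MX.conj (h : Sup s E O) (h1 : (1 : Matrix ι ι F) ∈ E) {q : Matrix ι ι F} (hq : MX s E O q)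
    (p : Polynomial F) (hu : IsUnit (Polynomial.aeval q p)) : MX s E O (Polynomial.aeval q (p * p * Polynomial.X)) := by
  have hk := aeval_mem' h h1 hq.1.mem p
  have e1 : Polynomial.aeval q (p * p * Polynomial.X) = Polynomial.aeval q p * q * Polynomial.aeval q p := by
    have hc0 : Polynomial.aeval q p * q = q * Polynomial.aeval q p := by
      have := congrArg (Polynomial.aeval q) (mul_comm p Polynomial.X)
      simpa only [map_mul, Polynomial.aeval_X] using this
    simp only [map_mul, Polynomial.aeval_X]
    rw [mul_assoc, mul_assoc, hc0]
  rw [e1]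
  refine ⟨hq.1.conj h hk hu, ?_⟩
  intro q' hq'
  refine (hq.2 q' hq').trans (le_of_eq ?_)
  rw [← e1, map_mul, Polynomial.aeval_X]
  have hc : Commute (Polynomial.aeval q (p * p)) q := by
    have := congrArg (Polynomial.aeval q) (mul_comm (p * p) Polynomial.X)
    rw [map_mul, map_mul _ Polynomial.X, Polynomial.aeval_X] at this
    exact this
  rw [hc.mul_pow]
  rw [Matrix.rank_mul_eq_right_of_isUnit_det]
  rw [← Matrix.isUnit_iff_isUnit_det]
  rw [map_mul]
  exact (hu.mul hu).pow _

theorem norm1 [IsAlgClosed F] [Nonempty ι] (h : Sup s E O) (h1 : (1 : Matrix ι ι F) ∈ E) {q : Matrix ι ι F} (hq : MX s E O q) :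
    ∃ q, MX s E O q ∧ (q * (q - 1)) ^ Fintype.card ι = 0 := by
  classical
  choose r hr using fun μ : F => IsAlgClosed.exists_eq_mul_self μ
  have hfin : (spectrum F q).Finite := by
    have : spectrum F q ⊆ (q.charpoly.roots.toFinset : Set F) := by
      intro μ hμ
      rw [Matrix.mem_spectrum_iff_isRoot_charpoly] at hμ
      simp only [Finset.mem_coe, Multiset.mem_toFinset]
      exact (Polynomial.mem_roots q.charpoly_monic.ne_zero).2 hμ
    exact (Finset.finite_toSet _).subset this
  let Z := hfin.toFinset
  let g : F → F := fun μ => if μ = 0 then 1 else (r μ)⁻¹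
  let p := Lagrange.interpolate Z id g
  have hp : ∀ μ ∈ spectrum F q, p.eval μ = g μ := by
    intro μ hμ
    exact Lagrange.eval_interpolate_at_node (s := Z) (v := id) g (Function.injective_id.injOn) (hfin.mem_toFinset.2 hμ)
  have hr0 : ∀ μ, μ ≠ 0 → r μ ≠ 0 := by
    intro μ h0 h; apply h0; rw [hr μ, h, zero_mul]
  have hu : IsUnit (Polynomial.aeval q p) := unit_aeval q p (by
    intro μ hμ
    rw [hp μ hμ]
    simp only [g]
    split_ifs with h0
    · exact one_ne_zero
    · exact inv_ne_zero (hr0 μ h0))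
  refine ⟨_, hq.conj h h1 p hu, ?_⟩
  have e1 : Polynomial.aeval q (p * p * Polynomial.X) * (Polynomial.aeval q (p * p * Polynomial.X) - 1)
    = Polynomial.aeval q ((p * p * Polynomial.X) * (p * p * Polynomial.X - 1)) := by
    simp only [map_mul, map_sub, map_one]
  rw [e1]
  apply nil_of_spec
  intro ξ hξ
  rw [spectrum.map_polynomial_aeval_of_nonempty q _ (spectrum.nonempty_of_isAlgClosed_of_finiteDimensional F q)] at hξ
  obtain ⟨μ, hμ, rfl⟩ := hξ
  simp only [Polynomial.eval_mul, Polynomial.eval_sub, Polynomial.eval_X, Polynomial.eval_one, hp μ hμ, g]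
  split_ifs with h0
  · rw [h0]; simp
  · have h2 := hr0 μ h0
    have : (r μ)⁻¹ * (r μ)⁻¹ * μ = 1 := by
      calc (r μ)⁻¹ * (r μ)⁻¹ * μ = (r μ)⁻¹ * (r μ)⁻¹ * (r μ * r μ) := by rw [← hr μ]
        _ = 1 := by field_simp
    rw [this]; simp

theorem norm2 [IsAlgClosed F] [Nonempty ι] (h : Sup s E O) (h1 : (1 : Matrix ι ι F) ∈ E) (d : ℕ) : ∀ {q : Matrix ι ι F},
    MX s E O q → q ^ Fintype.card ι * (q - 1) ^ (2 ^ d) = 0 → ∃ q, MX s E O q ∧ q ^ Fintype.card ι * (q - 1) = 0 := by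
  induction d with
  | zero => intro q hq hz; exact ⟨q, hq, by simpa using hz⟩
  | succ d ih =>
    intro q hq hz
    have hz' : Polynomial.aeval q ((Polynomial.X : Polynomial F) ^ Fintype.card ι * (Polynomial.X - 1) ^ (2 ^ (d+1))) = 0 := by
      simpa using hz
    let p : Polynomial F := Polynomial.C (2:F)⁻¹ * (3 - Polynomial.X)
    have hu : IsUnit (Polynomial.aeval q p) := unit_aeval q p (by
      intro μ hμ h0
      have := spec_ann q _ hz' μ hμ
      simp only [p, Polynomial.eval_mul, Polynomial.eval_C, Polynomial.eval_sub, Polynomial.eval_X, Polynomial.eval_ofNat] at h0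
      have h3 : μ = 3 := by
        rcases mul_eq_zero.1 h0 with h | h
        · simp at h
        · exact (sub_eq_zero.1 h).symm
      subst h3
      simp only [Polynomial.eval_mul, Polynomial.eval_pow, Polynomial.eval_sub, Polynomial.eval_X, Polynomial.eval_one] at this
      rcases mul_eq_zero.1 this with h | h
      · exact three_ne_zero ((pow_eq_zero_iff (Fintype.card_ne_zero)).1 h)
      · have := pow_eq_zero_iff (n := 2 ^ (d+1)) (by positivity) |>.1 h
        norm_num at this)
    apply ih (hq.conj h h1 p hu)
    have key : (p * p * Polynomial.X) ^ Fintype.card ι * (p * p * Polynomial.X - 1) ^ (2 ^ d) =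
      ((p * p) ^ Fintype.card ι * (Polynomial.C (4:F)⁻¹ * (Polynomial.X - 4)) ^ (2 ^ d)) *
       ((Polynomial.X : Polynomial F) ^ Fintype.card ι * (Polynomial.X - 1) ^ (2 ^ (d+1))) := by
      have e : p * p * Polynomial.X - 1 = (Polynomial.C (4:F)⁻¹ * (Polynomial.X - 4)) * (Polynomial.X - 1) ^ 2 := by
        have c : (Polynomial.C (2:F)⁻¹) * (Polynomial.C (2:F)⁻¹) = Polynomial.C (4:F)⁻¹ := by
          rw [← Polynomial.C_mul]; norm_num
        have c4 : (Polynomial.C (4:F)⁻¹) * 4 = 1 := by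
          have : (4 : Polynomial F) = Polynomial.C 4 := rfl
          rw [this, ← Polynomial.C_mul]; norm_num
        simp only [p]
        linear_combination ((3 - Polynomial.X)^2 * Polynomial.X) * c + c4
      rw [e, mul_pow (p*p), mul_pow (_ * _) ((Polynomial.X - 1) ^ 2), ← pow_mul, pow_succ 2 d, mul_comm (2^d) 2]
      ring
    have := congrArg (Polynomial.aeval q) key
    rw [map_mul _ (_ * _) (_ * _), hz', mul_zero] at this
    rw [← this]
    simp only [map_mul, map_pow, map_sub, map_one]

theorem QQ.ne (h : Sup s E O) {q : Matrix ι ι F} (hq : QQ s E O q) : q ≠ 0 := by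
  rintro rfl
  obtain ⟨v, f, hg, hq, hb⟩ := hq
  have ev1 : ∃ φ : ι → F, φ ᵥ* s = φ ∧ φ ⬝ᵥ v = 1 := by
    obtain ⟨i, hi⟩ := Function.ne_iff.1 hg.v0
    refine ⟨(2 * v i)⁻¹ • (Pi.single i 1 + Pi.single i 1 ᵥ* s), ?_, ?_⟩
    · rw [smul_vecMul, add_vecMul, vecMul_vecMul, h.s2, vecMul_one, add_comm]
    · rw [smul_dotProduct, add_dotProduct, ← dotProduct_mulVec, hg.sv]
      simp only [single_dotProduct, one_mul, smul_eq_mul]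
      have : v i ≠ 0 := hi
      field_simp; norm_num
  have ev2 : ∃ ψ : ι → F, s *ᵥ ψ = ψ ∧ f ⬝ᵥ ψ = 1 := by
    obtain ⟨i, hi⟩ := Function.ne_iff.1 hg.f0
    refine ⟨(2 * f i)⁻¹ • (Pi.single i 1 + s *ᵥ Pi.single i 1), ?_, ?_⟩
    · rw [mulVec_smul, mulVec_add, mulVec_mulVec, h.s2, one_mulVec, add_comm]
    · rw [dotProduct_smul, dotProduct_add, dotProduct_mulVec, hg.fs]
      simp only [dotProduct_single, mul_one, smul_eq_mul]
      have : f i ≠ 0 := hi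
      field_simp; norm_num
  obtain ⟨φ, h1, h2⟩ := ev1
  obtain ⟨ψ, h3, h4⟩ := ev2
  obtain ⟨b, hbE, e1, e2⟩ := hg.ge ψ φ h3 h1 (by rw [h2, h4])
  have := hb b hbE
  rw [e1, h4] at this
  simp at this

theorem idem_q [IsAlgClosed F] [Nonempty ι] (h : Sup s E O) (h1 : (1 : Matrix ι ι F) ∈ E) {q : Matrix ι ι F} (hq : QQ s E O q) :
    ∃ q, QQ s E O q ∧ q * q = q ∧ q ≠ 0 := by
  obtain ⟨q, hq⟩ := exists_MX hq
  obtain ⟨q, hq, hz⟩ := norm1 h h1 hq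
  set N := Fintype.card ι with hN
  have hNpos : 0 < N := Fintype.card_pos
  have hcomm : Commute q (q - 1) := by
    show q * (q - 1) = (q - 1) * q
    noncomm_ring
  obtain ⟨q, hq, hz⟩ := norm2 h h1 N hq (by
    rw [hcomm.mul_pow] at hz
    have : 2 ^ N = N + (2 ^ N - N) := by have := (Nat.lt_two_pow_self (n := N)).le; omega
    rw [this, pow_add, ← mul_assoc, hz, zero_mul])
  rw [← hN] at hz
  have hN1 : q ^ (N + 1) = q ^ N := by
    rw [mul_sub, mul_one, sub_eq_zero] at hz
    rw [pow_succ, hz]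
  have hst : ∀ j, q ^ (N + j) = q ^ N := by
    intro j
    induction j with
    | zero => rfl
    | succ j ih => rw [← add_assoc, pow_succ, ih, ← pow_succ, hN1]
  set e := q ^ N with he
  have hee : e * e = e := by rw [he, ← pow_add, hst]
  have heq : e * q = e := by rw [he, ← pow_succ, hN1]
  have hqe : q * e = e := by rw [he, ← pow_succ', hN1]
  have heE : e ∈ E := by
    obtain ⟨M, hM⟩ : ∃ M, N = M + 1 := ⟨N - 1, by omega⟩
    rw [he, hM]; exact h.pow_mem hq.1.mem M
  by_cases hν : q = e
  · refine ⟨q, hq.1, ?_, hq.1.ne h⟩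
    rw [hν]; exact hee
  exfalso
  set ν := q - e with hνd
  have hν0 : ν ≠ 0 := sub_ne_zero.2 hν
  have a1 : e * ν = 0 := by rw [hνd, mul_sub, heq, hee, sub_self]
  have a2 : ν * e = 0 := by rw [hνd, sub_mul, hqe, hee, sub_self]
  have hνE : ν ∈ E := E.sub_mem hq.1.mem heE
  have hνp : ∀ j, ν ^ (j + 1) = q ^ (j + 1) - e := by
    intro j
    induction j with
    | zero => simp [hνd]
    | succ j ih =>
      rw [pow_succ, ih, sub_mul, a1, sub_zero, hνd, mul_sub, ← pow_succ]
      congr 1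
      rw [he, ← pow_add, add_comm, hst]
  have hνnil : IsNilpotent ν := ⟨N, by
    obtain ⟨M, hM⟩ : ∃ M, N = M + 1 := ⟨N - 1, by omega⟩
    rw [hM, hνp, ← hM, ← he, sub_self]⟩
  obtain ⟨r, hr, htr⟩ : ∃ r ∈ E, (ν * r).trace ≠ 0 := by
    by_contra hc
    push Not at hc
    exact hν0 (h.SS ν hνE hc)
  have h1e : (1 - e) ∈ E := E.sub_mem h1 heE
  set r' := (1 - e) * r * (1 - e) with hr'
  have hr'E : r' ∈ E := h.u1 h1e hr
  have hee' : (1 - e) * e = 0 := by rw [sub_mul, one_mul, hee, sub_self]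
  have hee'' : e * (1 - e) = 0 := by rw [mul_sub, mul_one, hee, sub_self]
  have b1 : e * r' = 0 := by rw [hr', ← mul_assoc, ← mul_assoc, hee'', zero_mul, zero_mul]
  have b2 : r' * e = 0 := by rw [hr', mul_assoc, hee', mul_zero]
  have htr' : (ν * r').trace ≠ 0 := by
    have : (ν * r').trace = (ν * r).trace := by
      rw [hr', mul_assoc (1 - e), ← mul_assoc, mul_sub, mul_one, a2, sub_zero, ← mul_assoc, Matrix.trace_mul_comm, ← mul_assoc, sub_mul, a1, one_mul, sub_zero]
    rw [this]; exact htr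
  obtain ⟨t, ht⟩ : ∃ t : F, ((-r').charpoly * Polynomial.X * (Polynomial.C (2 * (ν * r').trace) * Polynomial.X + Polynomial.C ((ν * (r' * r')).trace))).eval t ≠ 0 := by
    by_contra hc
    push Not at hc
    have := Polynomial.funext (p := _) (q := 0) (fun t => by rw [hc t, Polynomial.eval_zero])
    rcases mul_eq_zero.1 this with h | h
    · rcases mul_eq_zero.1 h with h | h
      · exact (-r').charpoly_monic.ne_zero h
      · exact Polynomial.X_ne_zero h
    · have := congrArg (fun p => Polynomial.coeff p 1) h
      simp at this
      exact htr' this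
  simp only [Polynomial.eval_mul, Polynomial.eval_add, Polynomial.eval_C, Polynomial.eval_X, mul_ne_zero_iff] at ht
  obtain ⟨⟨t1, t2⟩, t3⟩ := ht
  set k := t • (1 : Matrix ι ι F) + r' with hk
  have hkE : k ∈ E := E.add_mem (E.smul_mem _ h1) hr'E
  have hkU : IsUnit k := by
    rw [Matrix.isUnit_iff_isUnit_det]
    rw [Matrix.eval_charpoly] at t1
    rw [isUnit_iff_ne_zero]
    convert t1 using 2
    rw [hk, Matrix.smul_one_eq_diagonal, sub_neg_eq_add, Matrix.scalar_apply]
  have hqq := hq.1.conj h hkE hkU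
  have hle := hq.2 _ hqq
  have ke : k * e = t • e := by rw [hk, add_mul, b2, smul_mul_assoc, one_mul, add_zero]
  have ek : e * k = t • e := by rw [hk, mul_add, b1, mul_smul_comm, mul_one, add_zero]
  set z := k * ν * k with hz'
  have z1 : e * z = 0 := by rw [hz', ← mul_assoc, ← mul_assoc, ek, smul_mul_assoc, a1]; simp
  have z2 : z * e = 0 := by rw [hz', mul_assoc, ke, mul_smul_comm, mul_assoc, a2]; simp
  have hkq : k * q * k = (t * t) • e + z := by
    have : q = e + ν := by rw [hνd]; abel
    have h5 : k * q * k = k * e * k + k * ν * k := by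
      rw [← add_mul, ← mul_add k e ν, ← this]
    rw [h5, ke, smul_mul_assoc, ek, smul_smul]
  have hpow : ∀ j, ((t * t) • e + z) ^ (j + 1) = (t * t) ^ (j + 1) • e + z ^ (j + 1) := by
    intro j
    induction j with
    | zero => simp
    | succ j ih =>
      have z3 : z ^ (j + 1) * e = 0 := by rw [pow_succ, mul_assoc, z2, mul_zero]
      rw [pow_succ, ih]
      simp only [mul_add, add_mul, smul_mul_assoc, mul_smul_comm, hee, z1, z3, smul_zero, add_zero, zero_add, smul_smul, ← pow_succ]
      rw [← pow_succ']
  have hznil : ¬ IsNilpotent z := by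
    intro hn
    have hz0 := tr_nil _ hn
    apply t3
    have hν00 := tr_nil _ hνnil
    have e1 : z.trace = t * t * ν.trace + 2 * (ν * r').trace * t + (ν * (r' * r')).trace := by
      rw [hz', mul_assoc, Matrix.trace_mul_comm, hk]
      have c1 := Matrix.trace_mul_comm (r' * ν) r'
      simp only [mul_add, add_mul, mul_smul_comm, smul_mul_assoc, trace_add, trace_smul, mul_one, one_mul, smul_eq_mul, smul_add, mul_assoc] at *
      ring
    rw [hz0, hν00] at e1
    linear_combination -e1
  obtain ⟨M, hM⟩ : ∃ M, N = M + 1 := ⟨N - 1, by omega⟩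
  have hzN : z ^ N ≠ 0 := fun h0 => hznil ⟨N, h0⟩
  have hlt := rank_add_orth (y := z ^ N) hee (by rw [hM, pow_succ', ← mul_assoc, z1, zero_mul]) (by rw [hM, pow_succ, mul_assoc, z2, mul_zero]) hzN
    (α := (t * t) ^ N) (pow_ne_zero _ (mul_ne_zero t2 t2))
  rw [hkq, ← hN] at hle
  have := hpow M
  rw [← hM] at this
  rw [this] at hle
  exact absurd hle (not_le.2 hlt)

end Str
end SJ

open Matrix
set_option linter.unusedSectionVars false
set_option linter.unusedSimpArgs false
set_option linter.unusedVariables false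
namespace SJ
section Str
variable {F : Type*} [Field F] {ι : Type*} [Fintype ι] [DecidableEq ι]
variable [CharZero F] {s : Matrix ι ι F} {E O : Submodule F (Matrix ι ι F)}

theorem cov_zero (s2 : s * s = 1) {g : ι → F} (hg : g ᵥ* s = g) (hw : ∀ w, s *ᵥ w = w → g ⬝ᵥ w = 0) : g = 0 := by
  have : ∀ x, g ⬝ᵥ x = 0 := by
    intro x
    have h1 := hw (x + s *ᵥ x) (by rw [mulVec_add, mulVec_mulVec, s2, one_mulVec, add_comm])
    rw [dotProduct_add, dotProduct_mulVec, hg, ← two_mul] at h1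
    exact (mul_eq_zero.1 h1).resolve_left two_ne_zero
  ext i
  simpa using this (Pi.single i 1)

theorem vec_zero (s2 : s * s = 1) {w : ι → F} (hw : s *ᵥ w = w) (hg : ∀ g, g ᵥ* s = g → g ⬝ᵥ w = 0) : w = 0 := by
  have : ∀ x, x ⬝ᵥ w = 0 := by
    intro x
    have h1 := hg (x + x ᵥ* s) (by rw [add_vecMul, vecMul_vecMul, s2, vecMul_one, add_comm])
    rw [add_dotProduct, ← dotProduct_mulVec, hw, ← two_mul] at h1
    exact (mul_eq_zero.1 h1).resolve_left two_ne_zero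
  ext i
  simpa using this (Pi.single i 1)

theorem cov_zero' (s2 : s * s = 1) {g : ι → F} (hg : g ᵥ* s = -g) (hw : ∀ w, s *ᵥ w = -w → g ⬝ᵥ w = 0) : g = 0 := by
  apply cov_zero (s := -s) (by rw [neg_mul_neg, s2])
  · rw [vecMul_neg, hg, neg_neg]
  · intro w h; apply hw; rw [neg_mulVec] at h; rw [← h, neg_neg, h]

theorem vec_zero' (s2 : s * s = 1) {w : ι → F} (hg : s *ᵥ w = -w) (hw : ∀ g, g ᵥ* s = -g → g ⬝ᵥ w = 0) : w = 0 := by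
  apply vec_zero (s := -s) (by rw [neg_mul_neg, s2])
  · rw [neg_mulVec, hg, neg_neg]
  · intro w h; apply hw; rw [vecMul_neg] at h; rw [← h, neg_neg, h]

structure Eps (s : Matrix ι ι F) (E O : Submodule F (Matrix ι ι F)) (q : Matrix ι ι F) (v f : ι → F) : Prop where
  h : Sup s E O
  one : (1 : Matrix ι ι F) ∈ E
  g : Good s E O v f
  qE : q ∈ E
  tr : ∀ b ∈ E, (q * b).trace = f ⬝ᵥ (b *ᵥ v)
  qq : q * q = q
  q0 : q ≠ 0

namespace Eps
variable {q : Matrix ι ι F} {v f : ι → F}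

theorem r0 (e : Eps s E O q v f) : f ⬝ᵥ v ≠ 0 := by
  have := e.tr 1 e.one
  rw [mul_one, one_mulVec] at this
  rw [← this]
  intro h0
  exact e.q0 (idem_zero q e.qq h0)

theorem ann (e : Eps s E O q v f) {c : Matrix ι ι F} (hc : c ∈ E) (h0 : c * q + q * c = 0) :
    c *ᵥ v = 0 ∧ f ᵥ* c = 0 := by
  have sc := e.h.ev c hc
  have k : ∀ b ∈ E, (f ᵥ* c) ⬝ᵥ (b *ᵥ v) + (f ᵥ* b) ⬝ᵥ (c *ᵥ v) = 0 := by
    intro b hb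
    have h1 := e.tr _ (e.h.c1 c hc b hb)
    have h2 : (q * (c * b + b * c)).trace = ((c * q + q * c) * b).trace := by
      have := Matrix.trace_mul_comm (q * b) c
      simp only [mul_add, add_mul, trace_add, mul_assoc] at *
      linear_combination this
    rw [h2, h0, zero_mul, trace_zero, add_mulVec, dotProduct_add, ← mulVec_mulVec, ← mulVec_mulVec, dotProduct_mulVec, dotProduct_mulVec f b] at h1
    exact h1.symm
  have k0 : f ⬝ᵥ (c *ᵥ v) = 0 := by
    have := k 1 e.one
    rw [one_mulVec, vecMul_one, ← dotProduct_mulVec, ← two_mul] at this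
    exact (mul_eq_zero.1 this).resolve_left two_ne_zero
  have r0 := e.r0
  constructor
  · apply vec_zero e.h.s2
    · rw [mulVec_mulVec, sc, ← mulVec_mulVec, e.g.sv]
    · intro g hg
      obtain ⟨b, hb, e1, e2⟩ := e.g.ge ((g ⬝ᵥ v / f ⬝ᵥ v) • v) g (by rw [mulVec_smul, e.g.sv]) hg
        (by rw [dotProduct_smul, smul_eq_mul]; field_simp)
      have := k b hb
      rw [e1, e2, dotProduct_smul, ← dotProduct_mulVec, k0, smul_zero, zero_add] at this
      exact this
  · apply cov_zero e.h.s2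
    · rw [vecMul_vecMul, ← sc, ← vecMul_vecMul, e.g.fs]
    · intro w hw
      obtain ⟨b, hb, e1, e2⟩ := e.g.ge w ((f ⬝ᵥ w / f ⬝ᵥ v) • f) hw (by rw [smul_vecMul, e.g.fs])
        (by rw [smul_dotProduct, smul_eq_mul]; field_simp)
      have := k b hb
      rw [e1, e2, smul_dotProduct, k0, smul_zero, add_zero] at this
      exact this

theorem qv (e : Eps s E O q v f) : q *ᵥ v = v := by
  have := (e.ann (E.sub_mem e.one e.qE) (by rw [sub_mul, mul_sub, one_mul, mul_one, e.qq]; simp)).1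
  rw [sub_mulVec, one_mulVec, sub_eq_zero] at this
  exact this.symm

theorem fq (e : Eps s E O q v f) : f ᵥ* q = f := by
  have := (e.ann (E.sub_mem e.one e.qE) (by rw [sub_mul, mul_sub, one_mul, mul_one, e.qq]; simp)).2
  rw [vecMul_sub, vecMul_one, sub_eq_zero] at this
  exact this.symm

theorem qw (e : Eps s E O q v f) {w : ι → F} (hw : s *ᵥ w = -w) : q *ᵥ w = 0 := by
  obtain ⟨x, hx, x1, x2⟩ := e.g.go w 0 hw (by simp)
  have hx' : q * x * q ∈ O := e.h.u2 e.qE hx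
  have qs := e.h.ev q e.qE
  apply vec_zero' e.h.s2
  · rw [mulVec_mulVec, qs, ← mulVec_mulVec, hw, mulVec_neg]
  · intro g hg
    obtain ⟨y, hy, y1, y2⟩ := e.g.go 0 g (by simp) hg
    have h1 := e.tr _ (e.h.c3 _ hx' y hy)
    have h2 : (q * (q * x * q * y - y * (q * x * q))).trace = 0 := by
      have h3 : (q * (q * x * q * y)).trace = (q * (y * (q * x * q))).trace := by
        rw [Matrix.trace_mul_comm q (y * _)]
        rw [show q * (q * x * q * y) = (q * q) * x * q * y by noncomm_ring]
        rw [show y * (q * x * q) * q = y * (q * x * (q * q)) by noncomm_ring]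
        rw [e.qq, Matrix.trace_mul_comm]
      rw [mul_sub, trace_sub, h3, sub_self]
    rw [h2, sub_mulVec, ← mulVec_mulVec, y1, mulVec_zero, zero_sub, ← mulVec_mulVec, dotProduct_neg, dotProduct_mulVec f y, y2,
      ← mulVec_mulVec, e.qv, ← mulVec_mulVec, x1] at h1
    exact neg_eq_zero.1 h1.symm

theorem qs (e : Eps s E O q v f) : q * s = q := by
  have : q * (1 - s) = 0 := by
    ext i j
    have := e.qw (w := (1 - s) *ᵥ Pi.single j 1) (by
      rw [mulVec_mulVec, mul_sub, e.h.s2, mul_one, ← neg_mulVec, neg_sub])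
    rw [mulVec_mulVec] at this
    simpa using congrFun this i
  rw [mul_sub, mul_one, sub_eq_zero] at this
  exact this.symm

theorem sq (e : Eps s E O q v f) : s * q = q := by rw [e.h.ev q e.qE, e.qs]

theorem gq (e : Eps s E O q v f) {g : ι → F} (hg : g ᵥ* s = -g) : g ᵥ* q = 0 := by
  have : g ᵥ* q = -(g ᵥ* q) := by
    conv_lhs => rw [← e.sq, ← vecMul_vecMul, hg, neg_vecMul]
  have h2 : (2:F) • (g ᵥ* q) = 0 := by
    rw [two_smul]; nth_rewrite 2 [this]; simp
  exact (smul_eq_zero.1 h2).resolve_left two_ne_zero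

theorem nt (e : Eps s E O q v f) : NT s E O := by
  refine e.h.type.resolve_right ?_
  intro hI
  have := hI.1 q e.qE q e.qE
  rw [e.qq, e.sq] at this
  exact e.q0 (idem_zero q e.qq this)

theorem qxq (e : Eps s E O q v f) {x : Matrix ι ι F} (hx : x ∈ O) : q * x * q = 0 := by
  apply dbl_zero
  have h1 := e.h.od x hx
  have : q * x * q = -(q * x * q) := by
    calc q * x * q = q * s * x * q := by rw [e.qs]
      _ = q * (s * x) * q := by rw [mul_assoc q s x]
      _ = -(q * x * (s * q)) := by rw [h1]; noncomm_ring
      _ = _ := by rw [e.sq]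
  nth_rewrite 2 [this]; simp

/-- the Peirce half component -/
def P (O : Submodule F (Matrix ι ι F)) (q x : Matrix ι ι F) : Prop := x ∈ O ∧ q * x + x * q = x

theorem exP (e : Eps s E O q v f) {w g : ι → F} (hw : s *ᵥ w = -w) (hg : g ᵥ* s = -g) :
    ∃ x, P O q x ∧ x *ᵥ v = w ∧ f ᵥ* x = g := by
  obtain ⟨x, hx, x1, x2⟩ := e.g.go w g hw hg
  have h0 := e.qxq hx
  refine ⟨q * x + x * q, ⟨e.h.c2 q e.qE x hx, ?_⟩, ?_, ?_⟩
  · rw [mul_add, add_mul, ← mul_assoc, ← mul_assoc, e.qq, h0, mul_assoc x, e.qq]; simp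
  · rw [add_mulVec, ← mulVec_mulVec, ← mulVec_mulVec, e.qv, x1, e.qw hw, zero_add]
  · rw [vecMul_add, ← vecMul_vecMul, ← vecMul_vecMul, e.fq, x2, e.gq hg, add_zero]

theorem trP (e : Eps s E O q v f) {x y : Matrix ι ι F} (hx : P O q x) (hy : y ∈ O) :
    (s * (x * y)).trace = (f ᵥ* x) ⬝ᵥ (y *ᵥ v) - (f ᵥ* y) ⬝ᵥ (x *ᵥ v) := by
  have h1 := e.tr _ (e.h.c3 x hx.1 y hy)
  rw [sub_mulVec, dotProduct_sub, ← mulVec_mulVec, ← mulVec_mulVec, dotProduct_mulVec, dotProduct_mulVec f y] at h1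
  rw [← h1]
  have hs : s * x = q * x - x * q := by
    calc s * x = s * (q * x + x * q) := by rw [hx.2]
      _ = (s * q) * x + (s * x) * q := by noncomm_ring
      _ = q * x - x * (s * q) := by rw [e.h.od x hx.1, e.sq]; rw [neg_mul, mul_assoc, e.sq, sub_eq_add_neg]
      _ = _ := by rw [e.sq]
  rw [← mul_assoc, hs]
  have := Matrix.trace_mul_comm (q * y) x
  simp only [mul_sub, sub_mul, trace_sub, mul_assoc] at *
  linear_combination this

theorem injP (e : Eps s E O q v f) {x : Matrix ι ι F} (hx : P O q x) (h1 : x *ᵥ v = 0) (h2 : f ᵥ* x = 0) : x = 0 := by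
  apply e.nt.2 x hx.1
  intro y hy
  rw [e.trP hx hy, h1, h2]; simp

theorem rhoP (e : Eps s E O q v f) {k x : Matrix ι ι F} (hk : k ∈ E) (k1 : q * k = k) (k2 : k * q = k) (hx : P O q x) :
    P O q (k * x + x * k) ∧ (k * x + x * k) *ᵥ v = x *ᵥ (k *ᵥ v) ∧ f ᵥ* (k * x + x * k) = (f ᵥ* k) ᵥ* x := by
  have h0 := e.qxq hx.1
  have sx := e.h.od x hx.1
  refine ⟨⟨e.h.c2 k hk x hx.1, ?_⟩, ?_, ?_⟩
  · have a1 : q * x * k = 0 := by rw [← k1, ← mul_assoc, h0, zero_mul]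
    have a2 : k * x * q = 0 := by rw [← k2, mul_assoc, mul_assoc, ← mul_assoc q, h0, mul_zero]
    rw [mul_add, add_mul, ← mul_assoc, ← mul_assoc, k1, a1, a2, mul_assoc x, k2]; simp
  · have : k *ᵥ (x *ᵥ v) = 0 := by
      rw [← k2, ← mulVec_mulVec, e.qw, mulVec_zero]
      rw [mulVec_mulVec, sx, neg_mulVec, ← mulVec_mulVec, e.g.sv]
    rw [add_mulVec, ← mulVec_mulVec, ← mulVec_mulVec, this, zero_add]
  · have : (f ᵥ* x) ᵥ* k = 0 := by
      rw [← k1, ← vecMul_vecMul, e.gq, zero_vecMul]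
      have : x * s = -(s * x) := by rw [sx, neg_neg]
      rw [vecMul_vecMul, this, vecMul_neg, ← vecMul_vecMul, e.g.fs]
    rw [vecMul_add, ← vecMul_vecMul, ← vecMul_vecMul, this, add_zero]

theorem symP (e : Eps s E O q v f) {k x y : Matrix ι ι F} (hk : k ∈ E) (k1 : q * k = k) (k2 : k * q = k) (hx : P O q x) (hy : P O q y) :
    ((f ᵥ* k) ᵥ* x) ⬝ᵥ (y *ᵥ v) - (f ᵥ* y) ⬝ᵥ (x *ᵥ (k *ᵥ v)) = (f ᵥ* x) ⬝ᵥ (y *ᵥ (k *ᵥ v)) - ((f ᵥ* k) ᵥ* y) ⬝ᵥ (x *ᵥ v) := by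
  obtain ⟨p1, p2, p3⟩ := e.rhoP hk k1 k2 hx
  obtain ⟨r1, r2, r3⟩ := e.rhoP hk k1 k2 hy
  have t1 := e.trP p1 hy.1
  have t2 := e.trP hx r1.1
  rw [p2, p3] at t1
  rw [r2, r3] at t2
  rw [← t1, ← t2]
  have sk := e.h.ev k hk
  have h1 := Matrix.trace_mul_comm (s * (x * y)) k
  have h2 : k * (s * (x * y)) = s * (k * (x * y)) := by rw [← mul_assoc, ← sk, mul_assoc]
  rw [h2] at h1
  simp only [mul_add, add_mul, trace_add, mul_assoc] at *
  linear_combination -h1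

theorem exk (e : Eps s E O q v f) {u g : ι → F} (hu : q *ᵥ u = u) (hg : g ᵥ* q = g) (hgu : f ⬝ᵥ u = g ⬝ᵥ v) :
    ∃ k ∈ E, q * k = k ∧ k * q = k ∧ k *ᵥ v = u ∧ f ᵥ* k = g := by
  obtain ⟨k, hk, k1, k2⟩ := e.g.ge u g (by rw [← hu, mulVec_mulVec, e.sq]) (by rw [← hg, vecMul_vecMul, e.qs]) hgu
  refine ⟨q * k * q, e.h.u1 e.qE hk, ?_, ?_, ?_, ?_⟩
  · rw [← mul_assoc, ← mul_assoc, e.qq]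
  · rw [mul_assoc, e.qq]
  · rw [← mulVec_mulVec, e.qv, ← mulVec_mulVec, k1, hu]
  · rw [← vecMul_vecMul, ← vecMul_vecMul, e.fq, k2, hg]

theorem phi (e : Eps s E O q v f) {x : Matrix ι ι F} (hx : P O q x) (hv : x *ᵥ v = 0) {w : ι → F} (hw : s *ᵥ w = -w) :
    x *ᵥ w = ((f ᵥ* x) ⬝ᵥ w / f ⬝ᵥ v) • v := by
  have r0 := e.r0
  have sx := e.h.od x hx.1
  have xs : x * s = -(s * x) := by rw [sx, neg_neg]
  have gx : ∀ g, g ᵥ* q = g → g ⬝ᵥ v = 0 → g ᵥ* x = 0 := by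
    intro g hg hgv
    obtain ⟨k, hk, k1, k2, k3, k4⟩ := e.exk (u := 0) (g := g) (by simp) hg (by simp [hgv])
    have gs : g ᵥ* s = g := by rw [← hg, vecMul_vecMul, e.qs]
    apply cov_zero' e.h.s2
    · rw [vecMul_vecMul, xs, vecMul_neg, ← vecMul_vecMul, gs]
    · intro w' hw'
      obtain ⟨y, hy, y1, y2⟩ := e.exP (w := w') (g := 0) hw' (by simp)
      have := e.symP hk k1 k2 hx hy
      rw [k3, k4, y1, hv] at this
      simpa using this
  have qx : q *ᵥ (x *ᵥ w) = x *ᵥ w := by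
    conv_rhs => rw [← hx.2, add_mulVec, ← mulVec_mulVec, ← mulVec_mulVec, e.qw hw, mulVec_zero, add_zero]
  rw [← sub_eq_zero]
  have aux : ∀ g : ι → F, g ⬝ᵥ (x *ᵥ w - ((f ᵥ* x) ⬝ᵥ w / f ⬝ᵥ v) • v) = 0 := by
    intro g
    have h1 := gx (g ᵥ* q - ((g ᵥ* q) ⬝ᵥ v / f ⬝ᵥ v) • f) (by
      rw [sub_vecMul, vecMul_vecMul, e.qq, smul_vecMul, e.fq]) (by
      rw [sub_dotProduct, smul_dotProduct, smul_eq_mul]; field_simp; simp)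
    have h2 := congrArg (fun z => z ⬝ᵥ w) h1
    simp only [sub_vecMul, smul_vecMul, sub_dotProduct, smul_dotProduct, zero_dotProduct, smul_eq_mul] at h2
    rw [← dotProduct_mulVec, ← dotProduct_mulVec, qx, ← dotProduct_mulVec g, e.qv] at h2
    rw [dotProduct_sub, dotProduct_smul, smul_eq_mul]
    rw [← h2]
    ring
  ext i
  simpa using aux (Pi.single i 1)

/-- odd covectors -/
def W (s : Matrix ι ι F) : Submodule F (ι → F) where
  carrier := {g | g ᵥ* s = -g}
  zero_mem' := by simp
  add_mem' := by
    intro a b ha hb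
    show (a + b) ᵥ* s = -(a + b)
    have ha : a ᵥ* s = -a := ha
    have hb : b ᵥ* s = -b := hb
    rw [add_vecMul, ha, hb, neg_add]
  smul_mem' := by
    intro c a ha
    show (c • a) ᵥ* s = -(c • a)
    have ha : a ᵥ* s = -a := ha
    rw [smul_vecMul, ha, smul_neg]

theorem skew_ex {ℓ : ℕ} (hl : Odd ℓ) (K : Matrix (Fin ℓ) (Fin ℓ) F) (hK : ∀ i j, K i j = - K j i) : ∃ c ≠ 0, K *ᵥ c = 0 := by
  rw [Matrix.exists_mulVec_eq_zero_iff]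
  have h1 : Kᵀ = -K := by ext i j; exact hK j i
  have h2 := congrArg Matrix.det h1
  rw [Matrix.det_transpose, Matrix.det_neg, Fintype.card_fin, hl.neg_one_pow] at h2
  have : 2 * K.det = 0 := by linear_combination h2
  exact (mul_eq_zero.1 this).resolve_left two_ne_zero

theorem rank1 (e : Eps s E O q v f) (hodd : Odd (Module.finrank F (W s))) {u : ι → F} (hu : q *ᵥ u = u) (hfu : f ⬝ᵥ u = 0) : u = 0 := by
  by_contra hu0
  obtain ⟨k, hk, k1, k2, k3, k4⟩ := e.exk (u := u) (g := 0) hu (by simp) (by simp [hfu])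
  have su : s *ᵥ u = u := by rw [← hu, mulVec_mulVec, e.sq]
  let b := Module.finBasis F (W s)
  have hbm : ∀ i, (b i : ι → F) ᵥ* s = -(b i : ι → F) := fun i => (b i).2
  choose x hx xv fx using fun i => e.exP (w := 0) (g := (b i : ι → F)) (by simp) (hbm i)
  obtain ⟨c, c0, hc⟩ := skew_ex hodd (Matrix.of fun i j => (b i : ι → F) ⬝ᵥ (x j *ᵥ u)) (by
    intro i j
    have := e.symP hk k1 k2 (hx i) (hx j)
    rw [k3, k4, fx, fx] at this
    simp only [zero_vecMul, zero_dotProduct] at this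
    simp only [of_apply]
    linear_combination -this)
  let y := ∑ j, c j • x j
  have hy : P O q y := by
    refine ⟨O.sum_mem fun j _ => O.smul_mem _ (hx j).1, ?_⟩
    simp only [y, Finset.mul_sum, Finset.sum_mul, ← Finset.sum_add_distrib, mul_smul_comm, smul_mul_assoc, ← smul_add, (hx _).2]
  have yv : y *ᵥ v = 0 := by
    simp only [y, Matrix.sum_mulVec, smul_mulVec, xv, smul_zero, Finset.sum_const_zero]
  have fy : f ᵥ* y = ((∑ j, c j • b j : W s) : ι → F) := by
    simp only [y, Matrix.vecMul_sum, vecMul_smul, fx, Submodule.coe_sum, Submodule.coe_smul]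
  have fy0 : f ᵥ* y ≠ 0 := by
    rw [fy]
    intro h0
    have h1 : (∑ j, c j • b j : W s) = 0 := Subtype.ext h0
    exact c0 (funext fun j => Fintype.linearIndependent_iff.1 b.linearIndependent c h1 j)
  have sy := e.h.od y hy.1
  have yu : y *ᵥ u = 0 := by
    apply vec_zero' e.h.s2
    · rw [mulVec_mulVec, sy, neg_mulVec, ← mulVec_mulVec, su]
    · intro g hg
      have h1 := b.sum_repr (⟨g, hg⟩ : W s)
      have h2 : g = ∑ i, (b.repr ⟨g, hg⟩ i) • (b i : ι → F) := by
        have := congrArg Subtype.val h1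
        simp only [Submodule.coe_sum, Submodule.coe_smul] at this
        exact this.symm
      rw [h2, sum_dotProduct]
      refine Finset.sum_eq_zero fun i _ => ?_
      have := congrFun hc i
      rw [smul_dotProduct]
      have h3 : (b i : ι → F) ⬝ᵥ (y *ᵥ u) = 0 := by
        simp only [mulVec, dotProduct, of_apply, Pi.zero_apply] at this
        rw [← this]
        simp only [y, Matrix.sum_mulVec, smul_mulVec, dotProduct_sum, dotProduct_smul, smul_eq_mul]
        refine Finset.sum_congr rfl fun j _ => ?_
        rw [mul_comm]; rfl
      rw [h3, smul_zero]
  obtain ⟨p1, p2, p3⟩ := e.rhoP hk k1 k2 hy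
  have z := e.injP p1 (by rw [p2, k3, yu]) (by rw [p3, k4, zero_vecMul])
  have fys : (f ᵥ* y) ᵥ* s = -(f ᵥ* y) := by
    have : y * s = -(s * y) := by rw [sy, neg_neg]
    rw [vecMul_vecMul, this, vecMul_neg, ← vecMul_vecMul, e.g.fs]
  apply fy0
  apply cov_zero' e.h.s2 fys
  intro w hw
  have h1 := congrArg (fun M => M *ᵥ w) z
  simp only [add_mulVec, ← mulVec_mulVec, zero_mulVec] at h1
  have kw : k *ᵥ w = 0 := by rw [← k2, ← mulVec_mulVec, e.qw hw, mulVec_zero]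
  rw [kw, mulVec_zero, add_zero, e.phi hy yv hw, mulVec_smul, k3] at h1
  have := (smul_eq_zero.1 h1).resolve_right hu0
  exact (div_eq_zero_iff.1 this).resolve_right e.r0

theorem mat_sum (X Y Z : Matrix ι ι F) : X * Y * Z = ∑ j, vecMulVec (X *ᵥ (Y *ᵥ Pi.single j 1)) (Pi.single j 1 ᵥ* Z) := by
  ext a b
  simp only [Matrix.sum_apply, vecMulVec_apply, mulVec_mulVec, mul_apply (M := X * Y)]
  simp

theorem fin (e : Eps s E O q v f) (hodd : Odd (Module.finrank F (W s))) : evs s ≤ E ∧ ods s ≤ O := by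
  have r0 := e.r0
  have qx : ∀ x, q *ᵥ x = (f ⬝ᵥ x / f ⬝ᵥ v) • v := by
    intro x
    rw [← sub_eq_zero]
    apply e.rank1 hodd
    · rw [mulVec_sub, mulVec_mulVec, e.qq, mulVec_smul, e.qv]
    · rw [dotProduct_sub, dotProduct_mulVec, e.fq, dotProduct_smul, smul_eq_mul]; field_simp; simp
  have hp : vecMulVec v f = (f ⬝ᵥ v) • q := by
    ext i j
    have := congrFun (qx (Pi.single j 1)) i
    simp only [mulVec_single_one, col_apply, dotProduct_single, mul_one, Pi.smul_apply, smul_eq_mul] at this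
    rw [vecMulVec_apply, Matrix.smul_apply, this, smul_eq_mul]; field_simp
  have hpE : vecMulVec v f ∈ E := by rw [hp]; exact E.smul_mem _ e.qE
  have w1 : ∀ w, s *ᵥ w = w → vecMulVec w f ∈ E := by
    intro w hw
    obtain ⟨b, hb, b1, b2⟩ := e.g.ge w ((f ⬝ᵥ w / f ⬝ᵥ v) • f) hw (by rw [smul_vecMul, e.g.fs]) (by rw [smul_dotProduct, smul_eq_mul]; field_simp)
    have := e.h.c1 b hb _ hpE
    rw [mul_vecMulVec, vecMulVec_mul, b1, b2, vecMulVec_smul] at this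
    exact (Submodule.add_mem_iff_left _ (E.smul_mem _ hpE)).1 this
  have w2 : ∀ g, g ᵥ* s = g → vecMulVec v g ∈ E := by
    intro g hg
    obtain ⟨b, hb, b1, b2⟩ := e.g.ge ((g ⬝ᵥ v / f ⬝ᵥ v) • v) g (by rw [mulVec_smul, e.g.sv]) hg (by rw [dotProduct_smul, smul_eq_mul]; field_simp)
    have := e.h.c1 b hb _ hpE
    rw [mul_vecMulVec, vecMulVec_mul, b1, b2, smul_vecMulVec] at this
    exact (Submodule.add_mem_iff_right _ (E.smul_mem _ hpE)).1 this
  have w3 : ∀ w, s *ᵥ w = -w → vecMulVec w f ∈ O := by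
    intro w hw
    obtain ⟨b, hb, b1, b2⟩ := e.g.go w 0 hw (by simp)
    have := e.h.c2 _ hpE b hb
    rw [mul_vecMulVec, vecMulVec_mul, b1, b2, vecMulVec_zero, zero_add] at this
    exact this
  have w4 : ∀ g, g ᵥ* s = -g → vecMulVec v g ∈ O := by
    intro g hg
    obtain ⟨b, hb, b1, b2⟩ := e.g.go 0 g (by simp) hg
    have := e.h.c2 _ hpE b hb
    rw [mul_vecMulVec, vecMulVec_mul, b1, b2, zero_vecMulVec, add_zero] at this
    exact this
  have m1 : ∀ w g : ι → F, vecMulVec w f * vecMulVec v g = (f ⬝ᵥ v) • vecMulVec w g := by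
    intro w g; rw [vecMulVec_mul_vecMulVec, vecMulVec_smul]
  have m2 : ∀ w g : ι → F, vecMulVec v g * vecMulVec w f = (g ⬝ᵥ w) • vecMulVec v f := by
    intro w g; rw [vecMulVec_mul_vecMulVec, vecMulVec_smul]
  have ee : ∀ w g, s *ᵥ w = w → g ᵥ* s = g → vecMulVec w g ∈ E := by
    intro w g hw hg
    have := e.h.c1 _ (w1 w hw) _ (w2 g hg)
    rw [m1, m2] at this
    exact (Submodule.smul_mem_iff _ r0).1 ((Submodule.add_mem_iff_left _ (E.smul_mem _ hpE)).1 this)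
  have oo : ∀ w g, s *ᵥ w = -w → g ᵥ* s = -g → vecMulVec w g ∈ E := by
    intro w g hw hg
    have := e.h.c3 _ (w3 w hw) _ (w4 g hg)
    rw [m1, m2, sub_eq_add_neg] at this
    exact (Submodule.smul_mem_iff _ r0).1 ((Submodule.add_mem_iff_left _ (E.neg_mem (E.smul_mem _ hpE))).1 this)
  have dot0 : ∀ {w g : ι → F}, g ⬝ᵥ (s *ᵥ w) = -(g ⬝ᵥ w) → g ᵥ* s = g → g ⬝ᵥ w = 0 := by
    intro w g h1 h2
    rw [dotProduct_mulVec, h2] at h1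
    have : 2 * (g ⬝ᵥ w) = 0 := by linear_combination h1
    exact (mul_eq_zero.1 this).resolve_left two_ne_zero
  have eo : ∀ w g, s *ᵥ w = w → g ᵥ* s = -g → vecMulVec w g ∈ O := by
    intro w g hw hg
    have := e.h.c2 _ (w1 w hw) _ (w4 g hg)
    have hz : g ⬝ᵥ w = 0 := by
      have h1 : g ⬝ᵥ (s *ᵥ w) = g ⬝ᵥ w := by rw [hw]
      rw [dotProduct_mulVec, hg, neg_dotProduct] at h1
      have : 2 * (g ⬝ᵥ w) = 0 := by linear_combination -h1
      exact (mul_eq_zero.1 this).resolve_left two_ne_zero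
    rw [m1, m2, hz, zero_smul, add_zero] at this
    exact (Submodule.smul_mem_iff _ r0).1 this
  have oe : ∀ w g, s *ᵥ w = -w → g ᵥ* s = g → vecMulVec w g ∈ O := by
    intro w g hw hg
    have := e.h.c2 _ (w2 g hg) _ (w3 w hw)
    have hz : g ⬝ᵥ w = 0 := dot0 (by rw [hw, dotProduct_neg]) hg
    rw [m1, m2, hz, zero_smul, zero_add] at this
    exact (Submodule.smul_mem_iff _ r0).1 this
  have s2 := e.h.s2
  have a1 : ∀ w, s *ᵥ ((1 + s) *ᵥ w) = (1 + s) *ᵥ w := by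
    intro w; rw [mulVec_mulVec, mul_add, s2, mul_one, add_comm]
  have a2 : ∀ w, s *ᵥ ((1 - s) *ᵥ w) = -((1 - s) *ᵥ w) := by
    intro w; rw [mulVec_mulVec, mul_sub, s2, mul_one, ← neg_mulVec, neg_sub]
  have a3 : ∀ w, (w ᵥ* (1 + s)) ᵥ* s = w ᵥ* (1 + s) := by
    intro w; rw [vecMul_vecMul, add_mul, s2, one_mul, add_comm]
  have a4 : ∀ w, (w ᵥ* (1 - s)) ᵥ* s = -(w ᵥ* (1 - s)) := by
    intro w; rw [vecMul_vecMul, sub_mul, s2, one_mul, ← vecMul_neg, neg_sub]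
  have h4 : (4:F) ≠ 0 := by norm_num
  constructor
  · intro X hX
    have hX : s * X = X * s := hX
    have : (4:F) • X = (1 + s) * X * (1 + s) + (1 - s) * X * (1 - s) := by
      have h5 : s * X * s = X := by rw [hX, mul_assoc, s2, mul_one]
      have : (1 + s) * X * (1 + s) + (1 - s) * X * (1 - s) = 2 • X + 2 • (s * X * s) := by noncomm_ring
      rw [this, h5, ← add_smul, show (4:F) = ((4:ℕ):F) by norm_num, Nat.cast_smul_eq_nsmul]
    refine (Submodule.smul_mem_iff _ h4).1 ?_
    rw [this, mat_sum, mat_sum]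
    exact E.add_mem (E.sum_mem fun j _ => ee _ _ (a1 _) (a3 _)) (E.sum_mem fun j _ => oo _ _ (a2 _) (a4 _))
  · intro X hX
    have hX : s * X = -(X * s) := hX
    have : (4:F) • X = (1 + s) * X * (1 - s) + (1 - s) * X * (1 + s) := by
      have h5 : s * X * s = -X := by rw [hX, neg_mul, mul_assoc, s2, mul_one]
      have : (1 + s) * X * (1 - s) + (1 - s) * X * (1 + s) = 2 • X - 2 • (s * X * s) := by noncomm_ring
      rw [this, h5, smul_neg, sub_neg_eq_add, ← add_smul, show (4:F) = ((4:ℕ):F) by norm_num, Nat.cast_smul_eq_nsmul]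
    refine (Submodule.smul_mem_iff _ h4).1 ?_
    rw [this, mat_sum, mat_sum]
    exact O.add_mem (O.sum_mem fun j _ => eo _ _ (a1 _) (a4 _)) (O.sum_mem fun j _ => oe _ _ (a2 _) (a3 _))

end Eps

theorem good_full [IsAlgClosed F] (h : Sup s E O) (h1 : (1 : Matrix ι ι F) ∈ E) {v f : ι → F} (hg : Good s E O v f)
    (hodd : Odd (Module.finrank F (Eps.W s))) : evs s ≤ E ∧ ods s ≤ O := by
  obtain ⟨i, hi⟩ := Function.ne_iff.1 hg.v0
  have : Nonempty ι := ⟨i⟩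
  let φ : Matrix ι ι F →ₗ[F] F :=
    { toFun := fun b => f ⬝ᵥ (b *ᵥ v)
      map_add' := by intro a b; rw [add_mulVec, dotProduct_add]
      map_smul' := by intro a b; rw [smul_mulVec, dotProduct_smul]; rfl }
  obtain ⟨q, hq, hb⟩ := h.reprE φ
  obtain ⟨q, ⟨v, f, g, qE, tr⟩, qq, q0⟩ := idem_q h h1 (q := q) ⟨v, f, hg, hq, hb⟩
  exact Eps.fin (q := q) (v := v) (f := f) ⟨h, h1, g, qE, tr, qq, q0⟩ hodd

end Str
end SJ

open Matrix
set_option linter.unusedSectionVars false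
set_option linter.unusedSimpArgs false
set_option linter.unusedVariables false
namespace SJ
section Str
variable {F : Type*} [Field F] {ι : Type*} [Fintype ι] [DecidableEq ι]
variable [CharZero F] {s : Matrix ι ι F} {E O : Submodule F (Matrix ι ι F)}

theorem exists_cov (s2 : s * s = 1) {v : ι → F} (v0 : v ≠ 0) (sv : s *ᵥ v = v) : ∃ φ : ι → F, φ ᵥ* s = φ ∧ φ ⬝ᵥ v = 1 := by
  obtain ⟨i, hi⟩ := Function.ne_iff.1 v0
  refine ⟨(2 * v i)⁻¹ • (Pi.single i 1 + Pi.single i 1 ᵥ* s), ?_, ?_⟩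
  · rw [smul_vecMul, add_vecMul, vecMul_vecMul, s2, vecMul_one, add_comm]
  · rw [smul_dotProduct, add_dotProduct, ← dotProduct_mulVec, sv]
    simp only [single_dotProduct, one_mul, smul_eq_mul]
    have : v i ≠ 0 := hi
    field_simp; norm_num

theorem exists_vec (s2 : s * s = 1) {f : ι → F} (f0 : f ≠ 0) (fs : f ᵥ* s = f) : ∃ ψ : ι → F, s *ᵥ ψ = ψ ∧ f ⬝ᵥ ψ = 1 := by
  obtain ⟨i, hi⟩ := Function.ne_iff.1 f0
  refine ⟨(2 * f i)⁻¹ • (Pi.single i 1 + s *ᵥ Pi.single i 1), ?_, ?_⟩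
  · rw [mulVec_smul, mulVec_add, mulVec_mulVec, s2, one_mulVec, add_comm]
  · rw [dotProduct_smul, dotProduct_add, dotProduct_mulVec, fs]
    simp only [dotProduct_single, mul_one, smul_eq_mul]
    have : f i ≠ 0 := hi
    field_simp; norm_num

theorem vmv_mulVec (u v w : ι → F) : vecMulVec u v *ᵥ w = (v ⬝ᵥ w) • u := by
  rw [vecMulVec_mulVec]; ext i; simp [mul_comm]

theorem good_of (s2 : s * s = 1) {E' O' : Submodule F (Matrix ι ι F)} {p : Matrix ι ι F} (sp : s * p = p * s)
    (hE0 : ∀ a ∈ E, a * p = 0 ∧ p * a = 0) (hO0 : ∀ a ∈ O, a * p = 0 ∧ p * a = 0) (hp : (1 + s) * p ≠ 0)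
    (hE : ∀ X, s * X = X * s → X ∈ E ⊔ E') (hO : ∀ X, s * X = -(X * s) → X ∈ O ⊔ O') :
    ∃ v f, Good s E' O' v f := by
  set M := (1 + s) * p with hM
  have hM' : M = p * (1 + s) := by rw [hM, add_mul, mul_add, sp, one_mul, mul_one]
  have sM : s * M = M := by rw [hM, ← mul_assoc, mul_add, s2, mul_one, add_comm]
  have Ms : M * s = M := by rw [hM', mul_assoc, add_mul, s2, one_mul, add_comm]
  have aM : ∀ a, a * p = 0 → a * M = 0 := by intro a h; rw [hM', ← mul_assoc, h, zero_mul]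
  have Ma : ∀ a, p * a = 0 → M * a = 0 := by intro a h; rw [hM, mul_assoc, h, mul_zero]
  obtain ⟨i, j, hij⟩ : ∃ i j, M i j ≠ 0 := by
    by_contra hc
    push Not at hc
    exact hp (by ext i j; exact hc i j)
  have v0 : M *ᵥ Pi.single j 1 ≠ 0 := by
    intro h; apply hij; simpa using congrFun h i
  have f0 : Pi.single i 1 ᵥ* M ≠ 0 := by
    intro h; apply hij; simpa using congrFun h j
  have sv : s *ᵥ (M *ᵥ Pi.single j 1) = M *ᵥ Pi.single j 1 := by rw [mulVec_mulVec, sM]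
  have fs : (Pi.single i 1 ᵥ* M) ᵥ* s = Pi.single i 1 ᵥ* M := by rw [vecMul_vecMul, Ms]
  have av : ∀ a, a * p = 0 → a *ᵥ (M *ᵥ Pi.single j 1) = 0 := by
    intro a h; rw [mulVec_mulVec, aM a h, zero_mulVec]
  have fa : ∀ a, p * a = 0 → (Pi.single i 1 ᵥ* M) ᵥ* a = 0 := by
    intro a h; rw [vecMul_vecMul, Ma a h, vecMul_zero]
  revert av fa
  generalize M *ᵥ Pi.single j 1 = v at *
  generalize Pi.single i 1 ᵥ* M = f at *
  intro av fa
  obtain ⟨φ, φs, φv⟩ := exists_cov s2 v0 sv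
  obtain ⟨ψ, sψ, fψ⟩ := exists_vec s2 f0 fs
  refine ⟨v, f, v0, f0, sv, fs, ?_, ?_⟩
  · intro w g hw hg hc
    obtain ⟨a, ha, b, hb, hab⟩ := Submodule.mem_sup.1 (hE (vecMulVec w φ + vecMulVec ψ g - (f ⬝ᵥ w) • vecMulVec ψ φ) (by
      simp only [mul_sub, sub_mul, mul_add, add_mul, mul_smul_comm, smul_mul_assoc, mul_vecMulVec, vecMulVec_mul, hw, φs, sψ, hg]))
    have e1 := congrArg (fun X => X *ᵥ v) hab
    have e2 := congrArg (fun X => f ᵥ* X) hab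
    simp only [add_mulVec, sub_mulVec, smul_mulVec, vmv_mulVec, av a (hE0 a ha).1, φv, ← hc, one_smul, zero_add] at e1
    simp only [vecMul_add, vecMul_sub, vecMul_smul, vecMul_vecMulVec, fa a (hE0 a ha).2, fψ, one_smul, zero_add] at e2
    refine ⟨b, hb, ?_, ?_⟩
    · rw [e1]; abel
    · rw [e2]; abel
  · intro w g hw hg
    have z1 : f ⬝ᵥ w = 0 := by
      have h1 : f ⬝ᵥ (s *ᵥ w) = -(f ⬝ᵥ w) := by rw [hw, dotProduct_neg]
      rw [dotProduct_mulVec, fs] at h1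
      have : 2 * (f ⬝ᵥ w) = 0 := by linear_combination h1
      exact (mul_eq_zero.1 this).resolve_left two_ne_zero
    have z2 : g ⬝ᵥ v = 0 := by
      have h1 : g ⬝ᵥ (s *ᵥ v) = g ⬝ᵥ v := by rw [sv]
      rw [dotProduct_mulVec, hg, neg_dotProduct] at h1
      have : 2 * (g ⬝ᵥ v) = 0 := by linear_combination -h1
      exact (mul_eq_zero.1 this).resolve_left two_ne_zero
    obtain ⟨a, ha, b, hb, hab⟩ := Submodule.mem_sup.1 (hO (vecMulVec w φ + vecMulVec ψ g) (by
      simp only [mul_add, add_mul, mul_vecMulVec, vecMulVec_mul, hw, φs, sψ, hg, neg_vecMulVec, vecMulVec_neg]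
      abel))
    have e1 := congrArg (fun X => X *ᵥ v) hab
    have e2 := congrArg (fun X => f ᵥ* X) hab
    simp only [add_mulVec, vmv_mulVec, av a (hO0 a ha).1, φv, z2, one_smul, zero_add, zero_smul, add_zero] at e1
    simp only [vecMul_add, vecMul_vecMulVec, fa a (hO0 a ha).2, fψ, z1, one_smul, zero_add, zero_smul] at e2
    exact ⟨b, hb, e1, e2⟩

theorem caseII [IsAlgClosed F] {E' O' : Submodule F (Matrix ι ι F)} (h' : Sup s E' O') (h1 : (1 : Matrix ι ι F) ∈ E')
    {p : Matrix ι ι F} (sp : s * p = p * s) (p0 : p ≠ 0)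
    (hE0 : ∀ a ∈ E, a * p = 0 ∧ p * a = 0) (hO0 : ∀ a ∈ O, a * p = 0 ∧ p * a = 0)
    (hE : ∀ X, s * X = X * s → X ∈ E ⊔ E') (hO : ∀ X, s * X = -(X * s) → X ∈ O ⊔ O')
    (w1 : Odd (Module.finrank F (Eps.W s))) (w2 : Odd (Module.finrank F (Eps.W (-s)))) :
    evs s ≤ E' ∧ ods s ≤ O' := by
  have s2 := h'.s2
  by_cases hp : (1 + s) * p = 0
  · have hp' : (1 + -s) * p ≠ 0 := by
      intro h0
      apply p0
      apply dbl_zero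
      calc p + p = (1 + s) * p + (1 + -s) * p := by noncomm_ring
        _ = 0 := by rw [hp, h0, add_zero]
    obtain ⟨v, f, hg⟩ := good_of (s := -s) (E := E) (O := O) (E' := E') (O' := O') (by rw [neg_mul_neg, s2]) (by rw [neg_mul, sp, mul_neg]) hE0 hO0 hp'
      (by intro X hX; apply hE; rw [neg_mul, mul_neg] at hX; exact neg_injective hX)
      (by intro X hX; apply hO; rw [neg_mul, mul_neg] at hX; exact neg_injective hX)
    have := good_full h'.neg h1 hg w2
    constructor
    · intro X hX
      have hX : s * X = X * s := hX
      apply this.1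
      show -s * X = X * -s
      rw [neg_mul, mul_neg, hX]
    · intro X hX
      have hX : s * X = -(X * s) := hX
      apply this.2
      show -s * X = -(X * -s)
      rw [neg_mul, mul_neg, hX]
  · obtain ⟨v, f, hg⟩ := good_of s2 sp hE0 hO0 hp hE hO
    exact good_full h' h1 hg w1

theorem main_abs [IsAlgClosed F] [Nonempty ι] {E' O' : Submodule F (Matrix ι ι F)} (h : Sup s E O) (h' : Sup s E' O')
    {n m : ℕ} (hn : Odd n) (hm : Odd m) (hc : Fintype.card ι = n + m) (htr : s.trace = (n:F) - m)
    (hd : Module.finrank F (ods s) = 2 * (n * m))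
    (full : ∀ E O : Submodule F (Matrix ι ι F), Sup s E O → 1 ∈ E → ods s ≤ O → evs s ≤ E)
    (hE : ∀ X, s * X = X * s → X ∈ E ⊔ E') (hO : ∀ X, s * X = -(X * s) → X ∈ O ⊔ O')
    (w1 : Odd (Module.finrank F (Eps.W s))) (w2 : Odd (Module.finrank F (Eps.W (-s))))
    (p : ¬ (evs s ≤ E ∧ ods s ≤ O)) (p' : ¬ (evs s ≤ E' ∧ ods s ≤ O')) : False := by
  obtain ⟨u, uE, uu, u1, u2⟩ := h.unit
  obtain ⟨u', uE', uu', u1', u2'⟩ := h'.unit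
  have e1 : ∀ a ∈ E, a * (1 - u) = 0 ∧ (1 - u) * a = 0 := fun a ha => by
    rw [mul_sub, sub_mul, mul_one, one_mul, (u1 a ha).1, (u1 a ha).2]; simp
  have e2 : ∀ a ∈ O, a * (1 - u) = 0 ∧ (1 - u) * a = 0 := fun a ha => by
    rw [mul_sub, sub_mul, mul_one, one_mul, (u2 a ha).1, (u2 a ha).2]; simp
  have e1' : ∀ a ∈ E', a * (1 - u') = 0 ∧ (1 - u') * a = 0 := fun a ha => by
    rw [mul_sub, sub_mul, mul_one, one_mul, (u1' a ha).1, (u1' a ha).2]; simp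
  have e2' : ∀ a ∈ O', a * (1 - u') = 0 ∧ (1 - u') * a = 0 := fun a ha => by
    rw [mul_sub, sub_mul, mul_one, one_mul, (u2' a ha).1, (u2' a ha).2]; simp
  have su : s * (1 - u) = (1 - u) * s := by rw [mul_sub, sub_mul, mul_one, one_mul, h.ev u uE]
  have su' : s * (1 - u') = (1 - u') * s := by rw [mul_sub, sub_mul, mul_one, one_mul, h'.ev u' uE']
  by_cases hu : 1 - u = 0
  · have hu1 : (1 : Matrix ι ι F) ∈ E := by rw [sub_eq_zero.1 hu]; exact uE
    by_cases hu' : 1 - u' = 0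
    · have hu1' : (1 : Matrix ι ι F) ∈ E' := by rw [sub_eq_zero.1 hu']; exact uE'
      have key : ∀ {E O : Submodule F (Matrix ι ι F)}, Sup s E O → 1 ∈ E → ¬ (evs s ≤ E ∧ ods s ≤ O) → NT s E O → Module.finrank F O < n * m := by
        intro E O h h1 p hN
        refine (lemma_N h h1 hN hn hm hc htr).resolve_right ?_
        intro h2
        have hle : O ≤ ods s := fun x hx => h.od x hx
        have := Submodule.eq_of_le_of_finrank_le hle (by rw [hd]; exact h2)
        exact p ⟨full E O h h1 this.ge, this.ge⟩
      have key2 : ∀ {E O : Submodule F (Matrix ι ι F)}, Sup s E O → IT s E O → Module.finrank F O ≤ n * m := by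
        intro E O h hI
        have := IT.dim h hI
        rw [hd] at this
        omega
      have hsum : 2 * (n * m) ≤ Module.finrank F O + Module.finrank F O' := by
        rw [← hd]
        have h3 : ods s ≤ O ⊔ O' := fun x hx => hO x hx
        exact (Submodule.finrank_mono h3).trans (Submodule.finrank_add_le_finrank_add_finrank O O')
      rcases h.type with hN | hI
      · have k1 := key h hu1 p hN
        rcases h'.type with hN' | hI'
        · have k2 := key h' hu1' p' hN'
          omega
        · have k2 := key2 h' hI'
          omega
      · have k1 := key2 h hI
        rcases h'.type with hN' | hI'
        · have k2 := key h' hu1' p' hN'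
          omega
        · exact not_both_IT h h' (hE s rfl) hI hI'
    · refine p (caseII (E := E') (O := O') h hu1 su' hu' e1' e2' ?_ ?_ w1 w2)
      · intro X hX; rw [sup_comm]; exact hE X hX
      · intro X hX; rw [sup_comm]; exact hO X hX
  · by_cases hu' : 1 - u' = 0
    · have hu1' : (1 : Matrix ι ι F) ∈ E' := by rw [sub_eq_zero.1 hu']; exact uE'
      exact p' (caseII (E := E) (O := O) h' hu1' su hu e1 e2 hE hO w1 w2)
    · refine Or.elim (sandwich (P := 1 - u) (Q := 1 - u') ?_) hu hu'
      intro X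
      have z : ∀ Y ∈ (E ⊔ E') ⊔ (O ⊔ O'), (1 - u) * Y * (1 - u') = 0 := by
        intro Y hY
        obtain ⟨y, hy, z, hz, rfl⟩ := Submodule.mem_sup.1 hY
        obtain ⟨a, ha, b, hb, rfl⟩ := Submodule.mem_sup.1 hy
        obtain ⟨c, hc, d, hd, rfl⟩ := Submodule.mem_sup.1 hz
        have i1 : (1 - u) * b * (1 - u') = 0 := by rw [mul_assoc, (e1' b hb).1, mul_zero]
        have i2 : (1 - u) * d * (1 - u') = 0 := by rw [mul_assoc, (e2' d hd).1, mul_zero]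
        rw [mul_add, mul_add, mul_add, (e1 a ha).2, (e2 c hc).2, zero_add, zero_add, add_mul, i1, i2, add_zero]
      apply z
      have hX : X ∈ evs s ⊔ ods s := by
        rw [(ev_od_compl h.s2).sup_eq_top]; trivial
      obtain ⟨a, ha, b, hb, rfl⟩ := Submodule.mem_sup.1 hX
      exact Submodule.add_mem_sup (hE a ha) (hO b hb)

theorem finrank_W (s2 : s * s = 1) (st : sᵀ = s) {k : ℕ} (htr : s.trace = (Fintype.card ι : F) - 2 * k) :
    Module.finrank F (Eps.W s) = k := by
  let e : Matrix ι ι F := (2:F)⁻¹ • (1 - s)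
  have he : e * e = e := by
    have : (1 - s) * (1 - s) = (2:F) • (1 - s) := by
      rw [two_smul]
      calc (1 - s) * (1 - s) = 1 - s - s + s * s := by noncomm_ring
        _ = _ := by rw [s2]; abel
    simp only [e, smul_mul_assoc, mul_smul_comm, this, smul_smul]
    congr 1
    norm_num
  have h1 := tr_idem e he
  have h2 : e.trace = k := by
    simp only [e, trace_smul, trace_sub, trace_one, htr, smul_eq_mul]
    ring
  rw [h2] at h1
  have h3 : k = e.rank := by exact_mod_cast h1
  rw [h3]
  have gs : ∀ g : ι → F, g ᵥ* s = s *ᵥ g := by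
    intro g; conv_lhs => rw [← st, vecMul_transpose]
  have : Eps.W s = LinearMap.range e.mulVecLin := by
    ext g
    constructor
    · intro hg
      have hg : g ᵥ* s = -g := hg
      refine ⟨g, ?_⟩
      rw [gs] at hg
      simp only [mulVecLin_apply, e, smul_mulVec, sub_mulVec, one_mulVec, hg, sub_neg_eq_add, ← two_smul F g, smul_smul]
      norm_num
    · rintro ⟨x, rfl⟩
      show _ ᵥ* s = _
      rw [gs]
      simp only [mulVecLin_apply, e, smul_mulVec, mulVec_smul, mulVec_mulVec, mul_sub, s2, mul_one, ← smul_neg, ← neg_mulVec, neg_sub]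
  rw [this]; rfl

end Str
end SJ

open Matrix
set_option linter.unusedSectionVars false
set_option linter.unusedSimpArgs false
set_option linter.unusedVariables false
namespace SJ
section Fin
variable {F : Type*} [Field F] [CharZero F] {n m : ℕ}

def sg (F : Type*) [Field F] (n m : ℕ) : Fin n ⊕ Fin m → F := fun i => if pty i then -1 else 1

def sm (F : Type*) [Field F] (n m : ℕ) : MJ F n m := diagonal (sg F n m)

theorem sm2 : sm F n m * sm F n m = 1 := by
  rw [sm, diagonal_mul_diagonal, ← diagonal_one]
  congr 1
  ext i
  simp only [sg]; split_ifs <;> simp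

theorem sm_mul (X : MJ F n m) (i j) : (sm F n m * X) i j = sg F n m i * X i j := by
  rw [sm, diagonal_mul]

theorem mul_sm (X : MJ F n m) (i j) : (X * sm F n m) i j = X i j * sg F n m j := by
  rw [sm, mul_diagonal]

theorem mem_ev (X : MJ F n m) : X ∈ evenSub F n m ↔ sm F n m * X = X * sm F n m := by
  constructor
  · intro h
    ext i j
    rw [sm_mul, mul_sm]
    by_cases hp : pty i = pty j
    · simp only [sg, hp]; ring
    · rw [h i j hp]; simp
  · intro h i j hp
    have := congrFun (congrFun h i) j
    rw [sm_mul, mul_sm] at this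
    have h2 : 2 * X i j = 0 := by
      simp only [sg] at this
      cases hi : pty i <;> cases hj : pty j <;> simp [hi, hj] at hp this
      · linear_combination this
      · linear_combination -this
    exact (mul_eq_zero.1 h2).resolve_left two_ne_zero

theorem mem_od (X : MJ F n m) : X ∈ oddSub F n m ↔ sm F n m * X = -(X * sm F n m) := by
  constructor
  · intro h
    ext i j
    rw [Matrix.neg_apply, sm_mul, mul_sm]
    by_cases hp : pty i = pty j
    · rw [h i j hp]; simp
    · simp only [sg]
      cases hi : pty i <;> cases hj : pty j <;> simp [hi, hj] at hp ⊢
  · intro h i j hp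
    have := congrFun (congrFun h i) j
    rw [Matrix.neg_apply, sm_mul, mul_sm] at this
    have h2 : 2 * X i j = 0 := by
      simp only [sg] at this
      cases hi : pty i <;> cases hj : pty j <;> simp [hi, hj] at hp this
      · linear_combination this
      · linear_combination -this
    exact (mul_eq_zero.1 h2).resolve_left two_ne_zero

theorem ev_eq : evenSub F n m = evs (sm F n m) := by ext X; exact mem_ev X
theorem od_eq : oddSub F n m = ods (sm F n m) := by ext X; exact mem_od X

theorem oddPart_ev {X : MJ F n m} (h : X ∈ evenSub F n m) : oddPart F X = 0 := by
  ext i j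
  simp only [oddPart, of_apply, Matrix.zero_apply]
  split_ifs with hp
  · rfl
  · exact h i j hp

theorem oddPart_od {X : MJ F n m} (h : X ∈ oddSub F n m) : oddPart F X = X := by
  ext i j
  simp only [oddPart, of_apply]
  split_ifs with hp
  · exact (h i j hp).symm
  · rfl

theorem oddPart_add (X Y : MJ F n m) : oddPart F (X + Y) = oddPart F X + oddPart F Y := by
  ext i j
  simp only [oddPart, of_apply, Matrix.add_apply]
  split_ifs <;> simp

theorem jadd_left (X Y Z : MJ F n m) : jmul (X + Y) Z = jmul X Z + jmul Y Z := by
  simp only [jmul, oddPart_add, mul_add, add_mul, smul_add]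
  abel

theorem jadd_right (X Y Z : MJ F n m) : jmul X (Y + Z) = jmul X Y + jmul X Z := by
  simp only [jmul, oddPart_add, mul_add, add_mul, smul_add]
  abel

theorem jev_left {a : MJ F n m} (x : MJ F n m) (h : a ∈ evenSub F n m) : jmul a x = (2:F)⁻¹ • (a * x + x * a) := by
  rw [jmul, oddPart_ev h, mul_zero, sub_zero]

theorem jev_right {a : MJ F n m} (x : MJ F n m) (h : a ∈ evenSub F n m) : jmul x a = (2:F)⁻¹ • (x * a + a * x) := by
  rw [jmul, oddPart_ev h, zero_mul, sub_zero]

theorem jod {x y : MJ F n m} (hx : x ∈ oddSub F n m) (hy : y ∈ oddSub F n m) : jmul x y = (2:F)⁻¹ • (x * y - y * x) := by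
  rw [jmul, oddPart_od hx, oddPart_od hy]
  have : y * x = (2:F)⁻¹ • (y * x + y * x) := by
    rw [← two_smul F (y * x), smul_smul, inv_mul_cancel₀ two_ne_zero, one_smul]
  generalize y * x = b at *
  generalize x * y = a at *
  have h2 : (2:F)⁻¹ • (a + b) - (2:F)⁻¹ • (b + b) = (2:F)⁻¹ • (a - b) := by
    rw [← smul_sub]; congr 1; abel
  rw [← h2, ← this]

theorem half_iff {K : Submodule F (MJ F n m)} {x : MJ F n m} : (2:F)⁻¹ • x ∈ K ↔ x ∈ K :=
  Submodule.smul_mem_iff _ (inv_ne_zero two_ne_zero)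

theorem ev_od_zero {x : MJ F n m} (h1 : x ∈ evenSub F n m) (h2 : x ∈ oddSub F n m) : x = 0 := by
  ext i j
  by_cases hp : pty i = pty j
  · exact h2 i j hp
  · exact h1 i j hp

theorem ee_ev {a b : MJ F n m} (ha : a ∈ evenSub F n m) (hb : b ∈ evenSub F n m) : a * b + b * a ∈ evenSub F n m := by
  rw [mem_ev] at *
  have h1 : sm F n m * (a * b) = (a * b) * sm F n m := by rw [← mul_assoc, ha, mul_assoc, hb, mul_assoc]
  have h2 : sm F n m * (b * a) = (b * a) * sm F n m := by rw [← mul_assoc, hb, mul_assoc, ha, mul_assoc]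
  rw [mul_add, add_mul, h1, h2]

theorem eo_od {a b : MJ F n m} (ha : a ∈ evenSub F n m) (hb : b ∈ oddSub F n m) : a * b + b * a ∈ oddSub F n m := by
  rw [mem_ev] at ha
  rw [mem_od] at *
  have h1 : sm F n m * (a * b) = -((a * b) * sm F n m) := by rw [← mul_assoc, ha, mul_assoc, hb, mul_neg, mul_assoc]
  have h2 : sm F n m * (b * a) = -((b * a) * sm F n m) := by rw [← mul_assoc, hb, neg_mul, mul_assoc, ha, mul_assoc]
  rw [mul_add, add_mul, h1, h2, neg_add]

theorem oo_ev {a b : MJ F n m} (ha : a ∈ oddSub F n m) (hb : b ∈ oddSub F n m) : a * b - b * a ∈ evenSub F n m := by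
  rw [mem_ev]
  rw [mem_od] at *
  have h1 : sm F n m * (a * b) = (a * b) * sm F n m := by rw [← mul_assoc, ha, neg_mul, mul_assoc, hb, mul_neg, neg_neg, mul_assoc]
  have h2 : sm F n m * (b * a) = (b * a) * sm F n m := by rw [← mul_assoc, hb, neg_mul, mul_assoc, ha, mul_neg, neg_neg, mul_assoc]
  rw [mul_sub, sub_mul, h1, h2]

theorem toSup {A : Submodule F (MJ F n m)} (hA : IsSubalg F A) (hN : Nontriv F A) (hS : IsSimple F A) :
    Sup (sm F n m) (A ⊓ evenSub F n m) (A ⊓ oddSub F n m) := by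
  obtain ⟨hgr, hcl⟩ := hA
  have hdec : ∀ x ∈ A, ∃ a ∈ A ⊓ evenSub F n m, ∃ b ∈ A ⊓ oddSub F n m, a + b = x := by
    intro x hx
    rw [hgr] at hx
    exact Submodule.mem_sup.1 hx
  refine ⟨sm2, fun a ha => (mem_ev a).1 ha.2, fun a ha => (mem_od a).1 ha.2, ?_, ?_, ?_, hN, ?_, ?_⟩
  · rintro a ⟨ha, ha'⟩ b ⟨hb, hb'⟩
    refine ⟨?_, ee_ev ha' hb'⟩
    have := hcl a ha b hb
    rw [jev_left b ha'] at this
    exact half_iff.1 this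
  · rintro a ⟨ha, ha'⟩ b ⟨hb, hb'⟩
    refine ⟨?_, eo_od ha' hb'⟩
    have := hcl a ha b hb
    rw [jev_left b ha'] at this
    exact half_iff.1 this
  · rintro a ⟨ha, ha'⟩ b ⟨hb, hb'⟩
    refine ⟨?_, oo_ev ha' hb'⟩
    have := hcl a ha b hb
    rw [jod ha' hb'] at this
    exact half_iff.1 this
  · rintro ⟨z1, z2, z3⟩
    obtain ⟨⟨x, hx, y, hy, hxy⟩, -⟩ := hS
    apply hxy
    obtain ⟨a, ha, b, hb, rfl⟩ := hdec x hx
    obtain ⟨c, hc, d, hd, rfl⟩ := hdec y hy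
    rw [jadd_left, jadd_right, jadd_right, jev_left _ ha.2, jev_left _ ha.2, jev_right _ hc.2, jod hb.2 hd.2,
      z1 a ha c hc, z2 a ha d hd, z3 b hb d hd, add_comm (b * c), z2 c hc b hb]
    simp
  · intro I J hI hJ c1 c2 c3 c4
    have hIv : ∀ x ∈ I, x ∈ evenSub F n m := fun x hx => (hI hx).2
    have hJv : ∀ x ∈ J, x ∈ oddSub F n m := fun x hx => (hJ hx).2
    have := hS.2 (I ⊔ J) (sup_le (fun x hx => (hI hx).1) (fun x hx => (hJ hx).1)) (by
      apply le_antisymm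
      · exact sup_le_sup (le_inf le_sup_left hIv) (le_inf le_sup_right hJv)
      · exact sup_le inf_le_left inf_le_left) (by
      intro x hx y hy
      obtain ⟨a, ha, b, hb, rfl⟩ := hdec x hx
      obtain ⟨c, hc, d, hd, rfl⟩ := Submodule.mem_sup.1 hy
      rw [jadd_left, jadd_right, jadd_right, jev_left _ ha.2, jev_left _ ha.2, jev_right _ (hIv c hc), jod hb.2 (hJv d hd)]
      refine Submodule.add_mem _ (Submodule.add_mem _ ?_ ?_) (Submodule.add_mem _ ?_ ?_)
      · exact Submodule.mem_sup_left (half_iff.2 (c1 a ha c hc))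
      · exact Submodule.mem_sup_right (half_iff.2 (c3 a ha d hd))
      · exact Submodule.mem_sup_right (half_iff.2 (c2 b hb c hc))
      · exact Submodule.mem_sup_left (half_iff.2 (c4 b hb d hd)))
    rcases this with h0 | h0
    · left
      rw [sup_eq_bot_iff] at h0
      exact h0
    · right
      constructor
      · refine le_antisymm hI ?_
        rintro a ⟨ha, ha'⟩
        rw [← h0] at ha
        obtain ⟨i, hi, j, hj, rfl⟩ := Submodule.mem_sup.1 ha
        have : j = 0 := ev_od_zero (by
          have := (evenSub F n m).sub_mem ha' (hIv i hi)
          rwa [add_sub_cancel_left] at this) (hJv j hj)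
        rw [this, add_zero]; exact hi
      · refine le_antisymm hJ ?_
        rintro a ⟨ha, ha'⟩
        rw [← h0] at ha
        obtain ⟨i, hi, j, hj, rfl⟩ := Submodule.mem_sup.1 ha
        have : i = 0 := ev_od_zero (hIv i hi) (by
          have := (oddSub F n m).sub_mem ha' (hJv j hj)
          rwa [add_sub_cancel_right] at this)
        rw [this, zero_add]; exact hj

theorem od_rank : Module.finrank F (ods (sm F n m)) = 2 * (n * m) := by
  rw [← od_eq]
  let e : oddSub F n m ≃ₗ[F] (Matrix (Fin n) (Fin m) F × Matrix (Fin m) (Fin n) F) :=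
    { toFun := fun X => (X.1.toBlocks₁₂, X.1.toBlocks₂₁)
      map_add' := fun X Y => rfl
      map_smul' := fun c X => rfl
      invFun := fun Y => ⟨fromBlocks 0 Y.1 Y.2 0, by
        rintro (i | i) (j | j) h <;> simp [pty] at h ⊢⟩
      left_inv := by
        rintro ⟨X, hX⟩
        apply Subtype.ext
        ext i j
        rcases i with i | i <;> rcases j with j | j
        · exact (hX (Sum.inl i) (Sum.inl j) rfl).symm
        · rfl
        · rfl
        · exact (hX (Sum.inr i) (Sum.inr j) rfl).symm
      right_inv := fun Y => rfl }
  rw [e.finrank_eq, Module.finrank_prod, Module.finrank_matrix, Module.finrank_matrix]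
  simp
  ring

theorem sm_tr : (sm F n m).trace = (n:F) - m := by
  simp [sm, trace, sg, pty, sub_eq_add_neg]

theorem sm_t : (sm F n m)ᵀ = sm F n m := by simp [sm]

theorem full_sm (hn0 : 0 < n) (hm0 : 0 < m) (E O : Submodule F (MJ F n m)) (h : Sup (sm F n m) E O) (h1 : (1 : MJ F n m) ∈ E)
    (hO : ods (sm F n m) ≤ O) : evs (sm F n m) ≤ E := by
  have opp : ∀ i : Fin n ⊕ Fin m, ∃ l : Fin n ⊕ Fin m, pty i ≠ pty l := by
    rintro (i | i)
    · exact ⟨Sum.inr ⟨0, hm0⟩, by simp [pty]⟩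
    · exact ⟨Sum.inl ⟨0, hn0⟩, by simp [pty]⟩
  have so : ∀ i j : Fin n ⊕ Fin m, pty i ≠ pty j → single i j (1:F) ∈ O := by
    intro i j hij
    apply hO
    rw [← od_eq]
    intro a b hab
    rw [single_apply]
    split_ifs with hc
    · exfalso; apply hij; rw [hc.1, hc.2, hab]
    · rfl
  have d1 : ∀ i l : Fin n ⊕ Fin m, pty i ≠ pty l → single i i (1:F) - single l l 1 ∈ E := by
    intro i l hil
    have := h.c3 _ (so i l hil) _ (so l i hil.symm)
    simpa using this
  have d2 : ∀ i j : Fin n ⊕ Fin m, single i i (1:F) - single j j 1 ∈ E := by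
    intro i j
    by_cases hij : pty i = pty j
    · obtain ⟨l, hl⟩ := opp i
      have := E.sub_mem (d1 i l hl) (d1 j l (hij ▸ hl))
      simpa using this
    · exact d1 i j hij
  have d3 : ∀ i : Fin n ⊕ Fin m, single i i (1:F) ∈ E := by
    intro i
    have h2 : ∑ j, (single i i (1:F) - single j j 1) + 1 ∈ E := E.add_mem (E.sum_mem fun j _ => d2 i j) h1
    have h3 : ∑ j, (single i i (1:F) - single j j 1) + 1 = ((Fintype.card (Fin n ⊕ Fin m) : ℕ) : F) • single i i (1:F) := by
      have h4 : ∑ j, single j j (1:F) = (1 : MJ F n m) := by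
        ext a b
        simp only [Matrix.sum_apply, single_apply, Matrix.one_apply]
        by_cases hab : a = b
        · subst hab; simp
        · rw [if_neg hab]
          refine Finset.sum_eq_zero fun j _ => if_neg ?_
          rintro ⟨rfl, rfl⟩; exact hab rfl
      rw [Finset.sum_sub_distrib, h4, Finset.sum_const, Finset.card_univ, sub_add_cancel, Nat.cast_smul_eq_nsmul]
    rw [h3] at h2
    refine (Submodule.smul_mem_iff _ ?_).1 h2
    simp only [Fintype.card_sum, Fintype.card_fin]
    exact_mod_cast (by omega : n + m ≠ 0)
  have d4 : ∀ i j : Fin n ⊕ Fin m, pty i = pty j → single i j (1:F) ∈ E := by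
    intro i j hij
    by_cases hc : i = j
    · subst hc; exact d3 i
    · obtain ⟨l, hl⟩ := opp i
      have := h.c3 _ (so i l hl) _ (so l j (hij ▸ hl.symm))
      rw [single_mul_single_same, single_mul_single_of_ne _ _ _ _ (Ne.symm hc)] at this
      simpa using this
  intro X hX
  rw [← ev_eq] at hX
  rw [Matrix.matrix_eq_sum_single X]
  refine E.sum_mem fun i _ => E.sum_mem fun j _ => ?_
  by_cases hij : pty i = pty j
  · have := E.smul_mem (X i j) (d4 i j hij)
    simpa using this
  · rw [hX i j hij]; simp

theorem mem_sup_ev {A B : Submodule F (MJ F n m)} (hA : IsSubalg F A) (hB : IsSubalg F B) (hAB : A ⊔ B = ⊤) (X : MJ F n m) :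
    ∃ a ∈ (A ⊓ evenSub F n m) ⊔ (B ⊓ evenSub F n m), ∃ b ∈ (A ⊓ oddSub F n m) ⊔ (B ⊓ oddSub F n m), a + b = X := by
  have hX : X ∈ A ⊔ B := by rw [hAB]; trivial
  obtain ⟨x, hx, y, hy, rfl⟩ := Submodule.mem_sup.1 hX
  rw [hA.1] at hx
  rw [hB.1] at hy
  obtain ⟨a, ha, b, hb, rfl⟩ := Submodule.mem_sup.1 hx
  obtain ⟨c, hc, d, hd, rfl⟩ := Submodule.mem_sup.1 hy
  exact ⟨a + c, Submodule.add_mem_sup ha hc, b + d, Submodule.add_mem_sup hb hd, by abel⟩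

theorem proper {A : Submodule F (MJ F n m)} (hA : A ≠ ⊤) :
    ¬ (evs (sm F n m) ≤ A ⊓ evenSub F n m ∧ ods (sm F n m) ≤ A ⊓ oddSub F n m) := by
  rintro ⟨h1, h2⟩
  apply hA
  rw [eq_top_iff, ← (ev_od_compl (sm2 (F := F) (n := n) (m := m))).sup_eq_top]
  exact sup_le (h1.trans inf_le_left) (h2.trans inf_le_left)

theorem main_fin [IsAlgClosed F] (hn0 : 0 < n) (hm0 : 0 < m) (hn : Odd n) (hm : Odd m) (A B : Submodule F (MJ F n m))
    (hA : IsSubalg F A) (hB : IsSubalg F B) (pA : A ≠ ⊤) (pB : B ≠ ⊤) (nA : Nontriv F A) (nB : Nontriv F B)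
    (sA : IsSimple F A) (sB : IsSimple F B) (hAB : A ⊔ B = ⊤) : False := by
  have : Nonempty (Fin n ⊕ Fin m) := ⟨Sum.inl ⟨0, hn0⟩⟩
  have lE : (A ⊓ evenSub F n m) ⊔ (B ⊓ evenSub F n m) ≤ evenSub F n m := sup_le inf_le_right inf_le_right
  have lO : (A ⊓ oddSub F n m) ⊔ (B ⊓ oddSub F n m) ≤ oddSub F n m := sup_le inf_le_right inf_le_right
  refine main_abs (toSup hA nA sA) (toSup hB nB sB) hn hm (by simp) sm_tr od_rank (full_sm hn0 hm0) ?_ ?_ ?_ ?_ (proper pA) (proper pB)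
  · intro X hX
    rw [← mem_ev] at hX
    obtain ⟨a, ha, b, hb, rfl⟩ := mem_sup_ev hA hB hAB X
    have : b = 0 := ev_od_zero (by
      have := (evenSub F n m).sub_mem hX (lE ha)
      rwa [add_sub_cancel_left] at this) (lO hb)
    rw [this, add_zero]; exact ha
  · intro X hX
    rw [← mem_od] at hX
    obtain ⟨a, ha, b, hb, rfl⟩ := mem_sup_ev hA hB hAB X
    have : a = 0 := ev_od_zero (lE ha) (by
      have := (oddSub F n m).sub_mem hX (lO hb)
      rwa [add_sub_cancel_right] at this)
    rw [this, zero_add]; exact hb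
  · rw [finrank_W sm2 sm_t (k := m) (by rw [sm_tr]; simp; ring)]; exact hm
  · rw [finrank_W (by rw [neg_mul_neg, sm2]) (by rw [transpose_neg, sm_t]) (k := n) (by rw [trace_neg, sm_tr]; simp; ring)]; exact hn

end Fin
end SJ

namespace SJ

variable (F : Type*) [Field F]

/-- For `F` algebraically closed of characteristic zero and `n, m` odd
positive integers, the Jordan superalgebra `M_{n,m}(F)^{(+)}` cannot be written as
`A + B` for two proper nontrivial simple subsuperalgebras `A` and `B`. -/
theorem no_simple_decomposition_Mnm_odd_odd
    (F : Type*) [Field F] [IsAlgClosed F] [CharZero F]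
    (n m : ℕ) (hn0 : 0 < n) (hm0 : 0 < m) (hn : Odd n) (hm : Odd m) :
    ¬ ∃ A B : Submodule F (MJ F n m),
        IsSubalg F A ∧ IsSubalg F B ∧
        A ≠ ⊤ ∧ B ≠ ⊤ ∧
        Nontriv F A ∧ Nontriv F B ∧
        IsSimple F A ∧ IsSimple F B ∧
        A ⊔ B = ⊤ := by
  rintro ⟨A, B, hA, hB, pA, pB, nA, nB, sA, sB, hAB⟩
  exact main_fin hn0 hm0 hn hm A B hA hB pA pB nA nB sA sB hAB

end SJ
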